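/- arXiv:1402.0272 — 7 statements merged into one kernel-verified Lean document; each statement's English description precedes it below -/
import Mathlib

section
/- For every integer k ≥ 1, every simple graph with average degree at least 4k contains the complete graph K_k as a minor, or contains a minor with n vertices and minimum degree δ such that δ ≥ 0.6518·n, 2δ − n ≥ 0.4659·k, and k ≤ δ < n ≤ 4k. -/
/-!
A graph that is minor-minimal subject to having `n` vertices and at least `φ n` edges has about
`φ n` edges, so a vertex `v` of degree at most `2 * φ n / n`, and each of its edges lies in at
least `φ n - φ (n - 1)` triangles, as contracting an edge in `t` triangles loses `t + 1` edges.
The graph induced by the neighbourhood of `v` is thus a minor with at most `2 * φ n / n` vertices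
and minimum degree at least `φ n - φ (n - 1)` (`bottom_or_dense`).

This is used twice. With `φ n = 2 * k * n` it gives a minor `J` with at most `4k` vertices and
minimum degree at least `2k`, so with at least `k * |J|` edges. Inside `J` it is applied to a
profile with `φ (4k) ≤ 4k²` (`Profile`), whose increments are at least `k` and at least `0.65185`
times the integer part of the average degree `2 * φ n / n`: an increment of that size is what the
required ratio `δ / n` needs, and `2 * δ - n ≥ 0.4659 * k` then follows from `δ ≥ k`. Increments
at least `k` keep the profile below `k * n`, so `J` qualifies. The profile can be chosen with
`φ k ≥ k * (k - 1) / 2` (`exists_profile`), so a descent that reaches `k` vertices ends in `K_k`.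
-/

open SimpleGraph

/-- `H` is a minor of `G`: there is a minor model of `H` in `G`, i.e. pairwise disjoint
connected (nonempty) branch sets in `G`, one for each vertex of `H`, with an edge of `G`
between the branch sets of any two adjacent vertices of `H`.  Equivalently, a graph
isomorphic to `H` can be obtained from a subgraph of `G` by contracting edges. -/
def SimpleGraph.IsMinorOf {W V : Type*} (H : SimpleGraph W) (G : SimpleGraph V) : Prop :=
  ∃ B : W → Set V,
    (∀ w, (G.induce (B w)).Connected) ∧
    (Pairwise fun w₁ w₂ => Disjoint (B w₁) (B w₂)) ∧
    ∀ ⦃w₁ w₂⦄, H.Adj w₁ w₂ → ∃ v₁ ∈ B w₁, ∃ v₂ ∈ B w₂, G.Adj v₁ v₂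

/-- The average degree `2m/n` of a graph with `n` vertices and `m` edges. -/
noncomputable def SimpleGraph.averageDegree {V : Type*} (G : SimpleGraph V) : ℝ :=
  2 * G.edgeSet.ncard / Nat.card V

/-! ### Minors -/

theorem SimpleGraph.IsMinorOf.trans {W U V : Type*} {H : SimpleGraph W} {K : SimpleGraph U}
    {G : SimpleGraph V} (h₁ : H.IsMinorOf K) (h₂ : K.IsMinorOf G) : H.IsMinorOf G := by
  obtain ⟨A, hAc, hAd, hAe⟩ := h₁
  obtain ⟨B, hBc, hBd, hBe⟩ := h₂
  have sub : ∀ {w u}, u ∈ A w → B u ⊆ ⋃ u ∈ A w, B u := fun hu =>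
    Set.subset_biUnion_of_mem (u := B) hu
  refine ⟨fun w => ⋃ u ∈ A w, B u, fun w => ?_, fun w₁ w₂ hw => ?_, fun w₁ w₂ hw => ?_⟩
  · have hin : ∀ u (hu : u ∈ A w), ∀ v (hv : v ∈ B u) v' (hv' : v' ∈ B u),
        (G.induce (⋃ u ∈ A w, B u)).Reachable ⟨v, sub hu hv⟩ ⟨v', sub hu hv'⟩ := by
      intro u hu v hv v' hv'
      exact ((hBc u).preconnected ⟨v, hv⟩ ⟨v', hv'⟩).map (G.induceHomOfLE (sub hu)).toHom
    have hreach : ∀ a b : A w, (K.induce (A w)).Reachable a b → ∀ v (hv : v ∈ B a) v' (hv' : v' ∈ B b),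
        (G.induce (⋃ u ∈ A w, B u)).Reachable ⟨v, sub a.2 hv⟩ ⟨v', sub b.2 hv'⟩ := by
      rintro a b ⟨p⟩
      induction p with
      | nil => exact fun v hv v' hv' => hin _ (Subtype.prop _) v hv v' hv'
      | @cons a c b hac p ih =>
        intro v hv v' hv'
        obtain ⟨x, hx, y, hy, hxy⟩ := hBe (show K.Adj a c from hac)
        refine (hin a a.2 v hv x hx).trans (Reachable.trans ?_ (ih y hy v' hv'))
        exact Adj.reachable (show G.Adj x y from hxy)
    rw [connected_iff]
    constructor
    · rintro ⟨v, hv⟩ ⟨v', hv'⟩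
      obtain ⟨a, ha, hva⟩ := Set.mem_iUnion₂.1 hv
      obtain ⟨b, hb, hvb⟩ := Set.mem_iUnion₂.1 hv'
      exact hreach ⟨a, ha⟩ ⟨b, hb⟩ ((hAc w).preconnected _ _) v hva v' hvb
    · obtain ⟨u, hu⟩ := (hAc w).nonempty
      obtain ⟨v, hv⟩ := (hBc u).nonempty
      exact ⟨v, sub hu hv⟩
  · refine Set.disjoint_left.2 fun v hv hv' => ?_
    obtain ⟨a, ha, hva⟩ := Set.mem_iUnion₂.1 hv
    obtain ⟨b, hb, hvb⟩ := Set.mem_iUnion₂.1 hv'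
    have hab : a ≠ b := fun h => Set.disjoint_left.1 (hAd hw) ha (h ▸ hb)
    exact Set.disjoint_left.1 (hBd hab) hva hvb
  · obtain ⟨a, ha, b, hb, hab⟩ := hAe hw
    obtain ⟨x, hx, y, hy, hxy⟩ := hBe hab
    exact ⟨x, sub ha hx, y, sub hb hy, hxy⟩

theorem SimpleGraph.IsMinorOf.of_injective {W V : Type*} {H : SimpleGraph W} {G : SimpleGraph V} (f : H →g G)
    (hf : Function.Injective f) : H.IsMinorOf G := by
  refine ⟨fun w => {f w}, fun w => ?_, fun w₁ w₂ hw => ?_, fun w₁ w₂ hw => ?_⟩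
  · rw [connected_iff]
    exact ⟨fun a b => by rw [Subsingleton.elim a b], ⟨⟨f w, rfl⟩⟩⟩
  · simpa using fun h => hw (hf h)
  · exact ⟨_, rfl, _, rfl, f.map_adj hw⟩

theorem SimpleGraph.IsMinorOf.of_le {V : Type*} {H G : SimpleGraph V} (h : H ≤ G) : H.IsMinorOf G :=
  .of_injective (Hom.ofLE h) fun _ _ h => h

theorem SimpleGraph.IsMinorOf.induce {V : Type*} (G : SimpleGraph V) (s : Set V) : (G.induce s).IsMinorOf G :=
  .of_injective (Embedding.induce s).toHom Subtype.val_injective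

/-! ### Edge counts -/

theorem ncard_edgeSet_induce_compl {V : Type*} [Fintype V] (G : SimpleGraph V) (y : V) :
    (G.induce {y}ᶜ).edgeSet.ncard = G.edgeSet.ncard - (G.neighborSet y).ncard := by
  classical
  have h := G.card_edgeFinset_induce_compl_singleton y
  rw [card_edgeFinset_deleteIncidenceSet] at h
  rw [Set.ncard_eq_toFinset_card', Set.ncard_eq_toFinset_card', Set.ncard_eq_toFinset_card']
  exact h

theorem ncard_neighborSet_le {V : Type*} [Fintype V] (G : SimpleGraph V) (y : V) :
    (G.neighborSet y).ncard ≤ G.edgeSet.ncard := by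
  classical
  rw [Set.ncard_eq_toFinset_card', Set.ncard_eq_toFinset_card']
  have := G.degree_le_card_edgeFinset y
  exact this

/-- The graph obtained from `G` by contracting the edge `xy`, on the vertex set `V \ {y}`: the
vertex `x` keeps its neighbours and receives those of `y`. -/
def contractEdge {V : Type*} (G : SimpleGraph V) (x y : V) : SimpleGraph ({y}ᶜ : Set V) :=
  G.induce {y}ᶜ ⊔ SimpleGraph.fromRel fun a b => a.1 = x ∧ G.Adj y b

theorem contractEdge_isMinorOf {V : Type*} (G : SimpleGraph V) {x y : V} (h : G.Adj x y) :
    (contractEdge G x y).IsMinorOf G := by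
  classical
  have hm : ∀ u : ({y}ᶜ : Set V), u.1 ∈ (if u.1 = x then {x, y} else {u.1} : Set V) := by
    intro u; split_ifs with hu <;> simp [hu]
  refine ⟨fun u => if u.1 = x then {x, y} else {u.1}, fun u => ?_, fun u v huv => ?_,
    fun u v huv => ?_⟩
  · by_cases hu : u.1 = x
    · dsimp only
      rw [if_pos hu]
      exact induce_pair_connected_of_adj h
    · dsimp only
      rw [if_neg hu, connected_iff]
      exact ⟨fun a b => by rw [Subsingleton.elim a b], ⟨⟨u.1, rfl⟩⟩⟩
  · have hu := u.2
    have hv := v.2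
    have huv' : u.1 ≠ v.1 := fun h => huv (Subtype.ext h)
    refine Set.disjoint_left.2 fun z hz hz' => ?_
    dsimp only at hz hz'
    simp only [Set.mem_compl_iff, Set.mem_singleton_iff] at hu hv
    split_ifs at hz hz' <;> simp at hz hz' <;> grind
  · rcases huv with huv | ⟨-, ⟨hu, huv⟩ | ⟨hv, huv⟩⟩
    · exact ⟨u, hm u, v, hm v, huv⟩
    · exact ⟨y, by simp [hu], v, hm v, huv⟩
    · exact ⟨u, hm u, y, by simp [hv], huv.symm⟩

/-- Contracting `xy` loses the edge itself and one edge for each triangle on `xy`. -/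
theorem ncard_edgeSet_contractEdge {V : Type*} [Fintype V] (G : SimpleGraph V) {x y : V}
    (h : G.Adj x y) :
    G.edgeSet.ncard ≤ (contractEdge G x y).edgeSet.ncard + (G.commonNeighbors x y).ncard + 1 := by
  have hxy : x ≠ y := h.ne
  -- Removing `y` costs `deg y` edges; the edges from `x` to `T` are regained.
  let T : Set ({y}ᶜ : Set V) := {z | G.Adj y z ∧ ¬ G.Adj x z ∧ z.1 ≠ x}
  let x' : ({y}ᶜ : Set V) := ⟨x, hxy⟩
  have hinj : Set.InjOn (fun z => s(x', z)) T := fun a _ b _ hab => Sym2.congr_right.1 hab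
  have hdisj : Disjoint (G.induce {y}ᶜ).edgeSet ((fun z => s(x', z)) '' T) := by
    rw [Set.disjoint_left]
    rintro _ he ⟨z, hz, rfl⟩
    exact hz.2.1 he
  have hsub : (G.induce {y}ᶜ).edgeSet ∪ ((fun z => s(x', z)) '' T) ⊆
      (contractEdge G x y).edgeSet := by
    refine Set.union_subset (edgeSet_mono le_sup_left) ?_
    rintro _ ⟨z, hz, rfl⟩
    refine Or.inr ⟨fun e => hz.2.2 (congrArg Subtype.val e).symm, Or.inl ⟨rfl, hz.1⟩⟩
  have h1 := Set.ncard_le_ncard hsub (Set.toFinite _)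
  rw [Set.ncard_union_eq hdisj (Set.toFinite _) (Set.toFinite _), hinj.ncard_image,
    ncard_edgeSet_induce_compl] at h1
  have h2 := ncard_neighborSet_le G y
  have hN : G.neighborSet y ⊆ (Subtype.val '' T) ∪ G.commonNeighbors x y ∪ {x} := by
    intro z hz
    have hzy : z ≠ y := (G.ne_of_adj hz).symm
    by_cases hzx : z = x
    · exact Or.inr hzx
    · by_cases hxz : G.Adj x z
      · exact Or.inl (Or.inr ⟨hxz, hz⟩)
      · exact Or.inl (Or.inl ⟨⟨z, hzy⟩, ⟨hz, hxz, hzx⟩, rfl⟩)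
  have h3 := Set.ncard_le_ncard hN (Set.toFinite _)
  have h4 := Set.ncard_union_le (Subtype.val '' T ∪ G.commonNeighbors x y) {x}
  have h5 := Set.ncard_union_le (Subtype.val '' T) (G.commonNeighbors x y)
  rw [Set.ncard_image_of_injective _ Subtype.val_injective] at h5
  rw [Set.ncard_singleton] at h4
  omega

theorem exists_degree_le_average {V : Type*} [Fintype V] [Nonempty V] (G : SimpleGraph V) :
    ∃ v, (G.neighborSet v).ncard * Fintype.card V ≤ 2 * G.edgeSet.ncard := by
  classical
  by_contra! hc
  have hs := G.sum_degrees_eq_twice_card_edges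
  have hE : G.edgeSet.ncard = G.edgeFinset.card := Set.ncard_eq_toFinset_card' _
  have hdeg : ∀ v, (G.neighborSet v).ncard = G.degree v := fun v => Set.ncard_eq_toFinset_card' _
  have : ∑ _v : V, 2 * G.edgeSet.ncard < ∑ v : V, G.degree v * Fintype.card V :=
    Finset.sum_lt_sum_of_nonempty Finset.univ_nonempty fun v _ => by rw [← hdeg]; exact hc v
  rw [← Finset.sum_mul (s := Finset.univ) (f := fun v => G.degree v), hs, Finset.sum_const, Finset.card_univ, hE, smul_eq_mul, mul_comm] at this
  exact lt_irrefl _ this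

theorem two_mul_edges_ge {V : Type*} [Fintype V] (G : SimpleGraph V) (d : ℕ)
    (h : ∀ v, d ≤ (G.neighborSet v).ncard) : d * Fintype.card V ≤ 2 * G.edgeSet.ncard := by
  classical
  have hs := G.sum_degrees_eq_twice_card_edges
  have hE : G.edgeSet.ncard = G.edgeFinset.card := Set.ncard_eq_toFinset_card' _
  have hdeg : ∀ v, (G.neighborSet v).ncard = G.degree v := fun v => Set.ncard_eq_toFinset_card' _
  rw [hE, ← hs]
  calc d * Fintype.card V = ∑ _v : V, d := by simp [mul_comm]
    _ ≤ _ := Finset.sum_le_sum fun v _ => by rw [← hdeg]; exact h v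

theorem eq_top_of_choose_two_le {V : Type*} [Fintype V] (G : SimpleGraph V)
    (h : (Fintype.card V).choose 2 ≤ G.edgeSet.ncard) : G = ⊤ := by
  classical
  rw [Set.ncard_eq_toFinset_card'] at h
  rw [← edgeFinset_inj]
  refine Finset.eq_of_subset_of_card_le (edgeFinset_subset_edgeFinset.2 le_top) ?_
  rw [card_edgeFinset_top_eq_card_choose_two]
  exact h

/-! ### The extremal step -/

/-- `G` has a minor with exactly `m` vertices and at least `φ m` edges. -/
def HasBottomMinor (φ : ℕ → ℕ) (m : ℕ) {V : Type} (G : SimpleGraph V) : Prop :=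
  ∃ (W : Type) (_ : Fintype W) (H : SimpleGraph W),
    H.IsMinorOf G ∧ Fintype.card W = m ∧ φ m ≤ H.edgeSet.ncard

/-- For some `n` with `m < n ≤ N`, `G` has a nonempty minor with fewer than `n` and at most
`2 * φ n / n` vertices, in which every degree is at least the increment `φ n - φ (n - 1)`. -/
def HasDenseMinor (φ : ℕ → ℕ) (m N : ℕ) {V : Type} (G : SimpleGraph V) : Prop :=
  ∃ n, m < n ∧ n ≤ N ∧ ∃ (W : Type) (_ : Fintype W) (H : SimpleGraph W), H.IsMinorOf G ∧
    Nonempty W ∧ Fintype.card W * n ≤ 2 * φ n ∧ Fintype.card W < n ∧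
    ∀ w, φ n - φ (n - 1) ≤ (H.neighborSet w).ncard

/-- The extremal step. If `e(G) ≥ φ(|V|)`, consider a minor with `n ≥ m` vertices and at least
`φ n` edges that has no smaller such minor. If `n > m`, then it has exactly `φ n` edges, no
isolated vertex, and each edge lies in at least `φ n - φ (n - 1)` triangles, since otherwise an
edge or a vertex can be deleted or an edge contracted. Hence the neighbourhood of a vertex whose
degree is at most the average is a dense minor. The induction is on the number of vertices, then
on the number of edges. -/
theorem bottom_or_dense (φ : ℕ → ℕ) (m N : ℕ)
    (hφ : ∀ n, m < n → n ≤ N → φ (n - 1) ≤ φ n) (s : ℕ ×ₗ ℕ) :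
    ∀ {V : Type} [Fintype V] (G : SimpleGraph V),
      toLex (Fintype.card V, G.edgeSet.ncard) = s →
      m ≤ Fintype.card V → Fintype.card V ≤ N → φ (Fintype.card V) ≤ G.edgeSet.ncard →
      HasBottomMinor φ m G ∨ HasDenseMinor φ m N G := by
  induction s using WellFoundedLT.induction with
  | _ s ih =>
  intro V _ G hs hmV hVN he
  classical
  have step : ∀ {V' : Type} [Fintype V'] (G' : SimpleGraph V'), G'.IsMinorOf G →
      (Fintype.card V' < Fintype.card V ∨
        Fintype.card V' = Fintype.card V ∧ G'.edgeSet.ncard < G.edgeSet.ncard) →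
      m ≤ Fintype.card V' → Fintype.card V' ≤ N →
      φ (Fintype.card V') ≤ G'.edgeSet.ncard →
      HasBottomMinor φ m G ∨ HasDenseMinor φ m N G := fun G' hG' h1 h2 h3 h4 =>
    (ih _ (hs ▸ Prod.Lex.toLex_lt_toLex.2 h1) G' rfl h2 h3 h4).imp
      (fun ⟨W, i, H, hH, h⟩ => ⟨W, i, H, hH.trans hG', h⟩)
      (fun ⟨n, h1, h2, W, i, H, hH, h⟩ => ⟨n, h1, h2, W, i, H, hH.trans hG', h⟩)
  rcases hmV.eq_or_lt with hmV' | hmV'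
  · exact Or.inl ⟨V, inferInstance, G, .of_le le_rfl, hmV'.symm, hmV' ▸ he⟩
  have hmono := hφ _ hmV' hVN
  have hcard : ∀ y : V, Fintype.card ({y}ᶜ : Set V) = Fintype.card V - 1 := by
    intro y
    rw [Fintype.card_compl_set]
    simp
  rcases he.eq_or_lt with he' | he'
  swap
  -- a surplus edge can be deleted
  · obtain ⟨e, hee⟩ : G.edgeSet.Nonempty := by
      rw [← Set.ncard_pos (Set.toFinite _)]
      omega
    have hc : (G.deleteEdges {e}).edgeSet.ncard + 1 = G.edgeSet.ncard := by
      rw [edgeSet_deleteEdges]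
      exact Set.ncard_sdiff_singleton_add_one hee (Set.toFinite _)
    exact step (G.deleteEdges {e}) (.of_le (deleteEdges_le _)) (by omega) hmV hVN (by omega)
  -- an isolated vertex can be deleted
  by_cases hiso : ∃ y, (G.neighborSet y).ncard = 0
  · obtain ⟨y, hy⟩ := hiso
    have hc := ncard_edgeSet_induce_compl G y
    have hy' := hcard y
    refine step (G.induce {y}ᶜ) (.induce _ _) (by omega) (by omega) (by omega) ?_
    rw [hy']
    omega
  push Not at hiso
  -- an edge in too few triangles can be contracted
  by_cases hctr : ∃ x y, G.Adj x y ∧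
      (G.commonNeighbors x y).ncard < φ (Fintype.card V) - φ (Fintype.card V - 1)
  · obtain ⟨x, y, hxy, hlt⟩ := hctr
    have hc := ncard_edgeSet_contractEdge G hxy
    have hy' := hcard y
    refine step (contractEdge G x y) (contractEdge_isMinorOf G hxy) (by omega) (by omega)
      (by omega) ?_
    rw [hy']
    omega
  push Not at hctr
  have : Nonempty V := Fintype.card_pos_iff.1 (by omega)
  -- `G` itself is minimal: pass to the neighbourhood of a vertex of at most average degree
  obtain ⟨v, hv⟩ := exists_degree_le_average G
  have hcW : Fintype.card (G.neighborSet v) = (G.neighborSet v).ncard := by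
    rw [← Nat.card_coe_set_eq, Nat.card_eq_fintype_card]
  refine Or.inr ⟨Fintype.card V, hmV', hVN, G.neighborSet v, inferInstance,
    G.induce (G.neighborSet v), .induce _ _, ?_, ?_, ?_, ?_⟩
  · rw [← Fintype.card_pos_iff, hcW]
    exact Nat.pos_of_ne_zero (hiso v)
  · rw [hcW, he']
    exact hv
  · exact Fintype.card_subtype_lt (x := v) (by simp)
  · rintro ⟨w, hw⟩
    refine (hctr v w hw).trans_eq ?_
    rw [← Set.ncard_image_of_injective _ Subtype.val_injective]
    congr 1
    ext z
    simp [mem_commonNeighbors, and_comm]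


/-! ### Edge-count profiles -/

/-- An edge-count profile for the second extremal step, run between `k` and `4 * k` vertices.
It starts at most at `4k²` for `n = 4k`, still forces a complete graph for `n = k`, and at each
`n` its increment is at least `k` and at least `0.65185` times the floor of the average degree
`2 * φ n / n` of a graph with `n` vertices and `φ n` edges. -/
def Profile (k : ℕ) (φ : ℕ → ℕ) : Prop :=
  φ (4 * k) ≤ 4 * k * k ∧ k * (k - 1) / 2 ≤ φ k ∧
  ∀ n, k < n → n ≤ 4 * k → k ≤ φ n - φ (n - 1) ∧
    13037 * (2 * φ n / n) ≤ 20000 * (φ n - φ (n - 1))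

/-- The greedy step from `n` to `n - 1`: subtract the larger of `k` and the least integer that is
at least `0.65185 * (2 * p / n)`, where the maximum is written with truncated subtraction. -/
def pstep (k n p : ℕ) : ℕ :=
  p - (k + ((13037 * (2 * p / n) + 19999) / 20000 - k))

/-- The greedy profile: `prof k j` is its value at `n = 4 * k - j`. -/
def prof (k : ℕ) : ℕ → ℕ
  | 0 => 4 * k * k
  | j + 1 => pstep k (4 * k - j) (prof k j)

set_option maxRecDepth 10000 in
theorem prof_small : ∀ k < 61, k * (k - 1) / 2 ≤ prof k (3 * k) := by decide +kernel

theorem prof_anti (k : ℕ) : Antitone (prof k) :=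
  antitone_nat_of_succ_le fun _ => Nat.sub_le _ _

/-- For small `k` the greedy profile works. Its final value is positive, so the subtractions that
define it never truncate. -/
theorem profile_small (k : ℕ) (h2 : 2 ≤ k) (hk : k < 61) : ∃ φ, Profile k φ := by
  have hend := prof_small k hk
  have hpos : 1 ≤ k * (k - 1) / 2 := by
    rw [Nat.le_div_iff_mul_le (by norm_num)]
    calc 1 * 2 ≤ k * 1 := by omega
      _ ≤ _ := Nat.mul_le_mul_left _ (by omega)
  refine ⟨fun n => prof k (4 * k - n), by simp [prof], ?_, ?_⟩
  · simpa [show 4 * k - k = 3 * k by omega] using hend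
  · intro n h1 h4
    obtain ⟨j, rfl⟩ : ∃ j, n = 4 * k - j := ⟨4 * k - n, by omega⟩
    by_cases hj : j ≤ 4 * k
    swap
    · omega
    have e1 : 4 * k - (4 * k - j) = j := by omega
    have e2 : 4 * k - (4 * k - j - 1) = j + 1 := by omega
    simp only [e1, e2]
    have hp : 1 ≤ prof k (j + 1) := hpos.trans (hend.trans (prof_anti k (by omega)))
    rw [show prof k (j + 1) = pstep k (4 * k - j) (prof k j) from rfl] at hp ⊢
    unfold pstep at hp ⊢
    generalize 2 * prof k j / (4 * k - j) = q at *
    omega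

/-- For large `k` a piecewise linear profile works: slopes `a`, `b` and `k` on the three intervals
between `4k`, `3k`, `2k` and `k`, where `a` is `1.3037 * k` rounded up and `b` is
`1.3037 * (4 * k - a) / 3` rounded up. With real slopes the value at `n = k` would exceed
`0.524 * k ^ 2`, which leaves room over `k * (k - 1) / 2` for the rounding once `k ≥ 61`. -/
theorem profile_large (k : ℕ) (hk : 61 ≤ k) : ∃ φ, Profile k φ := by
  obtain ⟨a, ha1, ha2⟩ : ∃ a, 26074 * k ≤ 20000 * a ∧ 20000 * a ≤ 26074 * k + 19999 :=
    ⟨(26074 * k + 19999) / 20000, by omega, by omega⟩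
  obtain ⟨b, hb1, hb2⟩ : ∃ b, 26074 * (4 * k - a) ≤ 60000 * b ∧
      60000 * b ≤ 26074 * (4 * k - a) + 59999 :=
    ⟨(26074 * (4 * k - a) + 59999) / 60000, by omega, by omega⟩
  -- the slopes are `k`, `k + x`, `k + x + y`, and the value at `n = k` is `k * c`
  obtain ⟨x, rfl⟩ : ∃ x, b = k + x := ⟨b - k, by omega⟩
  obtain ⟨y, rfl⟩ : ∃ y, a = k + x + y := ⟨a - (k + x), by omega⟩
  obtain ⟨c, hc⟩ : ∃ c, c + (k + x) + (k + x + y) = 3 * k :=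
    ⟨3 * k - (k + x) - (k + x + y), by omega⟩
  refine ⟨fun n => k * c + k * (n - k) + x * (n - 2 * k) + y * (n - 3 * k), ?_, ?_, ?_⟩
  · simp only
    rw [show 4 * k - k = 3 * k by omega, show 4 * k - 2 * k = 2 * k by omega,
      show 4 * k - 3 * k = k by omega]
    nlinarith
  · simp only
    refine Nat.div_le_of_le_mul ?_
    have : k - 1 ≤ 2 * c := by omega
    nlinarith [Nat.zero_le (k * (k - k)), Nat.zero_le (x * (k - 2 * k)), Nat.zero_le (y * (k - 3 * k))]
  · intro n h1 h4
    have key : ∀ P D : ℕ, 13037 * (2 * P) ≤ 20000 * D * n → 13037 * (2 * P / n) ≤ 20000 * D := by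
      intro P D h
      have hn : 0 < n := by omega
      have := Nat.div_mul_le_self (2 * P) n
      have h' : 13037 * (2 * P / n) * n ≤ 20000 * D * n := by nlinarith
      exact Nat.le_of_mul_le_mul_right h' hn
    simp only
    rcases le_or_gt n (2 * k) with h | h
    · obtain ⟨i, rfl⟩ : ∃ i, n = k + i + 1 := ⟨n - k - 1, by omega⟩
      obtain ⟨r, hr⟩ : ∃ r, i + 1 + r = k := ⟨k - i - 1, by omega⟩
      rw [show k + i + 1 - k = i + 1 by omega, show k + i + 1 - 1 - k = i by omega,
        show k + i + 1 - 2 * k = 0 by omega, show k + i + 1 - 3 * k = 0 by omega,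
        show k + i + 1 - 1 - 2 * k = 0 by omega, show k + i + 1 - 1 - 3 * k = 0 by omega]
      have e : k * c + k * (i + 1) + x * 0 + y * 0 - (k * c + k * i + x * 0 + y * 0) = k := by
        have : k * (i + 1) = k * i + k := by ring
        omega
      rw [e]
      refine ⟨le_rfl, key _ _ ?_⟩
      have : 13037 * (c + k) ≤ 20000 * k := by omega
      have : 26074 * c ≤ 20000 * k := by omega
      nlinarith
    rcases le_or_gt n (3 * k) with h' | h'
    · obtain ⟨i, rfl⟩ : ∃ i, n = 2 * k + i + 1 := ⟨n - 2 * k - 1, by omega⟩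
      obtain ⟨r, hr⟩ : ∃ r, i + 1 + r = k := ⟨k - i - 1, by omega⟩
      rw [show 2 * k + i + 1 - k = k + i + 1 by omega, show 2 * k + i + 1 - 1 - k = k + i by omega,
        show 2 * k + i + 1 - 2 * k = i + 1 by omega, show 2 * k + i + 1 - 3 * k = 0 by omega,
        show 2 * k + i + 1 - 1 - 2 * k = i by omega, show 2 * k + i + 1 - 1 - 3 * k = 0 by omega]
      have e : k * c + k * (k + i + 1) + x * (i + 1) + y * 0 - (k * c + k * (k + i) + x * i + y * 0) = k + x := by
        have : k * (k + i + 1) = k * (k + i) + k := by ring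
        have : x * (i + 1) = x * i + x := by ring
        omega
      rw [e]
      refine ⟨by omega, key _ _ ?_⟩
      have h3 : 13037 * (2 * (c + 2 * k + x)) ≤ 60000 * (k + x) := by omega
      have h2 : 13037 * (c + k) ≤ 20000 * (k + x) := by omega
      nlinarith
    · obtain ⟨i, rfl⟩ : ∃ i, n = 3 * k + i + 1 := ⟨n - 3 * k - 1, by omega⟩
      obtain ⟨r, hr⟩ : ∃ r, i + 1 + r = k := ⟨k - i - 1, by omega⟩
      rw [show 3 * k + i + 1 - k = 2 * k + i + 1 by omega, show 3 * k + i + 1 - 1 - k = 2 * k + i by omega,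
        show 3 * k + i + 1 - 2 * k = k + i + 1 by omega, show 3 * k + i + 1 - 3 * k = i + 1 by omega,
        show 3 * k + i + 1 - 1 - 2 * k = k + i by omega, show 3 * k + i + 1 - 1 - 3 * k = i by omega]
      have e : k * c + k * (2 * k + i + 1) + x * (k + i + 1) + y * (i + 1) - (k * c + k * (2 * k + i) + x * (k + i) + y * i) = k + x + y := by
        have : k * (2 * k + i + 1) = k * (2 * k + i) + k := by ring
        have : x * (k + i + 1) = x * (k + i) + x := by ring
        have : y * (i + 1) = y * i + y := by ring
        omega
      rw [e]
      refine ⟨by omega, key _ _ ?_⟩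
      have h3 : 13037 * (2 * (c + 2 * k + x)) ≤ 60000 * (k + x + y) := by omega
      have h4 : 13037 * (2 * (c + 3 * k + 2 * x + y)) ≤ 80000 * (k + x + y) := by omega
      nlinarith
theorem ncard_neighborSet_lt {V : Type*} [Fintype V] (G : SimpleGraph V) (v : V) :
    (G.neighborSet v).ncard < Fintype.card V := by
  classical
  rw [Set.ncard_eq_toFinset_card']
  exact G.degree_lt_card_verts v

theorem exists_profile (k : ℕ) (h2 : 2 ≤ k) : ∃ φ, Profile k φ :=
  (lt_or_ge k 61).elim (profile_small k h2) (profile_large k)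

/-- For every integer `k ≥ 1`, every graph with average degree at least `4k` contains
`K_k` as a minor, or contains a minor with `n` vertices and minimum degree `δ`, where
`δ ≥ 0.6518n`, `2δ − n ≥ 0.4659k` and `k ≤ δ < n ≤ 4k`. -/
theorem ratio_minor (k : ℕ) (hk : 1 ≤ k) {V : Type} [Fintype V] [Nonempty V]
    (G : SimpleGraph V) (havg : (4 * k : ℝ) ≤ G.averageDegree) :
    (⊤ : SimpleGraph (Fin k)).IsMinorOf G ∨
    ∃ (W : Type) (_ : Fintype W) (H : SimpleGraph W) (n δ : ℕ),
      H.IsMinorOf G ∧ Nat.card W = n ∧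
      IsLeast {d : ℕ | ∃ w : W, (H.neighborSet w).ncard = d} δ ∧
      0.6518 * (n : ℝ) ≤ (δ : ℝ) ∧
      0.4659 * (k : ℝ) ≤ 2 * (δ : ℝ) - (n : ℝ) ∧
      k ≤ δ ∧ δ < n ∧ n ≤ 4 * k := by
  classical
  rcases hk.eq_or_lt with rfl | hk2
  · left
    obtain ⟨v⟩ := ‹Nonempty V›
    exact .of_injective ⟨fun _ => v, fun {a b} h => absurd (Subsingleton.elim a b) h.ne⟩
      (Function.injective_of_subsingleton _)
  have hV : 0 < Fintype.card V := Fintype.card_pos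
  have hE : 2 * k * Fintype.card V ≤ G.edgeSet.ncard := by
    have hV' : (0 : ℝ) < Fintype.card V := by exact_mod_cast hV
    rw [averageDegree, Nat.card_eq_fintype_card, le_div_iff₀ hV'] at havg
    have : 4 * k * Fintype.card V ≤ 2 * G.edgeSet.ncard := by exact_mod_cast havg
    linarith
  -- first extremal step: a minor with at most `4k` vertices and minimum degree at least `2k`
  obtain ⟨U, _, J, hJG, hJ0, hJcard, hJdeg⟩ : ∃ (U : Type) (_ : Fintype U) (J : SimpleGraph U),
      J.IsMinorOf G ∧ Nonempty U ∧ Fintype.card U ≤ 4 * k ∧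
      ∀ u, 2 * k ≤ (J.neighborSet u).ncard := by
    rcases bottom_or_dense (fun n => 2 * k * n) 1 (Fintype.card V)
      (fun n _ _ => Nat.mul_le_mul_left _ (Nat.sub_le _ _)) _ G rfl hV le_rfl hE with
      ⟨W, _, H, -, hW, hH⟩ | ⟨n, hn, -, W, i, H, hHG, hW, hc, -, hd⟩
    · have h1 := H.card_edgeFinset_le_card_choose_two
      have h2 : H.edgeSet.ncard = H.edgeFinset.card := Set.ncard_eq_toFinset_card' _
      rw [hW, Nat.choose_eq_zero_of_lt (by norm_num : 1 < 2)] at h1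
      simp only at hH
      omega
    · refine ⟨W, i, H, hHG, hW, ?_, fun u => ?_⟩
      · have hc' : Fintype.card W * n ≤ 4 * k * n := by linarith
        exact Nat.le_of_mul_le_mul_right hc' (by omega)
      · refine le_trans ?_ (hd u)
        obtain ⟨n, rfl⟩ : ∃ j, n = j + 1 := ⟨n - 1, by omega⟩
        simp [mul_add]
  have hJlow : 2 * k < Fintype.card U := by
    obtain ⟨u⟩ := hJ0
    exact (hJdeg u).trans_lt (ncard_neighborSet_lt J u)
  have hJE := two_mul_edges_ge J _ hJdeg
  obtain ⟨φ, hφ1, hφ2, hφ3⟩ := exists_profile k hk2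
  -- the increments are at least `k`, so the profile lies below the line `n ↦ k * n`
  have hφlin : ∀ j ≤ 3 * k, φ (4 * k - j) + k * j ≤ 4 * k * k := by
    intro j
    induction j with
    | zero => simpa using hφ1
    | succ j ih =>
      intro hj
      have h1 := ih (by omega)
      have h2 := (hφ3 (4 * k - j) (by omega) (by omega)).1
      rw [show 4 * k - j - 1 = 4 * k - (j + 1) by omega] at h2
      rw [mul_add]
      omega
  have hJφ : φ (Fintype.card U) ≤ J.edgeSet.ncard := by
    obtain ⟨j, hj⟩ : ∃ j, Fintype.card U + j = 4 * k := ⟨4 * k - Fintype.card U, by omega⟩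
    have h1 := hφlin j (by omega)
    rw [show 4 * k - j = Fintype.card U by omega] at h1
    nlinarith
  -- second extremal step, inside `J`
  rcases bottom_or_dense φ k (4 * k) (fun n h1 h2 => by have := (hφ3 n h1 h2).1; omega) _ J rfl
    (by omega) hJcard hJφ with ⟨W, _, H, hHJ, hW, hH⟩ | ⟨n, hn, hnN, W, i, H, hHJ, hW, hc, hlt, hd⟩
  · left
    have hT : H = ⊤ := eq_top_of_choose_two_le H (by
      rw [hW, Nat.choose_two_right]
      exact hφ2.trans hH)
    subst hT
    let e := (Fintype.equivFinOfCardEq hW).symm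
    have hK : (⊤ : SimpleGraph (Fin k)).IsMinorOf (⊤ : SimpleGraph W) :=
      .of_injective ⟨e, fun {a b} h => fun hab => h.ne (e.injective hab)⟩ e.injective
    exact (hK.trans hHJ).trans hJG
  · right
    obtain ⟨w, hw⟩ := Finite.exists_min fun w => (H.neighborSet w).ncard
    have hD := hd w
    obtain ⟨h1, h2⟩ := hφ3 n hn hnN
    have hq : Fintype.card W ≤ 2 * φ n / n := (Nat.le_div_iff_mul_le (by omega)).2 hc
    have hδ := ncard_neighborSet_lt H w
    refine ⟨W, i, H, Fintype.card W, (H.neighborSet w).ncard, hHJ.trans hJG,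
      Nat.card_eq_fintype_card, ⟨⟨w, rfl⟩, ?_⟩, ?_, ?_, by omega, hδ, by omega⟩
    · rintro _ ⟨w', rfl⟩
      exact hw w'
    all_goals
      generalize (H.neighborSet w).ncard = δ at *
      -- `2 * δ - n ≥ 0.4659 * δ` because `2 - 1 / 0.65185 > 0.4659`
      have hr : 13037 * Fintype.card W ≤ 20000 * δ := by omega
      have hr' : (13037 * Fintype.card W : ℝ) ≤ 20000 * δ := by exact_mod_cast hr
      have hkδ : (k : ℝ) ≤ δ := by exact_mod_cast h1.trans hD
      have : (0 : ℝ) ≤ Fintype.card W := Nat.cast_nonneg _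
      linarith
end

section
/- For every integer k ≥ 1, every simple graph with average degree at least 4k contains the complete graph K_k as a minor, or contains a minor with n vertices and minimum degree δ such that δ ≥ 0.6273·n, 2δ − n ≥ 0.5773·k, and k ≤ δ < n ≤ 4k. -/
/-!
The proof takes minimal minors twice, in the manner of Mader.

If a minor of `G` with `n` vertices and `e` edges is minimal subject to `e ≥ f n`, then deleting an
edge shows that `e < f n + 1`, so some vertex has degree `d ≤ 2 e / n`, and contracting an edge
shows that every edge lies in more than `f n - f (n - 1) - 1` triangles (`exists_minimal_minor`,
`le_ncard_edgeSet_contract`). The closed neighbourhood of a vertex of degree `d` then has `d + 1`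
vertices and minimum degree exceeding `f n - f (n - 1)` (`minDegree_closedNbhd`).

With the linear function `f n = 2 k n - 2 k + 1` every edge lies in `2k` triangles and `0 < d < 4k`
(`exists_triangle_minor`), so the closed neighbourhood has `n = d + 1 ≤ 4k` vertices and at least
`(n - 1) (k + 1)` edges (`le_ncard_edgeSet_closedNbhd`). For `k ≤ 3` a triangle already contains
`K_k`. For `k ≥ 4` the argument is repeated from this closed neighbourhood, with the quadratic
function `f n = P k n / 36`. It satisfies `f k > k.choose 2`, so the process stops with more than
`k` vertices. The ratio and gap requirements on the resulting closed neighbourhood become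
inequalities between quadratic forms in `n` and `k`, proved by completing the square (`arith_gap`,
`arith_ratio`).
-/

open SimpleGraph

/-! ### The quadratic edge bound -/

/-- `P k n / 36` is the number of edges demanded of an `n`-vertex minor in the second contraction
process. Up to lower order terms it is `n² / 18 + (8 / 9) k n - (4 / 9) k²`, the quadratic with
leading coefficient `1 / 18` that equals `n k` at `n = 4k` (where the process starts) and `n² / 2`
at `n = k`. The lower order terms make it fit every `k ≥ 4`. -/
def P (k n : ℤ) : ℤ := 2 * n ^ 2 + (32 * k + 38) * n - 16 * k ^ 2 - 56 * k + 1

theorem P_step (k n : ℤ) : P k n - P k (n - 1) = 4 * n + 32 * k + 36 := by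
  unfold P; ring

/-- The inequality `2δ - n' ≥ 0.5773 k`, where `n' = d + 1`, and `D` is the lower bound on `δ`
obtained from contracting an edge. -/
theorem arith_gap (k n e d D : ℤ) (hk : 4 ≤ k) (hn : k < n)
    (he : P k n ≤ 36 * e) (hD : 36 * (e - D) < P k (n - 1)) (hd : d * n ≤ 2 * e) :
    5773 * k ≤ 10000 * (2 * D - (d + 1)) := by
  have h1 := P_step k n
  have h2 : 4 * n ^ 2 - 40 * n + 32 * k ^ 2 + 112 * k - 2 ≤ 36 * (n * (2 * D - (d + 1))) := by
    have a : 0 ≤ (n - 1) * (36 * e - P k n) := mul_nonneg (by linarith) (by linarith)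
    have b : 0 ≤ n * (P k (n - 1) - 36 * (e - D)) := mul_nonneg (by linarith) (by linarith)
    unfold P at *
    nlinarith
  -- a quadratic in `n` with negative discriminant; the square completes it
  have h3 : 36 * 5773 * k * n ≤ 10000 * (4 * n ^ 2 - 40 * n + 32 * k ^ 2 + 112 * k - 2) := by
    nlinarith [sq_nonneg (20000 * n - (100000 + 51957 * k))]
  have h4 : n * (5773 * k) ≤ n * (10000 * (2 * D - (d + 1))) := by linarith
  exact le_of_mul_le_mul_left h4 (by linarith)

/-- The inequality `δ ≥ 0.6273 n'`, where `n' = d + 1` and `δ ≥ D`. The discriminant argument needs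
`k ≥ 7`; for `k = 4, 5, 6` the integrality of `e`, `d` and `D` is used. -/
theorem arith_ratio (k n e d D : ℤ) (hk : 4 ≤ k) (hn : k < n) (hn4 : n ≤ 4 * k)
    (he : P k n ≤ 36 * e) (he' : 36 * (e - 1) < P k n)
    (hD : 36 * (e - D) < P k (n - 1)) (hd : d * n ≤ 2 * e) :
    6273 * (d + 1) ≤ 10000 * D := by
  rcases le_or_gt 7 k with h7 | h7
  · have h1 := P_step k n
    have h2 : 14908 * n ^ 2 - 81472 * k * n - 342580 * n + 200736 * k ^ 2 + 702570 * k - 12600 ≤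
        36 * (n * (10000 * D - 6273 * (d + 1))) := by
      have a : 0 ≤ (10000 * n - 12546) * (36 * e - P k n) :=
        mul_nonneg (by linarith) (by linarith)
      have b : 0 ≤ n * (P k (n - 1) - 36 * (e - D)) := mul_nonneg (by linarith) (by linarith)
      unfold P at *
      nlinarith
    have h3 : 0 ≤ 14908 * n ^ 2 - 81472 * k * n - 342580 * n +
        200736 * k ^ 2 + 702570 * k - 12600 := by
      nlinarith [sq_nonneg (29816 * n - (81472 * k + 342580))]
    have h4 : n * 0 ≤ n * (10000 * D - 6273 * (d + 1)) := by linarith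
    have := le_of_mul_le_mul_left h4 (by linarith)
    linarith
  · unfold P at *
    interval_cases k <;> interval_cases n <;> omega

/-- A closed neighbourhood with `n` vertices in which every edge at the centre is in `2k` triangles
has at least `(n - 1) (k + 1)` edges, enough to start the second contraction process. -/
theorem arith_start (k n : ℤ) (hk : 4 ≤ k) (hn : 2 * k + 2 ≤ n) (hn4 : n ≤ 4 * k) :
    P k n ≤ 36 * ((n - 1) * (k + 1)) := by
  unfold P
  nlinarith [mul_nonneg (sub_nonneg.2 hn) (sub_nonneg.2 hn4)]

/-! ### Minors and contractions -/

theorem minor_refl {V : Type} (G : SimpleGraph V) : G.IsMinorOf G := by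
  refine ⟨fun v => {v}, fun w => ?_, fun a b h => by simpa using h, fun a b h => ?_⟩
  · have : Nonempty ({w} : Set V) := ⟨⟨w, rfl⟩⟩
    exact ⟨Preconnected.of_subsingleton⟩
  · exact ⟨a, rfl, b, rfl, h⟩

/-- Deleting edges and vertices of a minor gives a minor. -/
theorem minor_of_hom {V W U : Type} {G : SimpleGraph V} {H : SimpleGraph W} {K : SimpleGraph U}
    (hH : H.IsMinorOf G) (f : U → W) (hf : Function.Injective f)
    (hadj : ∀ a b, K.Adj a b → H.Adj (f a) (f b)) : K.IsMinorOf G := by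
  obtain ⟨B, h1, h2, h3⟩ := hH
  exact ⟨B ∘ f, fun w => h1 (f w), fun a b h => h2 (hf.ne h), fun a b h => h3 (hadj a b h)⟩

theorem minor_induce {V W : Type} {G : SimpleGraph V} {H : SimpleGraph W}
    (hH : H.IsMinorOf G) (s : Set W) : (H.induce s).IsMinorOf G :=
  minor_of_hom hH Subtype.val Subtype.val_injective fun _ _ h => h

/-- The graph obtained by contracting `v` into `u`: the vertex `v` disappears, and `u` takes over
its neighbours. -/
def contract {W : Type} (H : SimpleGraph W) (u v : W) : SimpleGraph ({v}ᶜ : Set W) where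
  Adj a b := a ≠ b ∧ (H.Adj a b ∨ (a.1 = u ∧ H.Adj v b) ∨ (b.1 = u ∧ H.Adj v a))
  symm := ⟨by
    rintro a b ⟨h, h'⟩
    exact ⟨h.symm, by rw [H.adj_comm]; tauto⟩⟩
  loopless := ⟨fun a h => h.1 rfl⟩

theorem minor_contract {V W : Type} {G : SimpleGraph V} {H : SimpleGraph W}
    (hH : H.IsMinorOf G) {u v : W} (huv : H.Adj u v) : (contract H u v).IsMinorOf G := by
  classical
  obtain ⟨B, h1, h2, h3⟩ := hH
  have sub : ∀ a : ({v}ᶜ : Set W), B a ⊆ if a.1 = u then B u ∪ B v else B a := by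
    intro a
    split_ifs with h
    · rw [h]; exact Set.subset_union_left
    · exact subset_rfl
  have sub' : ∀ a : ({v}ᶜ : Set W), a.1 = u → B v ⊆ if a.1 = u then B u ∪ B v else B a := by
    intro a h
    rw [if_pos h]; exact Set.subset_union_right
  refine ⟨fun a => if a.1 = u then B u ∪ B v else B a, fun a => ?_, ?_, ?_⟩
  · by_cases h : a.1 = u
    · obtain ⟨x, hx, y, hy, hxy⟩ := h3 huv
      beta_reduce
      rw [if_pos h]
      exact connected_induce_union (h1 u).preconnected (h1 v).preconnected hx hy hxy
    · beta_reduce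
      rw [if_neg h]
      exact h1 a
  · rintro ⟨a, ha⟩ ⟨b, hb⟩ hab
    have ha' : a ≠ v := ha
    have hb' : b ≠ v := hb
    have hab' : a ≠ b := fun h => hab (Subtype.ext h)
    dsimp only
    split_ifs with h h' h'
    · exact absurd (h.trans h'.symm) hab'
    · exact Set.disjoint_union_left.2 ⟨h2 (Ne.symm h'), h2 hb'.symm⟩
    · exact Set.disjoint_union_right.2 ⟨h2 h, h2 ha'⟩
    · exact h2 hab'
  · rintro a b ⟨-, h | ⟨h, h'⟩ | ⟨h, h'⟩⟩
    · obtain ⟨x, hx, y, hy, hxy⟩ := h3 h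
      exact ⟨x, sub a hx, y, sub b hy, hxy⟩
    · obtain ⟨x, hx, y, hy, hxy⟩ := h3 h'
      exact ⟨x, sub' a h hx, y, sub b hy, hxy⟩
    · obtain ⟨x, hx, y, hy, hxy⟩ := h3 h'
      exact ⟨y, sub a hy, x, sub' b h hx, hxy.symm⟩

/-! ### Edge counts under deletion and contraction -/

theorem ncard_edgeSet_eq {W : Type} [Fintype W] (H : SimpleGraph W) [Fintype H.edgeSet] :
    H.edgeSet.ncard = H.edgeFinset.card := by
  rw [← coe_edgeFinset, Set.ncard_coe_finset]

theorem ncard_neighborSet_eq {W : Type} (H : SimpleGraph W) (v : W)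
    [Fintype (H.neighborSet v)] : (H.neighborSet v).ncard = H.degree v := by
  rw [← card_neighborFinset_eq_degree, ← Set.ncard_coe_finset, coe_neighborFinset]

theorem sum_ncard_neighborSet {W : Type} [Fintype W] (H : SimpleGraph W) :
    ∑ v, (H.neighborSet v).ncard = 2 * H.edgeSet.ncard := by
  classical
  simp only [ncard_neighborSet_eq, ncard_edgeSet_eq]
  exact H.sum_degrees_eq_twice_card_edges

theorem ncard_edgeSet_le {W : Type} [Fintype W] (H : SimpleGraph W) :
    2 * H.edgeSet.ncard ≤ Nat.card W * (Nat.card W - 1) := by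
  classical
  have h := H.card_edgeFinset_le_card_choose_two
  rw [Nat.choose_two_right] at h
  rw [ncard_edgeSet_eq, Nat.card_eq_fintype_card]
  omega

theorem le_ncard_edgeSet_delete {W : Type} [Fintype W] (H : SimpleGraph W) (v : W) :
    H.edgeSet.ncard ≤ (H.induce {v}ᶜ).edgeSet.ncard + (H.neighborSet v).ncard := by
  classical
  have h1 := H.card_edgeFinset_induce_compl_singleton v
  have h2 := H.card_edgeFinset_deleteIncidenceSet v
  rw [ncard_edgeSet_eq, ncard_edgeSet_eq, ncard_neighborSet_eq]
  omega

theorem card_compl_singleton {W : Type} [Fintype W] (v : W) :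
    Nat.card ({v}ᶜ : Set W) = Nat.card W - 1 := by
  rw [Nat.card_coe_set_eq, Set.ncard_compl, Set.ncard_singleton]

/-- Contracting an edge destroys that edge and one edge for each triangle through it. -/
theorem le_ncard_edgeSet_contract {W : Type} [Fintype W] (H : SimpleGraph W) {u v : W}
    (huv : H.Adj u v) : H.edgeSet.ncard ≤
      (contract H u v).edgeSet.ncard + 1 + (H.neighborSet u ∩ H.neighborSet v).ncard := by
  classical
  have hdel := le_ncard_edgeSet_delete H v
  -- the neighbours of `v` that become new neighbours of `u`
  let S : Set ({v}ᶜ : Set W) := {b | H.Adj v b ∧ ¬ H.Adj u b ∧ b.1 ≠ u}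
  let u' : ({v}ᶜ : Set W) := ⟨u, huv.ne⟩
  let T : Set (Sym2 ({v}ᶜ : Set W)) := (fun b => s(u', b)) '' S
  have hT : T.ncard = S.ncard :=
    Set.ncard_image_of_injective _ fun a b h => Sym2.congr_right.1 h
  have hdisj : Disjoint (H.induce {v}ᶜ).edgeSet T := by
    rw [Set.disjoint_right]
    rintro _ ⟨b, hb, rfl⟩ h
    exact hb.2.1 h
  have hsub : (H.induce {v}ᶜ).edgeSet ∪ T ⊆ (contract H u v).edgeSet := by
    rintro e (he | ⟨b, hb, rfl⟩)
    · induction e with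
      | _ a b =>
        have he : (H.induce {v}ᶜ).Adj a b := he
        exact ⟨he.ne, Or.inl he⟩
    · exact ⟨fun h => hb.2.2 (congrArg Subtype.val h).symm, Or.inr (Or.inl ⟨rfl, hb.1⟩)⟩
  have hle := Set.ncard_le_ncard hsub (Set.toFinite _)
  rw [Set.ncard_union_eq hdisj (Set.toFinite _) (Set.toFinite _), hT] at hle
  have hN : H.neighborSet v ⊆
      Subtype.val '' S ∪ ({u} ∪ (H.neighborSet u ∩ H.neighborSet v)) := by
    intro b hb
    by_cases h1 : b = u
    · exact Or.inr (Or.inl h1)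
    by_cases h2 : H.Adj u b
    · exact Or.inr (Or.inr ⟨h2, hb⟩)
    · exact Or.inl ⟨⟨b, (SimpleGraph.Adj.ne hb).symm⟩, ⟨hb, h2, h1⟩, rfl⟩
  have h3 := Set.ncard_le_ncard hN (Set.toFinite _)
  have h4 := Set.ncard_union_le (Subtype.val '' S) ({u} ∪ (H.neighborSet u ∩ H.neighborSet v))
  have h5 := Set.ncard_union_le {u} (H.neighborSet u ∩ H.neighborSet v)
  rw [Set.ncard_singleton] at h5
  rw [Set.ncard_image_of_injective _ Subtype.val_injective] at h4
  omega

/-! ### Minimal minors -/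

/-- Among the minors of `G` whose numbers `n` of vertices and `e` of edges satisfy a
condition `Q n e`, one minimising `n + e` loses `Q` on deleting an edge, deleting a vertex
or contracting an edge. -/
theorem exists_minimal_minor {V W₀ : Type} {G : SimpleGraph V} [Fintype W₀] {H₀ : SimpleGraph W₀}
    (h₀ : H₀.IsMinorOf G) (Q : ℕ → ℕ → Prop)
    (hQ₀ : Q (Nat.card W₀) H₀.edgeSet.ncard) :
    ∃ (W : Type) (_ : Fintype W) (H : SimpleGraph W), H.IsMinorOf G ∧
      Q (Nat.card W) H.edgeSet.ncard ∧
      (0 < H.edgeSet.ncard → ¬ Q (Nat.card W) (H.edgeSet.ncard - 1)) ∧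
      (∀ v, ¬ Q (Nat.card W - 1) (H.edgeSet.ncard - (H.neighborSet v).ncard)) ∧
      ∀ u v, H.Adj u v → ¬ Q (Nat.card W - 1)
        (H.edgeSet.ncard - 1 - (H.neighborSet u ∩ H.neighborSet v).ncard) := by
  classical
  have hex : ∃ s, ∃ (W : Type) (_ : Fintype W) (H : SimpleGraph W), H.IsMinorOf G ∧
      Q (Nat.card W) H.edgeSet.ncard ∧ Nat.card W + H.edgeSet.ncard = s :=
    ⟨_, W₀, inferInstance, H₀, h₀, hQ₀, rfl⟩
  obtain ⟨W, _, H, hH, hQH, hs⟩ := Nat.find_spec hex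
  have hmin : ∀ (W' : Type) [Fintype W'] (H' : SimpleGraph W'), H'.IsMinorOf G →
      Nat.card W' + H'.edgeSet.ncard < Nat.card W + H.edgeSet.ncard →
      ¬ Q (Nat.card W') H'.edgeSet.ncard := by
    intro W' _ H' h1 h2 h3
    exact Nat.find_min hex (hs ▸ h2) ⟨W', inferInstance, H', h1, h3, rfl⟩
  -- a smaller minor with at least `e` edges may be thinned out to one with few enough edges
  have hmin' : ∀ (W' : Type) [Fintype W'] (H' : SimpleGraph W') (e : ℕ), H'.IsMinorOf G →
      Nat.card W' < Nat.card W → e ≤ H.edgeSet.ncard → e ≤ H'.edgeSet.ncard →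
      ¬ Q (Nat.card W') e := by
    intro W' _ H' e h1 h2 h3 h4 h5
    obtain ⟨t, ht, hte⟩ := Set.exists_subset_card_eq h4
    have ht' : (fromEdgeSet t).edgeSet = t := by
      rw [edgeSet_fromEdgeSet, sdiff_eq_left, Set.disjoint_left]
      exact fun x hx hd => H'.not_isDiag_of_mem_edgeSet (ht hx) hd
    refine hmin W' (fromEdgeSet t) (minor_of_hom h1 id Function.injective_id ?_) ?_ ?_
    · intro a b hab
      exact ht ((fromEdgeSet_adj t).1 hab).1
    · rw [ht', hte]; omega
    · rw [ht', hte]; exact h5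
  have hpos : ∀ v : W, 0 < Nat.card W := fun v => by
    have : Nonempty W := ⟨v⟩
    exact Nat.card_pos
  refine ⟨W, inferInstance, H, hH, hQH, ?_, ?_, ?_⟩
  · intro hpos hq
    obtain ⟨e, he⟩ := (Set.ncard_pos (Set.toFinite _)).1 hpos
    have hc : (H.deleteEdges {e}).edgeSet.ncard = H.edgeSet.ncard - 1 := by
      rw [edgeSet_deleteEdges, Set.ncard_sdiff_singleton_of_mem he]
    refine hmin W (H.deleteEdges {e}) (minor_of_hom hH id Function.injective_id ?_) ?_ ?_
    · intro a b hab
      exact (deleteEdges_adj.1 hab).1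
    · omega
    · rwa [hc]
  · intro v
    have h := hpos v
    have h1 := le_ncard_edgeSet_delete H v
    have h2 := card_compl_singleton v
    rw [← h2]
    exact hmin' _ (H.induce {v}ᶜ) _ (minor_induce hH _) (by omega) (by omega) (by omega)
  · intro u v huv
    have h := hpos v
    have h1 := le_ncard_edgeSet_contract H huv
    have h2 := card_compl_singleton v
    rw [← h2]
    exact hmin' _ (contract H u v) _ (minor_contract hH huv) (by omega) (by omega) (by omega)

theorem exists_small_degree {W : Type} [Fintype W] [Nonempty W] (H : SimpleGraph W) :
    ∃ v, (H.neighborSet v).ncard * Nat.card W ≤ 2 * H.edgeSet.ncard := by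
  obtain ⟨v, hv⟩ := Finite.exists_min fun v => (H.neighborSet v).ncard
  refine ⟨v, ?_⟩
  rw [← sum_ncard_neighborSet, Nat.card_eq_fintype_card, mul_comm, ← smul_eq_mul,
    ← Finset.card_univ]
  exact Finset.card_nsmul_le_sum _ _ _ fun w _ => hv w

/-! ### Closed neighbourhoods -/

/-- The subgraph induced by `v` and its neighbours. -/
abbrev closedNbhd {W : Type} (H : SimpleGraph W) (v : W) :
    SimpleGraph (insert v (H.neighborSet v) : Set W) := H.induce _

theorem card_closedNbhd {W : Type} [Fintype W] (H : SimpleGraph W) (v : W) :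
    Nat.card (insert v (H.neighborSet v) : Set W) = (H.neighborSet v).ncard + 1 := by
  rw [Nat.card_coe_set_eq, Set.ncard_insert_of_notMem (by simp) (Set.toFinite _)]

theorem ncard_neighborSet_closedNbhd {W : Type} (H : SimpleGraph W) (v : W)
    (x : (insert v (H.neighborSet v) : Set W)) :
    ((closedNbhd H v).neighborSet x).ncard = (H.neighborSet x ∩ insert v (H.neighborSet v)).ncard := by
  rw [← Set.ncard_image_of_injective _ Subtype.val_injective]
  congr 1
  ext y
  simp only [Set.mem_image, Set.mem_inter_iff, mem_neighborSet, comap_adj]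
  constructor
  · rintro ⟨z, hz, rfl⟩
    exact ⟨hz, z.2⟩
  · rintro ⟨h1, h2⟩
    exact ⟨⟨y, h2⟩, h1, rfl⟩

theorem degree_closedNbhd_self {W : Type} (H : SimpleGraph W) (v : W) :
    ((closedNbhd H v).neighborSet ⟨v, Set.mem_insert _ _⟩).ncard = (H.neighborSet v).ncard := by
  rw [ncard_neighborSet_closedNbhd, Set.inter_eq_left.2 (Set.subset_insert _ _)]

theorem degree_closedNbhd_of_adj {W : Type} [Fintype W] (H : SimpleGraph W) {v w : W}
    (h : H.Adj v w) :
    ((closedNbhd H v).neighborSet ⟨w, Set.mem_insert_of_mem _ h⟩).ncard =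
      (H.neighborSet v ∩ H.neighborSet w).ncard + 1 := by
  rw [ncard_neighborSet_closedNbhd, Set.inter_insert_of_mem (show v ∈ H.neighborSet w from h.symm),
    Set.ncard_insert_of_notMem (by simp) (Set.toFinite _), Set.inter_comm]

/-- The minimum degree of the closed neighbourhood of a non-isolated vertex `v` exceeds the number
of triangles through some edge at `v`. -/
theorem minDegree_closedNbhd {W : Type} [Fintype W] (H : SimpleGraph W) {v : W}
    (hv : 0 < (H.neighborSet v).ncard) :
    ∃ δ w, H.Adj v w ∧
      IsLeast {d : ℕ | ∃ x, ((closedNbhd H v).neighborSet x).ncard = d} δ ∧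
      (H.neighborSet v ∩ H.neighborSet w).ncard + 1 ≤ δ ∧ δ ≤ (H.neighborSet v).ncard := by
  have : Nonempty (insert v (H.neighborSet v) : Set W) := ⟨⟨v, Set.mem_insert _ _⟩⟩
  have : Finite (insert v (H.neighborSet v) : Set W) := Subtype.finite
  obtain ⟨x, hx⟩ := Finite.exists_min fun x => ((closedNbhd H v).neighborSet x).ncard
  have hxv := hx ⟨v, Set.mem_insert _ _⟩
  rw [degree_closedNbhd_self] at hxv
  have hl : IsLeast {d : ℕ | ∃ x, ((closedNbhd H v).neighborSet x).ncard = d}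
      ((closedNbhd H v).neighborSet x).ncard := ⟨⟨x, rfl⟩, by rintro _ ⟨y, rfl⟩; exact hx y⟩
  obtain ⟨y, hy⟩ := x
  rcases hy with rfl | hvy
  -- the minimum is attained at the centre, whose degree exceeds the triangle count of any edge at it
  · obtain ⟨w, hw⟩ := (Set.ncard_pos (Set.toFinite _)).1 hv
    refine ⟨_, w, hw, hl, ?_, hxv⟩
    have h := hx ⟨w, Set.mem_insert_of_mem _ hw⟩
    rw [degree_closedNbhd_self, ← Nat.succ_le_iff] at *
    refine Set.ncard_lt_ncard ⟨Set.inter_subset_left, fun h => ?_⟩ (Set.toFinite _)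
    exact H.loopless.irrefl w (h hw).2
  · exact ⟨_, y, hvy, hl, (degree_closedNbhd_of_adj H hvy).ge, hxv⟩

/-- Degree sum in a closed neighbourhood: the centre has degree `d` and each of the other `d`
vertices has degree at least `s + 1`. -/
theorem le_ncard_edgeSet_closedNbhd {W : Type} [Fintype W] (H : SimpleGraph W) (v : W) (s : ℕ)
    (hs : ∀ w, H.Adj v w → s ≤ (H.neighborSet v ∩ H.neighborSet w).ncard) :
    (H.neighborSet v).ncard * (s + 2) ≤ 2 * (closedNbhd H v).edgeSet.ncard := by
  classical
  rw [← sum_ncard_neighborSet,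
    ← Finset.add_sum_erase _ _ (Finset.mem_univ ⟨v, Set.mem_insert v _⟩), degree_closedNbhd_self]
  have h := Finset.card_nsmul_le_sum
    (Finset.univ.erase (⟨v, Set.mem_insert v _⟩ : (insert v (H.neighborSet v) : Set W)))
    (fun x => ((closedNbhd H v).neighborSet x).ncard) (s + 1) (by
      rintro ⟨x, hx⟩ hxv
      rcases hx with rfl | hx'
      · simp at hxv
      · have := hs x hx'
        rw [degree_closedNbhd_of_adj H hx']
        omega)
  rw [Finset.card_erase_of_mem (Finset.mem_univ _), Finset.card_univ, ← Nat.card_eq_fintype_card,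
    card_closedNbhd, smul_eq_mul, Nat.add_sub_cancel] at h
  linarith

/-! ### The two contraction processes -/

/-- Condition defining the first contraction process: `e ≥ 2kn - 2k + 1`, without truncated
subtraction. A single vertex does not satisfy it, and equality forces average degree below `4k`. -/
def TriDense (k n e : ℕ) : Prop := 1 ≤ n ∧ 2 * k * n + 1 ≤ e + 2 * k

/-- A dense enough graph has a minor in which every edge lies in `2k` triangles, and which has a
vertex of positive degree less than `4k`. -/
theorem exists_triangle_minor (k : ℕ) (hk : 1 ≤ k) {V : Type} [Fintype V] [Nonempty V]
    (G : SimpleGraph V) (havg : (4 * k : ℝ) ≤ G.averageDegree) :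
    ∃ (W : Type) (_ : Fintype W) (H : SimpleGraph W), H.IsMinorOf G ∧
      (∀ u v, H.Adj u v → 2 * k ≤ (H.neighborSet u ∩ H.neighborSet v).ncard) ∧
      ∃ v, 0 < (H.neighborSet v).ncard ∧ (H.neighborSet v).ncard < 4 * k := by
  have h0 : 2 * k * Nat.card V ≤ G.edgeSet.ncard := by
    have hV : (0 : ℝ) < Nat.card V := by exact_mod_cast Nat.card_pos
    rw [averageDegree, le_div_iff₀ hV] at havg
    have : (2 * k * Nat.card V : ℝ) ≤ G.edgeSet.ncard := by linarith
    exact_mod_cast this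
  obtain ⟨W, _, H, hH, ⟨hn, he⟩, he1, hv, huv⟩ := exists_minimal_minor (minor_refl G) (TriDense k)
    ⟨Nat.card_pos, by omega⟩
  have hmax := ncard_edgeSet_le H
  have hn2 : 2 ≤ Nat.card W := by
    by_contra hc
    have h1 : Nat.card W = 1 := by omega
    rw [h1] at hmax he
    omega
  obtain ⟨m, hm⟩ : ∃ m, Nat.card W = m + 2 := ⟨_, (Nat.sub_add_cancel hn2).symm⟩
  have : Nonempty W := (Nat.card_pos_iff.1 hn).1
  obtain ⟨v, hvd⟩ := exists_small_degree H
  refine ⟨W, inferInstance, H, hH, ?_, v, ?_, ?_⟩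
  · intro a b hab
    have h := huv a b hab
    rw [hm] at h he
    simp only [TriDense, not_and] at h
    have h := h (by omega)
    rw [show m + 2 - 1 = m + 1 from rfl] at h
    ring_nf at h he
    omega
  · have h := hv v
    rw [hm] at h he
    simp only [TriDense, not_and] at h
    have h := h (by omega)
    rw [show m + 2 - 1 = m + 1 from rfl] at h
    ring_nf at h he
    omega
  · have hpos : 0 < H.edgeSet.ncard := by
      rw [hm] at he
      ring_nf at he
      omega
    have h := he1 hpos
    simp only [TriDense, not_and] at h
    have h := h hn
    by_contra hc
    have h1 : 4 * k * Nat.card W ≤ (H.neighborSet v).ncard * Nat.card W :=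
      Nat.mul_le_mul_right _ (by omega)
    have h2 : 4 * k * Nat.card W = 2 * (2 * k * Nat.card W) := by ring
    omega

theorem complete_minor_of_triangle (k : ℕ) (hk : 1 ≤ k) (hk3 : k ≤ 3) {V W : Type} [Fintype W]
    {G : SimpleGraph V} {H : SimpleGraph W} (hH : H.IsMinorOf G)
    (htri : ∀ u v, H.Adj u v → 2 * k ≤ (H.neighborSet u ∩ H.neighborSet v).ncard)
    {v : W} (hv : 0 < (H.neighborSet v).ncard) : (⊤ : SimpleGraph (Fin k)).IsMinorOf G := by
  obtain ⟨w, hw⟩ := (Set.ncard_pos (Set.toFinite _)).1 hv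
  have hw : H.Adj v w := hw
  obtain ⟨x, hx1, hx2⟩ := (Set.ncard_pos (Set.toFinite _)).1
    (show 0 < (H.neighborSet v ∩ H.neighborSet w).ncard by have := htri v w hw; omega)
  have hx1 : H.Adj v x := hx1
  have hx2 : H.Adj w x := hx2
  have hadj : ∀ a b : Fin 3, a ≠ b → H.Adj (![v, w, x] a) (![v, w, x] b) := by
    intro a b hab
    fin_cases a <;> fin_cases b <;> simp_all [H.adj_comm]
  have hinj : Function.Injective ![v, w, x] := by
    intro a b hab
    by_contra hne
    exact (hadj a b hne).ne hab
  exact minor_of_hom hH (fun i : Fin k => ![v, w, x] (Fin.castLE hk3 i))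
    (hinj.comp (Fin.castLE_injective hk3))
    fun a b hab => hadj _ _ ((Fin.castLE_injective hk3).ne hab)

/-- Condition defining the second contraction process: between `k` and `4k` vertices, and at least
`P k n / 36` edges. -/
def Good (k n e : ℕ) : Prop := k ≤ n ∧ n ≤ 4 * k ∧ P k n ≤ 36 * (e : ℤ)

/-- The second contraction process: the closed neighbourhood of a vertex of small degree in a minimal
`Good` minor has the required number of vertices and minimum degree. -/
theorem final_minor (k : ℕ) (hk : 4 ≤ k) {V W₀ : Type} [Fintype W₀]
    {G : SimpleGraph V} {H₀ : SimpleGraph W₀} (hH₀ : H₀.IsMinorOf G)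
    (hgood : Good k (Nat.card W₀) H₀.edgeSet.ncard) :
    ∃ (W : Type) (_ : Fintype W) (H : SimpleGraph W) (n δ : ℕ),
      H.IsMinorOf G ∧ Nat.card W = n ∧
      IsLeast {d : ℕ | ∃ w : W, (H.neighborSet w).ncard = d} δ ∧
      0.6273 * (n : ℝ) ≤ (δ : ℝ) ∧
      0.5773 * (k : ℝ) ≤ 2 * (δ : ℝ) - (n : ℝ) ∧
      k ≤ δ ∧ δ < n ∧ n ≤ 4 * k := by
  classical
  obtain ⟨W, _, H, hH, ⟨hn, hn4, he⟩, he1, hv, huv⟩ := exists_minimal_minor hH₀ (Good k) hgood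
  have hmax := ncard_edgeSet_le H
  have hcard : ∀ v, (H.neighborSet v).ncard + 1 ≤ Nat.card W := fun v => by
    rw [← card_closedNbhd]
    exact Nat.card_le_card_of_injective _ Subtype.val_injective
  have : Nonempty W := (Nat.card_pos_iff.1 (by omega)).1
  obtain ⟨v, hvd⟩ := exists_small_degree H
  have hv := hv v
  generalize Nat.card W = n at *
  generalize H.edgeSet.ncard = e at *
  have hkn : k < n := by
    refine lt_of_le_of_ne hn ?_
    -- `P k k / 36` exceeds the number of edges of the complete graph on `k` vertices
    rintro rfl
    obtain ⟨m, rfl⟩ : ∃ m, k = m + 1 := ⟨k - 1, by omega⟩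
    rw [Nat.add_sub_cancel] at hmax
    zify at hmax
    unfold P at he
    push_cast at he
    nlinarith
  have hstep := P_step k n
  have hn1 : ((n - 1 : ℕ) : ℤ) = n - 1 := by omega
  have hPpos : 0 < P k n := by
    have h1 : (k : ℤ) < n := by exact_mod_cast hkn
    unfold P
    nlinarith
  have h1 := he1 (by omega)
  simp only [Good, not_and, not_le] at h1 hv huv
  have h1 := h1 hn hn4
  have hv := hv (by omega) (by omega)
  rw [hn1] at hv
  obtain ⟨δ, w, hvw, hδ, hδ1, hδ2⟩ := minDegree_closedNbhd H (v := v) (by omega)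
  have ht := huv v w hvw (by omega) (by omega)
  rw [hn1] at ht
  have hc := hcard v
  have hsc := card_closedNbhd H v
  generalize (H.neighborSet v).ncard = d at *
  generalize (H.neighborSet v ∩ H.neighborSet w).ncard = t at *
  have hD : 36 * ((e : ℤ) - (t + 1 : ℤ)) < P k (n - 1) := by omega
  have hgap := arith_gap k n e d (t + 1) (by omega) (by omega) he hD (by exact_mod_cast hvd)
  have hratio := arith_ratio k n e d (t + 1) (by omega) (by omega) (by omega) he (by omega) hD
    (by exact_mod_cast hvd)
  refine ⟨_, inferInstance, closedNbhd H v, d + 1, δ, minor_induce hH _, hsc, hδ, ?_, ?_, ?_, ?_, ?_⟩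
  · have h : (6273 * (d + 1) : ℤ) ≤ 10000 * δ := by omega
    have h : (6273 * (d + 1) : ℝ) ≤ 10000 * δ := by exact_mod_cast h
    push_cast
    linarith
  · have h : (5773 * k : ℤ) ≤ 10000 * (2 * δ - (d + 1)) := by omega
    have h : (5773 * k : ℝ) ≤ 10000 * (2 * δ - (d + 1)) := by exact_mod_cast h
    push_cast
    linarith
  all_goals omega

/-- For every integer `k ≥ 1`, every graph with average degree at least `4k` contains
`K_k` as a minor, or contains a minor with `n` vertices and minimum degree `δ`, where
`δ ≥ 0.6273n`, `2δ − n ≥ 0.5773k` and `k ≤ δ < n ≤ 4k`. -/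
theorem function_minor (k : ℕ) (hk : 1 ≤ k) {V : Type} [Fintype V] [Nonempty V]
    (G : SimpleGraph V) (havg : (4 * k : ℝ) ≤ G.averageDegree) :
    (⊤ : SimpleGraph (Fin k)).IsMinorOf G ∨
    ∃ (W : Type) (_ : Fintype W) (H : SimpleGraph W) (n δ : ℕ),
      H.IsMinorOf G ∧ Nat.card W = n ∧
      IsLeast {d : ℕ | ∃ w : W, (H.neighborSet w).ncard = d} δ ∧
      0.6273 * (n : ℝ) ≤ (δ : ℝ) ∧
      0.5773 * (k : ℝ) ≤ 2 * (δ : ℝ) - (n : ℝ) ∧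
      k ≤ δ ∧ δ < n ∧ n ≤ 4 * k := by
  classical
  obtain ⟨W, _, H, hH, htri, v, hv, hv4⟩ := exists_triangle_minor k hk G havg
  rcases le_or_gt k 3 with hk3 | hk3
  · exact Or.inl (complete_minor_of_triangle k hk hk3 hH htri hv)
  refine Or.inr (final_minor k hk3 (minor_induce hH (insert v (H.neighborSet v))) ?_)
  have hE := le_ncard_edgeSet_closedNbhd H v (2 * k) (htri v)
  obtain ⟨δ, w, hvw, -, h1, h2⟩ := minDegree_closedNbhd H hv
  have h3 := htri v w hvw
  rw [card_closedNbhd]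
  generalize (H.neighborSet v).ncard = d at *
  refine ⟨by omega, by omega, ?_⟩
  have h4 := arith_start k (d + 1) (by omega) (by omega) (by omega)
  rw [show d * (2 * k + 2) = 2 * (d * (k + 1)) by ring] at hE
  have h5 : d * (k + 1) ≤ (closedNbhd H v).edgeSet.ncard := by omega
  zify at h5
  rw [add_sub_cancel_right] at h4
  push_cast
  exact h4.trans (by linarith)
end

section
/- Let G be a simple graph with n ≥ 1 vertices and minimum degree δ satisfying 2δ − n ≥ t − 2, where t ≥ 1 is an integer. Then G contains every 2-degenerate simple graph on t vertices as a subgraph. -/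
/-!
Every non-empty set of vertices of `H` contains a vertex with at most two neighbours in that set.
Removing such vertices one after the other and reversing the order, `H` is rebuilt so that each new
vertex has at most two neighbours among the earlier ones, and it can be embedded greedily in this
order. It remains to see that a new vertex can always be placed
(`exists_common_neighbor_not_mem`): two distinct vertices `a`, `b` of
`G` have at least `2δ - n ≥ t - 2` common neighbours, at most `t - 1` vertices are already in use,
and `a`, `b` are themselves in use without being common neighbours, so that at most `t - 3` of the
common neighbours are taken. With at most one placed neighbour, the bound `δ ≥ t - 1`, which
follows from `δ ≤ n - 1`, suffices.
-/

open SimpleGraph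

/-- A graph is 2-degenerate if every non-empty (induced) subgraph has a vertex of
degree at most 2. -/
def SimpleGraph.TwoDegenerate {V : Type*} (H : SimpleGraph V) : Prop :=
  ∀ s : Set V, s.Nonempty → ∃ v ∈ s, {u ∈ s | H.Adj v u}.ncard ≤ 2

/-- The extension step: if `P` is a set of fewer than `t` used vertices and `A ⊆ P` has at most two
elements, then some unused vertex is adjacent to all of `A`. The hypothesis `h` is
`2δ - n ≥ t - 2` without subtraction. -/
lemma exists_common_neighbor_not_mem {V : Type} [Fintype V] [DecidableEq V] [Nonempty V]
    (G : SimpleGraph V) [DecidableRel G.Adj] {δ t : ℕ} (hdeg : ∀ v, δ ≤ G.degree v)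
    (hlt : δ < Fintype.card V) (h : t + Fintype.card V ≤ 2 * δ + 2)
    {P A : Finset V} (hAP : A ⊆ P) (hA : A.card ≤ 2) (hP : P.card < t) :
    ∃ x, x ∉ P ∧ ∀ a ∈ A, G.Adj a x := by
  -- Counting form: it is enough that the common neighbours `N` of `A` outnumber `P \ A`.
  have key : ∀ N : Finset V, (∀ x ∈ N, ∀ a ∈ A, G.Adj a x) → P.card < N.card + A.card →
      ∃ x, x ∉ P ∧ ∀ a ∈ A, G.Adj a x := by
    intro N hN hcard
    have hPA : (P \ A).card + A.card = P.card := Finset.card_sdiff_add_card_eq_card hAP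
    obtain ⟨x, hxN, hx⟩ := Finset.exists_mem_notMem_of_card_lt_card
      (show (P \ A).card < N.card by omega)
    refine ⟨x, fun hxP => hx (Finset.mem_sdiff.2 ⟨hxP, fun hxA => ?_⟩), hN x hxN⟩
    exact G.loopless.irrefl x (hN x hxN x hxA)
  obtain h0 | h1 | h2 : A.card = 0 ∨ A.card = 1 ∨ A.card = 2 := by omega
  · refine key Finset.univ ?_ ?_
    · simp [Finset.card_eq_zero.1 h0]
    · rw [Finset.card_univ]; omega
  · obtain ⟨a, rfl⟩ := Finset.card_eq_one.1 h1
    refine key (G.neighborFinset a) (by simp) ?_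
    have := hdeg a
    rw [G.card_neighborFinset_eq_degree, h1]; omega
  · obtain ⟨a, b, hab, rfl⟩ := Finset.card_eq_two.1 h2
    refine key (G.neighborFinset a ∩ G.neighborFinset b) (by simp) ?_
    have hu := Finset.card_union_add_card_inter (G.neighborFinset a) (G.neighborFinset b)
    have hn := Finset.card_le_univ (G.neighborFinset a ∪ G.neighborFinset b)
    have ha := hdeg a
    have hb := hdeg b
    rw [G.card_neighborFinset_eq_degree, G.card_neighborFinset_eq_degree] at hu
    omega

/-- If `G` has `n ≥ 1` vertices and minimum degree `δ` with `2δ − n ≥ t − 2`, then `G`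
contains every 2-degenerate graph on `t ≥ 1` vertices as a subgraph. -/
theorem two_degenerate_subgraph {V : Type} [Fintype V] [Nonempty V] (G : SimpleGraph V)
    (δ t : ℕ) (ht : 1 ≤ t)
    (hδ : IsLeast {d : ℕ | ∃ v : V, (G.neighborSet v).ncard = d} δ)
    (h : (t : ℤ) - 2 ≤ 2 * (δ : ℤ) - (Nat.card V : ℤ))
    {W : Type} [Fintype W] (H : SimpleGraph W) (hcard : Nat.card W = t)
    (hH : H.TwoDegenerate) :
    ∃ f : W ↪ V, ∀ ⦃a b : W⦄, H.Adj a b → G.Adj (f a) (f b) := by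
  classical
  rw [Nat.card_eq_fintype_card] at h hcard
  have hdeg' : ∀ v, (G.neighborSet v).ncard = G.degree v := fun v => by
    rw [Set.ncard_eq_toFinset_card', Set.toFinset_card, G.card_neighborSet_eq_degree]
  have hdeg : ∀ v, δ ≤ G.degree v := fun v => hdeg' v ▸ hδ.2 ⟨v, rfl⟩
  have hlt : δ < Fintype.card V := by
    obtain ⟨v, hv⟩ := hδ.1
    rw [← hv, hdeg']
    exact G.degree_lt_card_verts v
  have hext : ∀ S : Finset W, ∃ f : W → V, Set.InjOn f S ∧
      ∀ a ∈ S, ∀ b ∈ S, H.Adj a b → G.Adj (f a) (f b) := by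
    intro S
    induction S using Finset.strongInduction with
    | H S ih =>
      rcases S.eq_empty_or_nonempty with rfl | hS
      · exact ⟨fun _ => Classical.arbitrary V, by simp, by simp⟩
      obtain ⟨v, hvS, hv⟩ := hH S hS
      have hvS : v ∈ S := hvS
      obtain ⟨f, hinj, hadj⟩ := ih (S.erase v) (Finset.erase_ssubset hvS)
      have hset : {u | u ∈ (S : Set W) ∧ H.Adj v u} = ((S.filter (H.Adj v) : Finset W) : Set W) := by
        ext; simp
      rw [hset, Set.ncard_coe_finset] at hv
      obtain ⟨x, hx, hxA⟩ := exists_common_neighbor_not_mem G (δ := δ) (t := t) hdeg hlt (by omega)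
        (P := (S.erase v).image f) (A := (S.filter (H.Adj v)).image f)
        (Finset.image_subset_image fun u hu => by
          rw [Finset.mem_filter] at hu
          exact Finset.mem_erase.2 ⟨hu.2.ne', hu.1⟩)
        (Finset.card_image_le.trans hv)
        (by
          have h1 : ((S.erase v).image f).card ≤ (S.erase v).card := Finset.card_image_le
          have h2 := Finset.card_erase_lt_of_mem hvS
          have h3 := Finset.card_le_univ S
          omega)
      have hne : ∀ u ∈ S, u ≠ v → f u ≠ x := fun u hu huv he =>
        hx (Finset.mem_image.2 ⟨u, Finset.mem_erase.2 ⟨huv, hu⟩, he⟩)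
      have hxa : ∀ u ∈ S, H.Adj v u → G.Adj (f u) x := fun u hu huv =>
        hxA _ (Finset.mem_image_of_mem f (Finset.mem_filter.2 ⟨hu, huv⟩))
      refine ⟨Function.update f v x, ?_, ?_⟩
      · intro a ha b hb hab
        by_cases hav : a = v <;> by_cases hbv : b = v
        · rw [hav, hbv]
        · subst hav
          rw [Function.update_self, Function.update_of_ne hbv] at hab
          exact absurd hab.symm (hne b hb hbv)
        · subst hbv
          rw [Function.update_self, Function.update_of_ne hav] at hab
          exact absurd hab (hne a ha hav)
        · rw [Function.update_of_ne hav, Function.update_of_ne hbv] at hab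
          exact hinj (Finset.mem_erase.2 ⟨hav, ha⟩) (Finset.mem_erase.2 ⟨hbv, hb⟩) hab
      · intro a ha b hb hab
        by_cases hav : a = v <;> by_cases hbv : b = v
        · exact absurd (hav.trans hbv.symm) hab.ne
        · subst hav
          rw [Function.update_self, Function.update_of_ne hbv]
          exact (hxa b hb hab).symm
        · subst hbv
          rw [Function.update_self, Function.update_of_ne hav]
          exact hxa a ha hab.symm
        · rw [Function.update_of_ne hav, Function.update_of_ne hbv]
          exact hadj a (Finset.mem_erase.2 ⟨hav, ha⟩) b (Finset.mem_erase.2 ⟨hbv, hb⟩) hab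
  obtain ⟨f, hinj, hadj⟩ := hext Finset.univ
  exact ⟨⟨f, fun a b hab => hinj (by simp) (by simp) hab⟩,
    fun a b hab => hadj a (Finset.mem_univ a) b (Finset.mem_univ b) hab⟩
end

section
/- Every simple graph G with average degree at least 6.929·t contains every 2-degenerate simple graph H on t ≥ 1 vertices as a minor. -/
/-!
Let `t = |H|`. A 2-degenerate graph on `t` vertices embeds greedily in every nonempty graph `K` with
`|K| + t ≤ 2δ(K) + 2`: any two vertices then have at least `t - 2` common neighbours, so a vertex
with at most two already embedded neighbours always finds a free place (`isMinorOf_of_dense`). It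
remains to find such a `K`, or the complete graph on `t` vertices, as a minor of `G`.

Fix an edge threshold `f(n)` and contract edges while at least `f(n)` edges remain on `n` vertices.
When this stops with `n` vertices and `e` edges, contracting any edge would leave fewer than
`f(n - 1)` edges, so every edge lies in more than `e - f(n - 1) - 1` triangles. The neighbourhood of
a vertex of minimum degree therefore induces a graph with at most `2e/n` vertices and minimum degree
more than `e - f(n - 1) - 1` (`contraction_core`). This is applied twice.

* With `f(n) = 3.4645 t n` one gets a number `D ≥ 3.4645 t` and a graph with at most `2D` vertices
  and minimum degree more than `D - 1`.
* With `s = t - 1` and `f(n) = n (s/2) (1 + log ((n - 1)/s))` the neighbourhood `K` satisfies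
  `2δ(K) - |K| > 2 (n - 1) (f(n)/n - f(n - 1)/(n - 1)) - 2 ≥ s - 2 = t - 3`, because
  `log y - log (y - 1) ≥ 1/y`. If the contraction reaches `t` vertices instead, then
  `f(t) = t (t - 1)/2` forces a complete graph.

The output of the first step has enough edges for the second, since
`s (1 + log ((2D - 1)/s)) ≤ D - 1` whenever `D ≥ 3.4645 t`.
-/

open SimpleGraph

namespace TwoDegMinor

variable {V V' W : Type}

/-! ### Pulling minors back along induced subgraphs and contractions -/

lemma isMinorOf_of_hom_injective {G : SimpleGraph V} {H : SimpleGraph W} (f : H →g G)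
    (hf : Function.Injective f) : H.IsMinorOf G := by
  refine ⟨fun w => {f w}, fun w => ?_, fun a b hab => ?_, fun a b hab => ?_⟩
  · rw [connected_iff_exists_forall_reachable]
    refine ⟨⟨f w, rfl⟩, fun u => ?_⟩
    obtain ⟨u, rfl⟩ := u
    exact Reachable.refl _
  · simpa using fun h => hab (hf h)
  · exact ⟨f a, rfl, f b, rfl, f.map_adj hab⟩

lemma IsMinorOf.induce {G : SimpleGraph V} {H : SimpleGraph W} {s : Set V}
    (h : H.IsMinorOf (G.induce s)) : H.IsMinorOf G := by
  obtain ⟨B, hc, hd, ha⟩ := h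
  refine ⟨fun w => Subtype.val '' B w, fun w => ?_, fun a b hab => ?_, fun a b hab => ?_⟩
  · refine (hc w).map (H := G.induce (Subtype.val '' B w))
      ⟨fun u => ⟨u.1.1, u.1, u.2, rfl⟩, fun {a b} hab => hab⟩ ?_
    rintro ⟨_, u, hu, rfl⟩
    exact ⟨⟨u, hu⟩, rfl⟩
  · exact (Set.disjoint_image_iff Subtype.val_injective).2 (hd hab)
  · obtain ⟨u, hu, v, hv, huv⟩ := ha hab
    exact ⟨u, ⟨u, hu, rfl⟩, v, ⟨v, hv, rfl⟩, huv⟩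

/-- If `G'` arises from `G` by contracting the fibres of `π`, each of which is a clique of `G`,
then branch sets in `G'` pull back to branch sets in `G`. -/
lemma IsMinorOf.of_contraction {G : SimpleGraph V} {G' : SimpleGraph V'} {H : SimpleGraph W}
    (π : V → V') (hsurj : Function.Surjective π)
    (hfib : ∀ a b, π a = π b → a = b ∨ G.Adj a b)
    (hadj : ∀ a b, G'.Adj a b → ∃ u v, π u = a ∧ π v = b ∧ G.Adj u v)
    (h : H.IsMinorOf G') : H.IsMinorOf G := by
  obtain ⟨B, hc, hd, ha⟩ := h
  refine ⟨fun w => π ⁻¹' B w, fun w => ?_, fun a b hab => (hd hab).preimage π,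
    fun a b hab => ?_⟩
  · have key : ∀ x y : B w, (G'.induce (B w)).Reachable x y → ∀ u v : π ⁻¹' B w,
        π u = x → π v = y → (G.induce (π ⁻¹' B w)).Reachable u v := by
      intro x y hxy
      rw [reachable_iff_reflTransGen] at hxy
      have fib : ∀ u v : π ⁻¹' B w, π u = π v → (G.induce (π ⁻¹' B w)).Reachable u v := by
        intro u v huv
        rcases hfib _ _ huv with h | h
        · rw [Subtype.ext h]
        · exact Adj.reachable (show (G.induce _).Adj u v from h)
      induction hxy with
      | refl => exact fun u v hu hv => fib u v (hu.trans hv.symm)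
      | tail _ hbc ih =>
        intro u v hu hv
        obtain ⟨p, q, hp, hq, hpq⟩ := hadj _ _ hbc
        let p' : π ⁻¹' B w := ⟨p, by simp [hp]⟩
        let q' : π ⁻¹' B w := ⟨q, by simp [hq]⟩
        have h1 := ih u p' hu hp
        have h2 : (G.induce (π ⁻¹' B w)).Adj p' q' := hpq
        exact (h1.trans h2.reachable).trans (fib _ _ (hq.trans hv.symm))
    obtain ⟨⟨x, hx⟩⟩ := (hc w).nonempty
    obtain ⟨u, rfl⟩ := hsurj x
    rw [connected_iff_exists_forall_reachable]
    exact ⟨⟨u, hx⟩, fun v => key ⟨π u, hx⟩ ⟨π v, v.2⟩ ((hc w).preconnected _ _) _ _ rfl rfl⟩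
  · obtain ⟨x, hx, y, hy, hxy⟩ := ha hab
    obtain ⟨u, v, rfl, rfl, huv⟩ := hadj _ _ hxy
    exact ⟨u, hx, v, hy, huv⟩

/-! ### Greedy embedding of 2-degenerate graphs -/

/-- If `n + t ≤ 2δ + 2`, then any at most two vertices `P` have at least `t - |P|` common neighbours
outside `P`; hence one of them avoids any set `U ⊇ P` of at most `t - 1` vertices. -/
lemma exists_common_neighbor [Fintype V] (G : SimpleGraph V) (t : ℕ)
    (hV : 0 < Nat.card V)
    (hdeg : ∀ v, Nat.card V + t ≤ 2 * (G.neighborSet v).ncard + 2)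
    (P U : Set V) (hPU : P ⊆ U) (hP : P.ncard ≤ 2) (hU : U.ncard + 1 ≤ t) :
    ∃ z ∉ U, ∀ p ∈ P, G.Adj p z := by
  classical
  have hlt : ∀ v, (G.neighborSet v).ncard + 1 ≤ Nat.card V := by
    intro v
    have h1 : (insert v (G.neighborSet v)).ncard ≤ Nat.card V := Set.ncard_le_card _
    rwa [Set.ncard_insert_of_notMem (by simp)] at h1
  have key : ∀ C : Set V, Disjoint C P → t ≤ C.ncard + P.ncard → ∃ z ∈ C, z ∉ U := by
    intro C hCP hC
    by_contra! hcon
    have h1 : C ∪ P ⊆ U := Set.union_subset hcon hPU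
    have h2 := Set.ncard_le_ncard h1
    rw [Set.ncard_union_eq hCP] at h2
    omega
  obtain ⟨v₀⟩ := (Nat.card_pos_iff.1 hV).1
  have hP' : P.ncard = 0 ∨ P.ncard = 1 ∨ P.ncard = 2 := by omega
  rcases hP' with h | h | h
  · rw [Set.ncard_eq_zero] at h
    subst h
    obtain ⟨z, -, hz⟩ := key Set.univ (by simp) (by
      have := hlt v₀; have := hdeg v₀
      rw [Set.ncard_univ]; omega)
    exact ⟨z, hz, by simp⟩
  · obtain ⟨a, rfl⟩ := Set.ncard_eq_one.1 h
    obtain ⟨z, hz, hzU⟩ := key (G.neighborSet a) (by simp) (by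
      have := hlt a; have := hdeg a
      omega)
    exact ⟨z, hzU, by simpa using hz⟩
  · obtain ⟨a, b, hab, rfl⟩ := Set.ncard_eq_two.1 h
    obtain ⟨z, hz, hzU⟩ := key (G.neighborSet a ∩ G.neighborSet b)
      (by
        rw [Set.disjoint_right]
        rintro x (rfl | rfl) <;> simp) (by
      have := hdeg a; have := hdeg b
      have h3 := Set.ncard_union_add_ncard_inter (G.neighborSet a) (G.neighborSet b)
      have h4 : (G.neighborSet a ∪ G.neighborSet b).ncard ≤ Nat.card V := Set.ncard_le_card _
      omega)
    exact ⟨z, hzU, by simpa using hz⟩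

/-- Greedy embedding: a vertex with at most two earlier neighbours can always be placed. -/
lemma isMinorOf_of_dense [Fintype V] [Fintype W] (G : SimpleGraph V) (H : SimpleGraph W)
    (hH : H.TwoDegenerate) (hV : 0 < Nat.card V)
    (hdeg : ∀ v, Nat.card V + Nat.card W ≤ 2 * (G.neighborSet v).ncard + 2) :
    H.IsMinorOf G := by
  classical
  have key : ∀ (k : ℕ) (s : Set W), s.ncard = k → ∃ f : W → V, Set.InjOn f s ∧
      ∀ u ∈ s, ∀ v ∈ s, H.Adj u v → G.Adj (f u) (f v) := by
    obtain ⟨v₀⟩ := (Nat.card_pos_iff.1 hV).1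
    intro k
    induction k with
    | zero =>
      intro s hs
      rw [Set.ncard_eq_zero] at hs
      subst hs
      exact ⟨fun _ => v₀, by simp, by simp⟩
    | succ k ih =>
      intro s hs
      have hne : s.Nonempty := Set.nonempty_of_ncard_ne_zero (by omega)
      obtain ⟨v, hv, hv2⟩ := hH s hne
      obtain ⟨f, hf, hadj⟩ := ih (s \ {v}) (by rw [Set.ncard_sdiff_singleton_of_mem hv]; omega)
      have hsW : s.ncard ≤ Nat.card W := Set.ncard_le_card _
      obtain ⟨z, hz, hzP⟩ := exists_common_neighbor G (Nat.card W) hV hdeg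
        (f '' {u ∈ s | H.Adj v u}) (f '' (s \ {v}))
        (Set.image_mono fun u hu => ⟨hu.1, fun h => by
          have h2 := hu.2
          rw [Set.mem_singleton_iff.1 h] at h2
          exact H.loopless.irrefl _ h2⟩)
        ((Set.ncard_image_le).trans hv2)
        (by
          have : (f '' (s \ {v})).ncard ≤ (s \ {v}).ncard := Set.ncard_image_le
          rw [Set.ncard_sdiff_singleton_of_mem hv] at this
          omega)
      refine ⟨Function.update f v z, ?_, ?_⟩
      · intro a ha b hb hab
        by_cases hav : a = v <;> by_cases hbv : b = v
        · rw [hav, hbv]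
        · subst hav
          rw [Function.update_self, Function.update_of_ne hbv] at hab
          exact (hz ⟨b, ⟨hb, hbv⟩, hab.symm⟩).elim
        · subst hbv
          rw [Function.update_self, Function.update_of_ne hav] at hab
          exact (hz ⟨a, ⟨ha, hav⟩, hab⟩).elim
        · rw [Function.update_of_ne hav, Function.update_of_ne hbv] at hab
          exact hf ⟨ha, hav⟩ ⟨hb, hbv⟩ hab
      · intro a ha b hb hab
        by_cases hav : a = v <;> by_cases hbv : b = v
        · rw [hav, hbv] at hab
          exact (H.loopless.irrefl _ hab).elim
        · subst hav
          rw [Function.update_self, Function.update_of_ne hbv]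
          exact (hzP _ ⟨b, ⟨hb, hab⟩, rfl⟩).symm
        · subst hbv
          rw [Function.update_self, Function.update_of_ne hav]
          exact hzP _ ⟨a, ⟨ha, hab.symm⟩, rfl⟩
        · rw [Function.update_of_ne hav, Function.update_of_ne hbv]
          exact hadj a ⟨ha, hav⟩ b ⟨hb, hbv⟩ hab
  obtain ⟨f, hf, hadj⟩ := key _ Set.univ rfl
  exact isMinorOf_of_hom_injective ⟨f, fun {a b} hab => hadj a trivial b trivial hab⟩
    (Set.injOn_univ.1 hf)

/-! ### Edge counts and contraction -/

lemma sum_ncard_neighborSet [Fintype V] (G : SimpleGraph V) :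
    ∑ v, (G.neighborSet v).ncard = 2 * G.edgeSet.ncard := by
  classical
  have h := G.sum_degrees_eq_twice_card_edges
  rw [← G.coe_edgeFinset, Set.ncard_coe_finset, ← h]
  refine Finset.sum_congr rfl fun v _ => ?_
  rw [Set.ncard_eq_toFinset_card', Set.toFinset_card, card_neighborSet_eq_degree]

/-- Deleting `y` loses at most `deg y` edges. -/
lemma ncard_edgeSet_delete_vertex [Fintype V] (G : SimpleGraph V) (y : V) :
    G.edgeSet.ncard ≤ (G.induce {y}ᶜ).edgeSet.ncard + (G.neighborSet y).ncard := by
  classical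
  have h1 := G.card_edgeFinset_induce_compl_singleton y
  rw [G.card_edgeFinset_deleteIncidenceSet y] at h1
  rw [← G.coe_edgeFinset, Set.ncard_coe_finset, ← (G.induce {y}ᶜ).coe_edgeFinset,
    Set.ncard_coe_finset, Set.ncard_eq_toFinset_card', Set.toFinset_card,
    card_neighborSet_eq_degree]
  omega

/-- The graph obtained from `G` by contracting the edge `xy`: the vertex `y` is removed and its
neighbours become neighbours of `x`. -/
def contract (G : SimpleGraph V) (x y : V) : SimpleGraph ({y}ᶜ : Set V) where
  Adj a b := a ≠ b ∧ (G.Adj a b ∨ (a.1 = x ∧ G.Adj y b) ∨ (b.1 = x ∧ G.Adj y a))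
  symm := ⟨by
    rintro a b ⟨hab, h⟩
    refine ⟨hab.symm, ?_⟩
    rcases h with h | h | h
    · exact Or.inl h.symm
    · exact Or.inr (Or.inr h)
    · exact Or.inr (Or.inl h)⟩
  loopless := ⟨fun a h => h.1 rfl⟩

lemma IsMinorOf.of_contract {G : SimpleGraph V} {H : SimpleGraph W} {x y : V} (hxy : G.Adj x y)
    (h : H.IsMinorOf (contract G x y)) : H.IsMinorOf G := by
  classical
  let x' : ({y}ᶜ : Set V) := ⟨x, hxy.ne⟩
  let π : V → ({y}ᶜ : Set V) := fun v => if hv : v = y then x' else ⟨v, hv⟩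
  have hy : π y = x' := by simp [π]
  have hv : ∀ v (hv : v ≠ y), π v = ⟨v, hv⟩ := fun v hv => by simp [π, hv]
  refine IsMinorOf.of_contraction π ?_ ?_ ?_ h
  · rintro ⟨v, hvy⟩
    exact ⟨v, hv v hvy⟩
  · intro a b hab
    by_cases ha : a = y <;> by_cases hb : b = y
    · exact Or.inl (ha.trans hb.symm)
    · subst ha
      rw [hy, hv b hb] at hab
      have : x = b := congrArg Subtype.val hab
      subst this
      exact Or.inr hxy.symm
    · subst hb
      rw [hy, hv a ha] at hab
      have : a = x := congrArg Subtype.val hab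
      subst this
      exact Or.inr hxy
    · rw [hv a ha, hv b hb] at hab
      exact Or.inl (congrArg Subtype.val hab)
  · rintro ⟨a, ha⟩ ⟨b, hb⟩ ⟨-, hab | ⟨rfl, hab⟩ | ⟨rfl, hab⟩⟩
    · exact ⟨a, b, hv a ha, hv b hb, hab⟩
    · exact ⟨y, b, hy, hv b hb, hab⟩
    · exact ⟨a, y, hv a ha, hy, hab.symm⟩

/-- Contracting the edge `xy` loses the edge itself and one edge per common neighbour. -/
lemma ncard_edgeSet_contract [Fintype V] (G : SimpleGraph V) {x y : V} (hxy : G.Adj x y) :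
    G.edgeSet.ncard ≤
      (contract G x y).edgeSet.ncard + 1 + (G.neighborSet x ∩ G.neighborSet y).ncard := by
  classical
  have h0 := ncard_edgeSet_delete_vertex G y
  let x' : ({y}ᶜ : Set V) := ⟨x, hxy.ne⟩
  -- the vertices that become adjacent to `x` only through the contraction
  let A : Set ({y}ᶜ : Set V) := {z | G.Adj y z ∧ ¬ G.Adj x z ∧ z ≠ x'}
  let E : Set (Sym2 ({y}ᶜ : Set V)) := (fun z => s(x', z)) '' A
  have hE : E.ncard = A.ncard := by
    refine Set.ncard_image_of_injective _ fun a b hab => ?_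
    exact Sym2.congr_right.1 hab
  have hsub : (G.induce {y}ᶜ).edgeSet ∪ E ⊆ (contract G x y).edgeSet := by
    rintro e (he | ⟨z, hz, rfl⟩)
    · induction e with
      | h a b =>
        have he' : (G.induce {y}ᶜ).Adj a b := he
        exact ⟨he'.ne, Or.inl he'⟩
    · exact ⟨hz.2.2.symm, Or.inr (Or.inl ⟨rfl, hz.1⟩)⟩
  have hdisj : Disjoint (G.induce {y}ᶜ).edgeSet E := by
    rw [Set.disjoint_right]
    rintro _ ⟨z, hz, rfl⟩ he
    exact hz.2.1 he
  have h1 := Set.ncard_le_ncard hsub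
  rw [Set.ncard_union_eq hdisj, hE] at h1
  have h2 : G.neighborSet y ⊆
      (Subtype.val '' A ∪ {x}) ∪ (G.neighborSet x ∩ G.neighborSet y) := by
    intro z hz
    have hz' : G.Adj y z := hz
    by_cases hx : G.Adj x z
    · exact Or.inr ⟨hx, hz⟩
    · by_cases hzx : z = x
      · exact Or.inl (Or.inr hzx)
      · exact Or.inl (Or.inl ⟨⟨z, hz'.ne'⟩,
          ⟨hz', hx, fun h => hzx (congrArg Subtype.val h)⟩, rfl⟩)
  have h3 := Set.ncard_le_ncard h2
  have h4 := Set.ncard_union_le (Subtype.val '' A ∪ {x}) (G.neighborSet x ∩ G.neighborSet y)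
  have h5 := Set.ncard_union_le (Subtype.val '' A) {x}
  rw [Set.ncard_image_of_injective _ Subtype.val_injective, Set.ncard_singleton] at h5
  omega

lemma ncard_neighborSet_induce [Fintype V] (G : SimpleGraph V) (v : V) (u : G.neighborSet v) :
    ((G.induce (G.neighborSet v)).neighborSet u).ncard =
      (G.neighborSet v ∩ G.neighborSet u).ncard := by
  rw [← Set.ncard_image_of_injective _ Subtype.val_injective]
  congr 1
  ext z
  constructor
  · rintro ⟨w, hw, rfl⟩
    exact ⟨w.2, hw⟩
  · rintro ⟨h1, h2⟩
    exact ⟨⟨z, h1⟩, h2, rfl⟩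

/-- Contract edges as long as at least `f n` edges remain on `n` vertices. Either exactly `N`
vertices are left, or every edge lies in many triangles, in which case the neighbourhood of a
vertex of minimum degree is a small graph of large minimum degree. In `hdense`, the graph `G` is
that neighbourhood, and `n + 1` and `e` are the numbers of vertices and edges of the graph
containing it. -/
lemma contraction_core (H : SimpleGraph W) (N : ℕ) (hN : 1 ≤ N) (f : ℕ → ℝ)
    (hf : ∀ n, N ≤ n → f n ≤ f (n + 1))
    (hterm : ∀ (V : Type) [Fintype V] (G : SimpleGraph V), Nat.card V = N →
      f N ≤ G.edgeSet.ncard → H.IsMinorOf G)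
    (hdense : ∀ (V : Type) [Fintype V] (G : SimpleGraph V) (n : ℕ) (e : ℝ), N ≤ n →
      0 < Nat.card V → f (n + 1) ≤ e → Nat.card V * ((n : ℝ) + 1) ≤ 2 * e →
      (∀ v, e - f n < (G.neighborSet v).ncard + 1) → H.IsMinorOf G)
    (V : Type) [Fintype V] (G : SimpleGraph V) (hV : N ≤ Nat.card V)
    (hG : f (Nat.card V) ≤ G.edgeSet.ncard) : H.IsMinorOf G := by
  classical
  obtain ⟨k, hk⟩ := Nat.exists_eq_add_of_le hV
  induction k generalizing V with
  | zero => exact hterm V G hk (by rwa [hk] at hG)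
  | succ k ih =>
    have hcard : ∀ y : V, Nat.card ({y}ᶜ : Set V) = N + k := by
      intro y
      rw [Nat.card_coe_set_eq, Set.ncard_compl, Set.ncard_singleton]
      omega
    rw [hk] at hG
    by_cases hiso : ∃ y, (G.neighborSet y).ncard = 0
    · obtain ⟨y, hy⟩ := hiso
      refine IsMinorOf.induce (s := {y}ᶜ) (ih _ _ (by rw [hcard]; omega) ?_ (hcard y))
      have h1 := ncard_edgeSet_delete_vertex G y
      rw [hy, add_zero] at h1
      rw [hcard]
      exact (hf _ (by omega)).trans (hG.trans (by exact_mod_cast h1))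
    by_cases hcon : ∃ x y, G.Adj x y ∧ f (N + k) ≤ (contract G x y).edgeSet.ncard
    · obtain ⟨x, y, hxy, h⟩ := hcon
      exact IsMinorOf.of_contract hxy
        (ih _ _ (by rw [hcard]; omega) (by rw [hcard]; exact h) (hcard y))
    push Not at hiso hcon
    have hne : Nonempty V := (Nat.card_pos_iff.1 (by omega)).1
    obtain ⟨v, -, hv⟩ := Finset.exists_min_image Finset.univ
      (fun v => (G.neighborSet v).ncard) Finset.univ_nonempty
    refine IsMinorOf.induce (s := G.neighborSet v)
      (hdense _ _ (N + k) G.edgeSet.ncard (by omega) ?_ hG ?_ ?_)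
    · rw [Nat.card_coe_set_eq]
      exact Nat.pos_of_ne_zero (hiso v)
    · have h1 : ∑ _u : V, (G.neighborSet v).ncard ≤ ∑ u : V, (G.neighborSet u).ncard :=
        Finset.sum_le_sum hv
      rw [sum_ncard_neighborSet, Finset.sum_const, smul_eq_mul, Finset.card_univ,
        ← Nat.card_eq_fintype_card, hk] at h1
      rw [Nat.card_coe_set_eq]
      have h2 : (G.neighborSet v).ncard * (N + k + 1) ≤ 2 * G.edgeSet.ncard := by
        linarith
      exact_mod_cast h2
    · intro u
      rw [ncard_neighborSet_induce]
      have h1 := hcon v u u.2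
      have h2 := ncard_edgeSet_contract G u.2
      have h3 : (G.edgeSet.ncard : ℝ) ≤ (contract G v u).edgeSet.ncard + 1
        + (G.neighborSet v ∩ G.neighborSet u).ncard := by exact_mod_cast h2
      linarith

/-! ### Density increment and the main argument -/

/-- The edge threshold used below `2D` vertices: its density `f(n)/n` grows like `(s/2) log n`, and
`f(s + 1)` is the number of edges of the complete graph on `s + 1` vertices. -/
noncomputable def logThreshold (s : ℝ) (n : ℕ) : ℝ :=
  n * (s / 2 * (1 + Real.log (((n : ℝ) - 1) / s)))

lemma logThreshold_mono {s : ℝ} (hs : 0 < s) (n : ℕ) (hn : s + 1 ≤ n) :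
    logThreshold s n ≤ logThreshold s (n + 1) := by
  have h1 : 1 ≤ ((n : ℝ) - 1) / s := by rw [le_div_iff₀ hs]; linarith
  have h2 : ((n : ℝ) - 1) / s ≤ (((n + 1 : ℕ) : ℝ) - 1) / s := by
    push_cast; gcongr; linarith
  have h3 := Real.log_nonneg h1
  have h4 := Real.log_le_log (by linarith) h2
  unfold logThreshold
  gcongr
  linarith

/-- The density increment: `n (f(n+1)/(n+1) - f(n)/n) ≥ s/2`. -/
lemma logThreshold_increment {s : ℝ} (hs : 0 < s) (n : ℕ) (hn : s + 1 ≤ n) :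
    2 * logThreshold s n + s ≤ n * (s * (1 + Real.log (n / s))) := by
  have hn1 : 0 < (n : ℝ) - 1 := by linarith
  have hn0 : 0 < (n : ℝ) := by linarith
  have h1 : Real.log (((n : ℝ) - 1) / s) ≤ Real.log (n / s) - 1 / n := by
    rw [Real.log_div hn1.ne' hs.ne', Real.log_div hn0.ne' hs.ne']
    have h2 := Real.log_le_sub_one_of_pos (div_pos hn1 hn0)
    rw [Real.log_div hn1.ne' hn0.ne'] at h2
    have h3 : ((n : ℝ) - 1) / n - 1 = - (1 / n) := by field_simp; ring
    linarith
  have h2 : (n : ℝ) * s * (Real.log (((n : ℝ) - 1) / s)) ≤ n * s * (Real.log (n / s) - 1 / n) :=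
    mul_le_mul_of_nonneg_left h1 (by positivity)
  have h3 : (n : ℝ) * s * (Real.log (n / s) - 1 / n) = n * s * Real.log (n / s) - s := by
    field_simp
  unfold logThreshold
  linarith

/-- The number of edges given by `logThreshold (t - 1)` forces `H`: contracting above the threshold
ends either in the complete graph on `t` vertices, or in a neighbourhood `K` with
`|K| + t ≤ 2δ(K) + 2`, where the greedy embedding applies. -/
lemma isMinorOf_of_edges [Fintype W] (H : SimpleGraph W) (hH : H.TwoDegenerate)
    (hW : 2 ≤ Nat.card W) (V : Type) [Fintype V] (G : SimpleGraph V)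
    (hV : Nat.card W ≤ Nat.card V)
    (hG : logThreshold ((Nat.card W : ℝ) - 1) (Nat.card V) ≤ G.edgeSet.ncard) :
    H.IsMinorOf G := by
  set t := Nat.card W with ht
  have ht2 : (2 : ℝ) ≤ t := by exact_mod_cast hW
  have hs : (0 : ℝ) < (t : ℝ) - 1 := by linarith
  have hst : ∀ n : ℕ, t ≤ n → (t : ℝ) - 1 + 1 ≤ n := fun n hn => by
    have : (t : ℝ) ≤ n := by exact_mod_cast hn
    linarith
  refine contraction_core H t (by omega) (logThreshold ((t : ℝ) - 1))
    (fun n hn => logThreshold_mono hs n (hst n hn)) ?_ ?_ V G hV hG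
  · -- on `t` vertices the threshold forces a complete graph
    intro V _ G hV hG
    have h1 : (t : ℝ) * (t - 1) ≤ 2 * G.edgeSet.ncard := by
      unfold logThreshold at hG
      rw [div_self hs.ne', Real.log_one] at hG
      linarith
    have hle : ∀ v, (G.neighborSet v).ncard ≤ t - 1 := by
      intro v
      have h1 : (insert v (G.neighborSet v)).ncard ≤ Nat.card V := Set.ncard_le_card _
      rw [Set.ncard_insert_of_notMem (by simp)] at h1
      omega
    refine isMinorOf_of_dense G H hH (by omega) fun v => ?_
    by_contra! hlt
    have h2 : ∑ u : V, (G.neighborSet u).ncard < ∑ _u : V, (t - 1) :=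
      Finset.sum_lt_sum (fun u _ => hle u) ⟨v, Finset.mem_univ v, by omega⟩
    rw [sum_ncard_neighborSet, Finset.sum_const, smul_eq_mul, Finset.card_univ,
      ← Nat.card_eq_fintype_card, hV] at h2
    have h3 : (2 * G.edgeSet.ncard : ℝ) < t * ((t - 1 : ℕ) : ℝ) := by exact_mod_cast h2
    rw [Nat.cast_sub (by omega), Nat.cast_one] at h3
    linarith
  · intro V _ G n e hn hV he hc hdeg
    refine isMinorOf_of_dense G H hH hV fun v => ?_
    have hinc := logThreshold_increment hs n (hst n hn)
    have hd := hdeg v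
    have hn0 : (0 : ℝ) < (n : ℝ) + 1 := by positivity
    -- `q` is the average degree `2e/(n+1)` of the graph in which `V` is a neighbourhood
    obtain ⟨q, hq⟩ : ∃ q : ℝ, q * (n + 1) = 2 * e := ⟨2 * e / (n + 1), by field_simp⟩
    have hcq : (Nat.card V : ℝ) ≤ q := by
      rw [← hq] at hc
      exact le_of_mul_le_mul_right hc hn0
    have hqs : ((t : ℝ) - 1) * (1 + Real.log (n / ((t : ℝ) - 1))) ≤ q := by
      unfold logThreshold at he
      push_cast at he
      rw [add_sub_cancel_right] at he
      refine le_of_mul_le_mul_right ?_ hn0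
      linarith
    have h1 := mul_le_mul_of_nonneg_left hqs (Nat.cast_nonneg (α := ℝ) n)
    have h2 : (Nat.card V : ℝ) + t < 2 * (G.neighborSet v).ncard + 2 + 1 := by linarith
    have h3 : Nat.card V + t < 2 * (G.neighborSet v).ncard + 2 + 1 := by exact_mod_cast h2
    omega

/-- A graph on at most `2D` vertices with minimum degree above `D - 1` contains `H`, provided
`D ≥ 3.4645 t`. -/
lemma isMinorOf_of_minDegree [Fintype W] (H : SimpleGraph W) (hH : H.TwoDegenerate)
    (hW : 2 ≤ Nat.card W) (D : ℝ) (hD : 3.4645 * (Nat.card W : ℝ) ≤ D)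
    (V : Type) [Fintype V] (G : SimpleGraph V) (hV0 : 0 < Nat.card V)
    (hV : (Nat.card V : ℝ) ≤ 2 * D) (hdeg : ∀ v, D < (G.neighborSet v).ncard + 1) :
    H.IsMinorOf G := by
  obtain ⟨v₀⟩ := (Nat.card_pos_iff.1 hV0).1
  have hW' : (2 : ℝ) ≤ Nat.card W := by exact_mod_cast hW
  have hDV : D < Nat.card V := by
    have h1 : (insert v₀ (G.neighborSet v₀)).ncard ≤ Nat.card V := Set.ncard_le_card _
    rw [Set.ncard_insert_of_notMem (by simp)] at h1
    have h2 : ((G.neighborSet v₀).ncard : ℝ) + 1 ≤ Nat.card V := by exact_mod_cast h1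
    exact (hdeg v₀).trans_le h2
  have hWV : (Nat.card W : ℝ) ≤ Nat.card V := by linarith
  refine isMinorOf_of_edges H hH hW V G (by exact_mod_cast hWV) ?_
  have he : (Nat.card V : ℝ) * (D - 1) ≤ 2 * G.edgeSet.ncard := by
    have h1 : ∑ _u : V, (D - 1) ≤ ∑ u : V, ((G.neighborSet u).ncard : ℝ) :=
      Finset.sum_le_sum fun u _ => by linarith [hdeg u]
    rw [Finset.sum_const, nsmul_eq_mul, Finset.card_univ, ← Nat.card_eq_fintype_card] at h1
    have h2 : ∑ u : V, ((G.neighborSet u).ncard : ℝ) = 2 * G.edgeSet.ncard := by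
      exact_mod_cast sum_ncard_neighborSet G
    linarith
  set s : ℝ := (Nat.card W : ℝ) - 1 with hs
  set c : ℝ := (Nat.card V : ℝ) with hc
  have hs0 : 0 < s := by linarith
  -- the tangent line to `log` at `4` is accurate enough for the constant `3.4645`
  have hlog : s * (1 + Real.log ((c - 1) / s)) ≤ D - 1 := by
    have hx : 0 < (c - 1) / s := div_pos (by linarith) hs0
    have h1 := Real.log_le_sub_one_of_pos (div_pos hx (by norm_num : (0 : ℝ) < 4))
    rw [Real.log_div hx.ne' (by norm_num), show (4 : ℝ) = 2 ^ 2 by norm_num, Real.log_pow] at h1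
    have h2 := Real.log_two_lt_d9
    have h3 : 1 + Real.log ((c - 1) / s) ≤ (c - 1) / s / 4 + 1.3864 := by
      push_cast at h1
      linarith
    have h4 := mul_le_mul_of_nonneg_left h3 hs0.le
    have h5 : s * ((c - 1) / s / 4 + 1.3864) = (c - 1) / 4 + 1.3864 * s := by field_simp
    linarith
  have h1 := mul_le_mul_of_nonneg_left hlog (Nat.cast_nonneg (α := ℝ) (Nat.card V))
  unfold logThreshold
  linarith

end TwoDegMinor

/-- Every graph `G` with average degree at least `6.929t` contains every 2-degenerate
graph `H` on `t ≥ 1` vertices as a minor. -/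
theorem two_degenerate_minor {V : Type} [Fintype V] [Nonempty V] (G : SimpleGraph V)
    {W : Type} [Fintype W] [Nonempty W] (H : SimpleGraph W) (hH : H.TwoDegenerate)
    (havg : 6.929 * (Nat.card W : ℝ) ≤ G.averageDegree) :
    H.IsMinorOf G := by
  have hV : 0 < Nat.card V := Nat.card_pos
  have hV' : (0 : ℝ) < Nat.card V := by exact_mod_cast hV
  have hW : 0 < Nat.card W := Nat.card_pos
  rcases Nat.lt_or_ge (Nat.card W) 2 with hW1 | hW2
  · have hsub : Subsingleton W := (Nat.card_eq_one_iff_unique.1 (by omega)).1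
    obtain ⟨v₀⟩ := ‹Nonempty V›
    exact TwoDegMinor.isMinorOf_of_hom_injective
      ⟨fun _ => v₀, fun {a b} hab => (hab.ne (Subsingleton.elim a b)).elim⟩
      (Function.injective_of_subsingleton _)
  have hD0 : (0 : ℝ) < 3.4645 * Nat.card W := by positivity
  refine TwoDegMinor.contraction_core H 1 le_rfl (fun n => 3.4645 * (Nat.card W : ℝ) * n)
    ?_ ?_ ?_ V G hV ?_
  · intro n _
    push_cast
    linarith
  · intro V _ G hV hG
    have hsub : Subsingleton V := (Nat.card_eq_one_iff_unique.1 hV).1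
    have : G = ⊥ := Subsingleton.elim _ _
    subst this
    rw [edgeSet_bot, Set.ncard_empty] at hG
    push_cast at hG
    linarith
  · intro V _ G n e _ hV he hc hdeg
    have hn0 : (0 : ℝ) < (n : ℝ) + 1 := by positivity
    -- `D` is the actual edge density, which may exceed the threshold `3.4645 t`
    obtain ⟨D, hD⟩ : ∃ D : ℝ, D * (n + 1) = e := ⟨e / (n + 1), by field_simp⟩
    push_cast at he
    have hDle : 3.4645 * (Nat.card W : ℝ) ≤ D := by
      rw [← hD] at he
      exact le_of_mul_le_mul_right he hn0
    refine TwoDegMinor.isMinorOf_of_minDegree H hH hW2 D hDle V G hV ?_ fun v => ?_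
    · refine le_of_mul_le_mul_right ?_ hn0
      linarith
    · have h1 := mul_le_mul_of_nonneg_right hDle (Nat.cast_nonneg (α := ℝ) n)
      have h2 := hdeg v
      linarith
  · unfold SimpleGraph.averageDegree at havg
    rw [le_div_iff₀ hV'] at havg
    show 3.4645 * (Nat.card W : ℝ) * (Nat.card V : ℝ) ≤ _
    linarith
end

section
/- Let H be a simple graph with t vertices and q edges. Then every simple graph G with average degree at least 6.929·(t + q) contains H as a minor. -/
/-!
Write `s = t + q`, where `H` has `t` vertices and `q` edges. The argument has three layers.

* If every degree of a graph `G` on `n` vertices satisfies `2 deg v ≥ n + s - 2`, then two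
  nonadjacent vertices have at least `s` common neighbours. Place the vertices of `H`
  injectively in `G`, and subdivide each edge of `H` whose ends are placed on a nonadjacent pair by
  a common neighbour outside the image, all of these distinct. Each such pair has at least
  `q` candidates, so Hall's theorem provides the choice (`isMinorOf_of_minDegree`).
* If `G` has `n` vertices and more than `(n² + (6s - 9) n) / 8` edges, then `H` is a minor of `G`
  (`isMinorOf_of_dense`). Suppose that some vertex `x` has degree `d` with `2d < n + s - 2`. If each
  edge `xy` lies in at least `(d + s - 2) / 2` triangles, the first layer applies to the
  neighbourhood of `x`. Otherwise contracting some `xy` destroys at most `(n + 3s - 5) / 4` edges,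
  which is exactly the decrease of the bound from `n` to `n - 1`.
* If `G` has `m ≥ D n` edges, where `D = 6929 s / 2000`, keep just `⌈D n⌉` of them. An edge in at most
  `D - 1` triangles can be contracted. If no edge at a vertex `x` of minimum degree is of this kind,
  the neighbourhood of `x` has fewer than `2D + 1` vertices and minimum degree more than `D - 1`,
  and it satisfies the hypothesis of the second layer (`isMinorOf_of_edges`).

Isolated vertices are deleted in the last two layers.
-/

open SimpleGraph

namespace LinearMinor

open Finset

universe u

/-! ### Building minor models -/

/-- A set with a vertex `c` adjacent to all its other vertices is connected. -/
lemma connected_of_center {V : Type*} (G : SimpleGraph V) (B : Set V) (c : V) (hc : c ∈ B)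
    (h : ∀ v ∈ B, v ≠ c → G.Adj c v) : (G.induce B).Connected := by
  rw [connected_iff_exists_forall_reachable]
  refine ⟨⟨c, hc⟩, fun ⟨v, hv⟩ => ?_⟩
  by_cases hvc : v = c
  · subst hvc; rfl
  · exact SimpleGraph.Adj.reachable (by simpa using h v hv hvc)

/-- The minor relation is transitive: the branch set of `w` is the union of the branch sets in `G` of
the vertices of `G'` that form the branch set of `w` there. -/
lemma trans {U V W : Type*} {H : SimpleGraph W} {G' : SimpleGraph U} {G : SimpleGraph V}
    (h₁ : H.IsMinorOf G') (h₂ : G'.IsMinorOf G) : H.IsMinorOf G := by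
  obtain ⟨A, hA, hAd, hAe⟩ := h₁
  obtain ⟨B, hB, hBd, hBe⟩ := h₂
  refine ⟨fun w => ⋃ u ∈ A w, B u, fun w => ?_, fun w₁ w₂ hw => ?_, fun w₁ w₂ hw => ?_⟩
  · have sub : ∀ u ∈ A w, B u ⊆ ⋃ u ∈ A w, B u := fun u hu => Set.subset_biUnion_of_mem hu
    -- two vertices of one branch set `B u` are joined inside the union
    have inner : ∀ u (hu : u ∈ A w) (a b : V) (ha : a ∈ B u) (hb : b ∈ B u),
        (G.induce (⋃ u ∈ A w, B u)).Reachable ⟨a, sub u hu ha⟩ ⟨b, sub u hu hb⟩ := by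
      intro u hu a b ha hb
      have := (hB u).preconnected ⟨a, ha⟩ ⟨b, hb⟩
      exact this.map (G.induceHomOfLE (sub u hu)).toHom
    have outer : ∀ (u₁ u₂ : A w), (G'.induce (A w)).Reachable u₁ u₂ →
        ∀ (a b : V) (ha : a ∈ B u₁) (hb : b ∈ B u₂),
        (G.induce (⋃ u ∈ A w, B u)).Reachable ⟨a, sub u₁ u₁.2 ha⟩ ⟨b, sub u₂ u₂.2 hb⟩ := by
      rintro u₁ u₂ ⟨p⟩
      induction p with
      | nil => intro a b ha hb; exact inner _ (Subtype.prop _) a b ha hb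
      | @cons x y z hxy p ih =>
        intro a b ha hb
        obtain ⟨v₁, h1, v₂, h2, hadj⟩ := hBe (show G'.Adj x y from hxy)
        have s1 := inner x x.2 a v₁ ha h1
        have s2 : (G.induce (⋃ u ∈ A w, B u)).Adj ⟨v₁, sub x x.2 h1⟩ ⟨v₂, sub y y.2 h2⟩ := hadj
        exact (s1.trans s2.reachable).trans (ih v₂ b h2 hb)
    obtain ⟨u₀, hu₀⟩ := (hA w).nonempty
    obtain ⟨v₀, hv₀⟩ := (hB u₀).nonempty
    rw [connected_iff_exists_forall_reachable]
    refine ⟨⟨v₀, sub u₀ hu₀ hv₀⟩, fun ⟨v, hv⟩ => ?_⟩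
    obtain ⟨u, hu, hvu⟩ := Set.mem_iUnion₂.1 hv
    exact outer ⟨u₀, hu₀⟩ ⟨u, hu⟩ ((hA w).preconnected _ _) v₀ v hv₀ hvu
  · refine Set.disjoint_left.2 ?_
    intro v hv hv'
    obtain ⟨u, hu, hvu⟩ := Set.mem_iUnion₂.1 hv
    obtain ⟨u', hu', hvu'⟩ := Set.mem_iUnion₂.1 hv'
    by_cases huu : u = u'
    · subst huu; exact Set.disjoint_left.1 (hAd hw) hu hu'
    · exact Set.disjoint_left.1 (hBd huu) hvu hvu'
  · obtain ⟨u₁, h1, u₂, h2, hu⟩ := hAe hw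
    obtain ⟨v₁, k1, v₂, k2, hv⟩ := hBe hu
    exact ⟨v₁, Set.mem_biUnion h1 k1, v₂, Set.mem_biUnion h2 k2, hv⟩

lemma of_injective {U V : Type*} {G' : SimpleGraph U} {G : SimpleGraph V} (f : U → V)
    (hf : Function.Injective f) (h : ∀ a b, G'.Adj a b → G.Adj (f a) (f b)) :
    G'.IsMinorOf G := by
  refine ⟨fun u => {f u}, fun u => ?_, fun a b hab => ?_, fun a b hab => ?_⟩
  · exact connected_of_center G _ (f u) rfl (fun v hv hvc => absurd hv hvc)
  · simpa using fun h => hab (hf h)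
  · exact ⟨f a, rfl, f b, rfl, h a b hab⟩

lemma induce_isMinorOf {V : Type*} (G : SimpleGraph V) (s : Set V) :
    (G.induce s).IsMinorOf G :=
  of_injective Subtype.val Subtype.val_injective (fun _ _ h => h)

/-- `G` with all edges from `x` to the neighbours of `y` added. -/
def absorb {V : Type*} (G : SimpleGraph V) (x y : V) : SimpleGraph V where
  Adj a b := a ≠ b ∧ (G.Adj a b ∨ (a = x ∧ G.Adj y b) ∨ (b = x ∧ G.Adj y a))
  symm := ⟨by
    rintro a b ⟨h, h'⟩
    refine ⟨h.symm, ?_⟩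
    rcases h' with h' | h' | h'
    · exact Or.inl h'.symm
    · exact Or.inr (Or.inr h')
    · exact Or.inr (Or.inl h')⟩
  loopless := ⟨fun a h => h.1 rfl⟩

/-- The contraction `G / xy`, on the vertex set `V \ {y}`; the vertex `x` takes over the
neighbours of `y`. -/
abbrev contract {V : Type*} (G : SimpleGraph V) (x y : V) :
    SimpleGraph ({y}ᶜ : Set V) := (absorb G x y).induce {y}ᶜ

lemma contract_isMinorOf {V : Type*} (G : SimpleGraph V) {x y : V} (hxy : G.Adj x y) :
    (contract G x y).IsMinorOf G := by
  refine ⟨fun v => {u | u = v ∨ ((v : V) = x ∧ u = y)}, fun v => ?_, fun a b hab => ?_,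
    fun a b hab => ?_⟩
  · refine connected_of_center G _ v (Or.inl rfl) ?_
    rintro u (hu | ⟨hv, rfl⟩) huv
    · exact absurd hu huv
    · rwa [hv]
  · have hab' : (a : V) ≠ b := fun h => hab (Subtype.ext h)
    refine Set.disjoint_left.2 ?_
    have ha : (a : V) ≠ y := a.2
    have hb : (b : V) ≠ y := b.2
    rintro u (h | ⟨h, h'⟩) (k | ⟨k, k'⟩)
    · exact hab' (h.symm.trans k)
    · exact ha (h.symm.trans k')
    · exact hb (k.symm.trans h')
    · exact hab' (h.trans k.symm)
  · obtain ⟨-, h | ⟨h, h'⟩ | ⟨h, h'⟩⟩ := hab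
    · exact ⟨a, Or.inl rfl, b, Or.inl rfl, h⟩
    · exact ⟨y, Or.inr ⟨h, rfl⟩, b, Or.inl rfl, h'⟩
    · exact ⟨a, Or.inl rfl, y, Or.inr ⟨h, rfl⟩, h'.symm⟩

/-! ### Counting edges -/

lemma sum_ncard_neighborSet {V : Type*} [Fintype V] (G : SimpleGraph V) :
    ∑ v, (G.neighborSet v).ncard = 2 * G.edgeSet.ncard := by
  classical
  have := G.sum_degrees_eq_twice_card_edges
  rw [Set.ncard_eq_toFinset_card']
  rw [edgeFinset] at this
  rw [← this]
  refine Finset.sum_congr rfl fun v _ => ?_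
  rw [Set.ncard_eq_toFinset_card']
  rfl

lemma ncard_edgeSet_induce_compl {V : Type*} [Finite V] (G : SimpleGraph V) (y : V) :
    (G.induce {y}ᶜ).edgeSet.ncard + (G.neighborSet y).ncard = G.edgeSet.ncard := by
  classical
  have := Fintype.ofFinite V
  have h1 := G.card_edgeFinset_induce_compl_singleton y
  have h2 := G.card_edgeFinset_deleteIncidenceSet y
  have h3 := G.degree_le_card_edgeFinset y
  simp only [edgeFinset, degree, neighborFinset] at h1 h2 h3
  rw [Set.ncard_eq_toFinset_card', Set.ncard_eq_toFinset_card', Set.ncard_eq_toFinset_card', h1,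
    h2]
  omega

/-- Contracting `xy` destroys only the edge `xy` and one edge for each triangle on it. In `absorb G x y`
the vertex `y` has the same neighbours as in `G`, while `x` gains the neighbours of `y` that
are not adjacent to it; deleting `y` then gives the count. -/
lemma ncard_edgeSet_contract {V : Type*} [Finite V] (G : SimpleGraph V) (x y : V) :
    G.edgeSet.ncard ≤
      (contract G x y).edgeSet.ncard + (G.commonNeighbors x y).ncard + 1 := by
  have h1 := ncard_edgeSet_induce_compl (absorb G x y) y
  have hN : (absorb G x y).neighborSet y = G.neighborSet y := by
    ext b
    simp only [mem_neighborSet, absorb]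
    constructor
    · rintro ⟨-, h | ⟨-, h⟩ | ⟨-, h⟩⟩
      · exact h
      · exact h
      · exact absurd h (G.irrefl)
    · exact fun h => ⟨h.ne, Or.inl h⟩
  rw [hN] at h1
  -- the neighbours of `y` that give rise to new edges at `x`
  set S : Set V := {v | G.Adj y v ∧ v ≠ x ∧ ¬ G.Adj x v} with hS
  have h2 : (G.neighborSet y).ncard ≤ S.ncard + (G.commonNeighbors x y).ncard + 1 := by
    have : G.neighborSet y ⊆ (S ∪ G.commonNeighbors x y) ∪ {x} := by
      intro v hv
      simp only [mem_neighborSet, hS, Set.mem_union, Set.mem_ofPred_eq, mem_commonNeighbors,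
        Set.mem_singleton_iff] at hv ⊢
      tauto
    have := Set.ncard_le_ncard this
    have k1 := Set.ncard_union_le (S ∪ G.commonNeighbors x y) {x}
    have k2 := Set.ncard_union_le S (G.commonNeighbors x y)
    rw [Set.ncard_singleton] at k1
    omega
  have h3 : G.edgeSet.ncard + S.ncard ≤ (absorb G x y).edgeSet.ncard := by
    have hinj : Function.Injective (fun v => s(x, v)) := fun a b h => Sym2.congr_right.1 h
    rw [← Set.ncard_image_of_injective S hinj, ← Set.ncard_union_eq]
    · refine Set.ncard_le_ncard ?_
      rintro e (he | ⟨v, ⟨hv, hvx, -⟩, rfl⟩)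
      · induction e with
        | _ a b => exact ⟨G.ne_of_adj he, Or.inl he⟩
      · exact ⟨hvx.symm, Or.inr (Or.inl ⟨rfl, hv⟩)⟩
    · rw [Set.disjoint_left]
      rintro e he ⟨v, ⟨-, -, hv⟩, rfl⟩
      exact hv he
  show _ ≤ ((absorb G x y).induce {y}ᶜ).edgeSet.ncard + _ + 1
  omega

lemma card_compl_singleton {V : Type*} [Finite V] (y : V) :
    Nat.card ({y}ᶜ : Set V) + 1 = Nat.card V := by
  rw [Nat.card_coe_set_eq, add_comm, ← Set.ncard_singleton y]
  exact Set.ncard_add_ncard_compl _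

lemma ncard_neighborSet_induce {V : Type*} (G : SimpleGraph V) (x : V) (y : G.neighborSet x) :
    ((G.induce (G.neighborSet x)).neighborSet y).ncard = (G.commonNeighbors x y).ncard := by
  rw [← Set.ncard_image_of_injective _ Subtype.val_injective]
  congr 1
  ext v
  simp only [Set.mem_image, mem_neighborSet, comap_adj, Subtype.exists, mem_commonNeighbors]
  constructor
  · rintro ⟨a, ha, h, rfl⟩; exact ⟨ha, h⟩
  · rintro ⟨ha, h⟩; exact ⟨v, ha, h, rfl⟩

/-! ### Dense graphs -/

/-- A graph of large minimum degree contains a subdivision of `H` in which each edge is subdivided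
at most once. -/
lemma isMinorOf_of_minDegree {W V : Type*} [Fintype W] [Fintype V] [Nonempty V] (H : SimpleGraph W)
    (G : SimpleGraph V)
    (h : ∀ v, Nat.card V + (Nat.card W + H.edgeSet.ncard) ≤ 2 * (G.neighborSet v).ncard + 2) :
    H.IsMinorOf G := by
  classical
  have hlt : ∀ v, (G.neighborSet v).ncard + 1 ≤ Nat.card V := by
    intro v
    have : G.neighborSet v ⊆ {v}ᶜ := fun u hu => (G.ne_of_adj hu).symm
    have := Set.ncard_le_ncard this
    have k := card_compl_singleton v
    rw [Nat.card_coe_set_eq] at k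
    omega
  have hcard : Fintype.card W ≤ Fintype.card V := by
    obtain ⟨v⟩ := ‹Nonempty V›
    have := h v
    have := hlt v
    rw [← Nat.card_eq_fintype_card, ← Nat.card_eq_fintype_card]
    omega
  obtain ⟨f⟩ := Function.Embedding.nonempty_of_card_le hcard
  -- common neighbours available for subdividing a missing edge
  have hcommon : ∀ a b, f a ≠ f b → ¬ G.Adj (f a) (f b) →
      H.edgeSet.ncard ≤ (G.commonNeighbors (f a) (f b) \ Set.range f).ncard := by
    intro a b hab hnadj
    have k1 := Set.ncard_union_add_ncard_inter (G.neighborSet (f a)) (G.neighborSet (f b))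
    have k2 : G.neighborSet (f a) ∪ G.neighborSet (f b) ⊆ {f a, f b}ᶜ := by
      rintro v (hv | hv) (rfl | rfl)
      · exact G.irrefl hv
      · exact hnadj hv
      · exact hnadj (SimpleGraph.Adj.symm hv)
      · exact G.irrefl hv
    have k3 := Set.ncard_le_ncard k2
    have k4 := Set.ncard_add_ncard_compl ({f a, f b} : Set V)
    rw [Set.ncard_pair hab] at k4
    have k5 : (Set.range f).ncard = Nat.card W := by
      rw [← Set.image_univ, Set.ncard_image_of_injective _ f.injective, Set.ncard_univ]
    have k6 := Set.le_ncard_sdiff (Set.range f) (G.commonNeighbors (f a) (f b))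
    have k7 : G.commonNeighbors (f a) (f b) = G.neighborSet (f a) ∩ G.neighborSet (f b) := rfl
    have := h (f a)
    have := h (f b)
    rw [← k7] at k1
    omega
  -- the edges to be subdivided, oriented by a choice of representative: the middle vertex of `e`
  -- joins the branch set of `e.out.1`
  let I := {e : Sym2 W // e ∈ H.edgeSet ∧ ¬ G.Adj (f e.out.1) (f e.out.2)}
  let t : I → Finset V := fun e =>
    (G.commonNeighbors (f e.1.out.1) (f e.1.out.2) \ Set.range f).toFinset
  have hout : ∀ e : Sym2 W, s(e.out.1, e.out.2) = e := fun e => Quot.out_eq e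
  have hHadj : ∀ e ∈ H.edgeSet, H.Adj e.out.1 e.out.2 := fun e he => by
    rw [← mem_edgeSet, hout]; exact he
  obtain ⟨m, hm, hmt⟩ := (Finset.all_card_le_biUnion_card_iff_exists_injective t).1 (by
    intro A
    rcases A.eq_empty_or_nonempty with rfl | ⟨e, he⟩
    · simp
    · have k1 : #A ≤ H.edgeSet.ncard := by
        have : #A ≤ Fintype.card I := Finset.card_le_univ A
        refine this.trans ?_
        rw [← Nat.card_eq_fintype_card]
        exact Set.ncard_le_ncard (s := {e | e ∈ H.edgeSet ∧ ¬ G.Adj (f e.out.1) (f e.out.2)})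
          (fun e he => he.1)
      have k2 := hcommon e.1.out.1 e.1.out.2
        (fun h => (hHadj _ e.2.1).ne (f.injective h)) e.2.2
      rw [Set.ncard_eq_toFinset_card' (_ \ _)] at k2
      exact (k1.trans k2).trans (Finset.card_le_card (Finset.subset_biUnion_of_mem t he)))
  have hmt' : ∀ e, (G.Adj (f e.1.out.1) (m e) ∧ G.Adj (f e.1.out.2) (m e)) ∧ m e ∉ Set.range f := by
    intro e
    have := hmt e
    simpa only [t, Set.mem_toFinset, Set.mem_sdiff, mem_commonNeighbors] using this
  refine ⟨fun w => {v | v = f w ∨ ∃ e, e.1.out.1 = w ∧ v = m e}, fun w => ?_,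
    fun a b hab => ?_, fun a b hab => ?_⟩
  · refine connected_of_center G _ (f w) (Or.inl rfl) ?_
    rintro v (hv | ⟨e, rfl, rfl⟩) hvc
    · exact absurd hv hvc
    · exact (hmt' e).1.1
  · refine Set.disjoint_left.2 ?_
    rintro v (rfl | ⟨e, rfl, rfl⟩) (k | ⟨e', rfl, k⟩)
    · exact hab (f.injective k)
    · exact (hmt' e').2 ⟨a, k⟩
    · exact (hmt' e).2 ⟨b, k.symm⟩
    · exact hab (by rw [hm k])
  · by_cases hG : G.Adj (f a) (f b)
    · exact ⟨f a, Or.inl rfl, f b, Or.inl rfl, hG⟩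
    · have he := hout s(a, b)
      rcases Sym2.eq_iff.1 he with ⟨h1, h2⟩ | ⟨h1, h2⟩
      · let e : I := ⟨s(a, b), hab, by rwa [h1, h2]⟩
        refine ⟨m e, Or.inr ⟨e, h1, rfl⟩, f b, Or.inl rfl, ?_⟩
        rw [← h2]; exact (hmt' e).1.2.symm
      · let e : I := ⟨s(a, b), hab, by rw [h1, h2]; exact fun h => hG h.symm⟩
        refine ⟨f a, Or.inl rfl, m e, Or.inr ⟨e, h1, rfl⟩, ?_⟩
        rw [← h2]; exact (hmt' e).1.2

/-- A graph with more than `(n² + (6s - 9) n) / 8` edges has `H` as a minor, by induction on `n`. The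
bound is written without subtraction. -/
lemma isMinorOf_of_dense {W : Type*} [Fintype W] (H : SimpleGraph W)
    (hs : 1 ≤ Nat.card W + H.edgeSet.ncard) (n : ℕ) :
    ∀ {V : Type u} [Fintype V] (G : SimpleGraph V), Nat.card V = n →
      n ^ 2 + 6 * (Nat.card W + H.edgeSet.ncard) * n < 8 * G.edgeSet.ncard + 9 * n →
      H.IsMinorOf G := by
  classical
  induction n with
  | zero =>
    intro V _ G hn hG
    have : IsEmpty V := by
      rw [Nat.card_eq_fintype_card] at hn
      exact Fintype.card_eq_zero_iff.1 hn
    have hE : G.edgeSet = ∅ := by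
      ext e
      induction e with
      | _ a b => exact isEmptyElim a
    simp [hE] at hG
  | succ n ih =>
    intro V _ G hn hG
    have hV : Nonempty V := by
      rw [Nat.card_eq_fintype_card] at hn
      exact Fintype.card_pos_iff.1 (by omega)
    by_cases hgood : ∀ v, Nat.card V + (Nat.card W + H.edgeSet.ncard) ≤
        2 * (G.neighborSet v).ncard + 2
    · exact isMinorOf_of_minDegree H G hgood
    push Not at hgood
    obtain ⟨x, hx⟩ := hgood
    rw [hn] at hx
    rcases (G.neighborSet x).eq_empty_or_nonempty with h0 | ⟨y₀, hy₀⟩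
    · refine trans (ih (G.induce {x}ᶜ) ?_ ?_) (induce_isMinorOf G _)
      · have := card_compl_singleton x; omega
      · have h1 := ncard_edgeSet_induce_compl G x
        rw [h0, Set.ncard_empty] at h1 hx
        -- the bound does not increase, as `2 * (n + 1) + 6 * s ≥ 10`
        nlinarith
    by_cases hloc : ∀ y : G.neighborSet x, (G.neighborSet x).ncard +
        (Nat.card W + H.edgeSet.ncard) ≤ 2 * (G.commonNeighbors x y).ncard + 2
    · have : Nonempty (G.neighborSet x) := ⟨⟨y₀, hy₀⟩⟩
      refine trans (isMinorOf_of_minDegree H (G.induce (G.neighborSet x)) fun y => ?_) (induce_isMinorOf G _)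
      rw [ncard_neighborSet_induce, Nat.card_coe_set_eq]
      exact hloc y
    · push Not at hloc
      obtain ⟨⟨y, hxy⟩, hy⟩ := hloc
      rw [mem_neighborSet] at hxy
      refine trans (ih (contract G x y) ?_ ?_) (contract_isMinorOf G hxy)
      · have := card_compl_singleton y; omega
      · have h1 := ncard_edgeSet_contract G x y
        simp only at hy
        -- the two degree conditions give `4 * (number of lost edges) ≤ (n + 1) + 3 * s - 5`
        nlinarith

lemma exists_subgraph_ncard {V : Type*} [Finite V] (G : SimpleGraph V) {k : ℕ}
    (hk : k ≤ G.edgeSet.ncard) : ∃ G' ≤ G, G'.edgeSet.ncard = k := by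
  obtain ⟨E, hE, hEk⟩ := Set.exists_subset_card_eq hk
  have h : (fromEdgeSet E).edgeSet = E := by
    rw [edgeSet_fromEdgeSet]
    exact sdiff_eq_left.2 (Set.disjoint_left.2 fun e he => G.not_isDiag_of_mem_edgeSet (hE he))
  refine ⟨fromEdgeSet E, ?_, by rw [h, hEk]⟩
  rw [← edgeSet_subset_edgeSet, h]
  exact hE

/-- The theorem with the average degree condition cleared of denominators, by induction on the
number of vertices. -/
lemma isMinorOf_of_edges {W : Type*} [Fintype W] (H : SimpleGraph W)
    (hs : 1 ≤ Nat.card W + H.edgeSet.ncard) (n : ℕ) :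
    ∀ {V : Type u} [Fintype V] [Nonempty V] (G : SimpleGraph V), Nat.card V = n →
      6929 * (Nat.card W + H.edgeSet.ncard) * n ≤ 2000 * G.edgeSet.ncard →
      H.IsMinorOf G := by
  classical
  induction n with
  | zero =>
    intro V _ _ G hn
    exact absurd hn Nat.card_pos.ne'
  | succ n ih =>
  intro V _ _ G₁ hn hG₁
  set s := Nat.card W + H.edgeSet.ncard with hsdef
  -- it suffices to keep the least number of edges allowed by the hypothesis
  obtain ⟨G, hGle, hGm⟩ := exists_subgraph_ncard G₁
    (k := (6929 * s * (n + 1) + 1999) / 2000) (by omega)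
  refine trans ?_ (of_injective id Function.injective_id fun a b h => hGle h)
  have hG : 6929 * s * (n + 1) ≤ 2000 * G.edgeSet.ncard := by omega
  have hbig : 2000 * G.edgeSet.ncard < 6929 * s * (n + 1) + 2000 := by omega
  clear hGm hGle hG₁
  have hm : 0 < G.edgeSet.ncard := by nlinarith
  obtain ⟨e, he⟩ := (Set.ncard_pos).1 hm
  have hn2 : 1 ≤ n := by
    by_contra hlt
    have h1 : Fintype.card V ≤ 1 := by rw [← Nat.card_eq_fintype_card]; omega
    have := Fintype.card_le_one_iff_subsingleton.1 h1
    induction e with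
    | _ a b => exact G.ne_of_adj he (Subsingleton.elim a b)
  have hcompl : ∀ y : V, Nonempty ({y}ᶜ : Set V) := fun y => by
    have := card_compl_singleton y
    exact (Nat.card_pos_iff.1 (by omega)).1
  -- a vertex of minimum degree
  obtain ⟨x, hx⟩ := Finite.exists_min (fun v => (G.neighborSet v).ncard)
  have hdeg : (G.neighborSet x).ncard * (n + 1) ≤ 2 * G.edgeSet.ncard := by
    rw [← sum_ncard_neighborSet, ← hn, Nat.card_eq_fintype_card, mul_comm, ← smul_eq_mul,
      ← Finset.card_univ]
    exact Finset.card_nsmul_le_sum _ _ _ fun v _ => hx v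
  have hdx : 1000 * (G.neighborSet x).ncard < 6929 * s + 1000 := by
    by_contra hcon
    push Not at hcon
    have := Nat.mul_le_mul_right (n + 1) hcon
    nlinarith
  rcases (G.neighborSet x).eq_empty_or_nonempty with h0 | ⟨y₀, hy₀⟩
  · have h1 := ncard_edgeSet_induce_compl G x
    rw [h0, Set.ncard_empty] at h1
    have h2 := card_compl_singleton x
    have := hcompl x
    refine trans (ih (G.induce {x}ᶜ) (by omega) ?_) (induce_isMinorOf G _)
    · rw [← h1] at hG
      nlinarith
  by_cases hloc : ∀ y : G.neighborSet x, 6929 * s < 2000 * ((G.commonNeighbors x y).ncard + 1)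
  · refine trans (isMinorOf_of_dense H hs (Nat.card (G.neighborSet x)) (G.induce (G.neighborSet x)) rfl ?_)
      (induce_isMinorOf G _)
    rw [Nat.card_coe_set_eq]
    have hd : 0 < (G.neighborSet x).ncard := (Set.ncard_pos).2 ⟨y₀, hy₀⟩
    obtain ⟨c, hc, hcs⟩ : ∃ c, (∀ y : G.neighborSet x, c ≤ (G.commonNeighbors x y).ncard) ∧
        6929 * s < 2000 * (c + 1) := by
      have : Nonempty (G.neighborSet x) := ⟨⟨y₀, hy₀⟩⟩
      obtain ⟨y, hy⟩ := Finite.exists_min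
        (fun y : G.neighborSet x => (G.commonNeighbors x y).ncard)
      exact ⟨_, hy, hloc y⟩
    have hsum : (G.neighborSet x).ncard * c ≤
        2 * (G.induce (G.neighborSet x)).edgeSet.ncard := by
      rw [← sum_ncard_neighborSet, ← Nat.card_coe_set_eq, Nat.card_eq_fintype_card,
        ← smul_eq_mul, ← Finset.card_univ]
      refine Finset.card_nsmul_le_sum _ _ _ fun y _ => ?_
      rw [ncard_neighborSet_induce]
      exact hc y
    have key : (G.neighborSet x).ncard + 6 * s < 4 * c + 9 := by omega
    nlinarith [Nat.mul_lt_mul_of_pos_left key hd]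
  · push Not at hloc
    obtain ⟨⟨y, hxy⟩, hy⟩ := hloc
    rw [mem_neighborSet] at hxy
    have h1 := ncard_edgeSet_contract G x y
    have h2 := card_compl_singleton y
    have := hcompl y
    refine trans (ih (contract G x y) (by omega) ?_) (contract_isMinorOf G hxy)
    · simp only at hy
      nlinarith

end LinearMinor

/-- For `H` with `t` vertices and `q` edges, every graph `G` with average degree at
least `6.929(t + q)` contains `H` as a minor. -/
theorem basic_linear_minor {W V : Type*} [Fintype W] [Fintype V] [Nonempty V]
    (H : SimpleGraph W) (G : SimpleGraph V)
    (h : 6.929 * ((Nat.card W : ℝ) + (H.edgeSet.ncard : ℝ)) ≤ G.averageDegree) :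
    H.IsMinorOf G := by
  -- for `s = 0` the graph `H` has no vertices
  rcases Nat.eq_zero_or_pos (Nat.card W + H.edgeSet.ncard) with h0 | hs
  · have hW : IsEmpty W := by
      have : Nat.card W = 0 := by omega
      rw [Nat.card_eq_fintype_card] at this
      exact Fintype.card_eq_zero_iff.1 this
    exact ⟨fun w => hW.elim w, fun w => hW.elim w, fun w => hW.elim w, fun w => hW.elim w⟩
  · refine LinearMinor.isMinorOf_of_edges H hs _ G rfl ?_
    have hn : (0 : ℝ) < Nat.card V := by exact_mod_cast Nat.card_pos
    rw [SimpleGraph.averageDegree, le_div_iff₀ hn] at h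
    have : (6929 * (Nat.card W + H.edgeSet.ncard) * Nat.card V : ℝ) ≤ 2000 * G.edgeSet.ncard := by
      linarith
    exact_mod_cast this
end

section
/- Let H be a simple graph with t ≥ 1 vertices and q edges, and suppose H contains a 2-degenerate spanning subgraph H′ with q′ edges. Let G be a simple graph with n ≥ 1 vertices and minimum degree δ satisfying 2δ − n ≥ q − q′ + t − 2. Then G contains a (≤1)-subdivision of H as a subgraph. -/
/-!
Let `A = E(H) \ E(H')` and let `K` be the graph obtained from `H` by subdividing exactly the edges
in `A`. Each division vertex of `K` has degree `2`, and deleting all of them leaves `H'`; hence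
`K` is again 2-degenerate (`subdividedGraph_twoDegenerate`), and it has `t + q - q'` vertices. It
therefore suffices to embed an arbitrary 2-degenerate graph on at most `2δ - n + 2` vertices
greedily into `G` (`exists_embedding_of_twoDegenerate`).

In a greedy step at most two already used vertices are prescribed as neighbours. Each vertex of
`G` has at most `n - δ` non-neighbours *including itself*, so a prescribed neighbour rules out at
most `n - δ - 1` vertices beyond the used ones. With `u` used vertices, at most
`u + 2(n - δ - 1)` vertices are forbidden, which is less than `n` as long as `u < 2δ - n + 2`
(`exists_new_common_neighbor`).
-/

open SimpleGraph

/-- `G` contains a `(≤1)`-subdivision of `H` as a subgraph: the vertices of `H` embed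
injectively into `G`, a set `A` of edges of `H` is subdivided once, with pairwise distinct
division vertices disjoint from the branch vertices, and all resulting edges are edges
of `G`. -/
def ContainsLE1Subdivision {V W : Type*} (G : SimpleGraph V) (H : SimpleGraph W) : Prop :=
  ∃ (f : W → V) (A : Set (Sym2 W)) (g : A → V),
    A ⊆ H.edgeSet ∧
    Function.Injective f ∧ Function.Injective g ∧
    (∀ (a : A) (w : W), g a ≠ f w) ∧
    (∀ ⦃v w : W⦄, H.Adj v w → s(v, w) ∉ A → G.Adj (f v) (f w)) ∧
    (∀ ⦃v w : W⦄, H.Adj v w → ∀ (ha : s(v, w) ∈ A),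
      G.Adj (f v) (g ⟨s(v, w), ha⟩) ∧ G.Adj (g ⟨s(v, w), ha⟩) (f w))

/-- The greedy step: outside a set `U` of fewer than `2δ - n + 2` vertices there is a common
neighbour of any at most two vertices of `U`. -/
theorem exists_new_common_neighbor {V : Type*} [Fintype V] [Nonempty V] (G : SimpleGraph V)
    (δ : ℕ) (hδ : ∀ v, δ ≤ (G.neighborSet v).ncard) (U S : Finset V) (hSU : S ⊆ U)
    (hS : S.card ≤ 2) (hU : U.card + Fintype.card V < 2 * δ + 2) :
    ∃ x, x ∉ U ∧ ∀ a ∈ S, G.Adj a x := by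
  classical
  let N : V → Finset V := fun a => Finset.univ.filter fun x => ¬ G.Adj a x
  have hN : ∀ a, (N a).card + δ ≤ Fintype.card V := by
    intro a
    have h1 := Finset.card_filter_add_card_filter_not (s := Finset.univ) (fun x => G.Adj a x)
    have h2 : (G.neighborSet a).ncard = (Finset.univ.filter fun x => G.Adj a x).card := by
      rw [← Set.ncard_coe_finset]
      congr 1
      ext x
      simp
    have h3 := hδ a
    rw [Finset.card_univ] at h1
    change (Finset.univ.filter fun x => ¬ G.Adj a x).card + δ ≤ _
    omega
  have hlt : δ < Fintype.card V := by
    obtain ⟨a⟩ := ‹Nonempty V›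
    have : 0 < (N a).card := Finset.card_pos.2 ⟨a, by simp [N]⟩
    have := hN a
    omega
  -- Since `a ∈ N a`, the set `S` is covered by its non-neighbourhoods, so only `U \ S` is
  -- counted separately; this saves `1` for each prescribed neighbour.
  have hcard : ((U \ S) ∪ S.biUnion N).card < Fintype.card V := by
    have h1 := Finset.card_union_le (U \ S) (S.biUnion N)
    have h2 : (S.biUnion N).card ≤ S.card * (Fintype.card V - δ) :=
      Finset.card_biUnion_le_card_mul _ _ _ fun a _ => by have := hN a; omega
    have h3 := Finset.card_sdiff_add_card_eq_card hSU
    generalize S.card = s at *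
    interval_cases s <;> omega
  obtain ⟨x, hx⟩ : ∃ x, x ∉ (U \ S) ∪ S.biUnion N := by
    by_contra! hall
    rw [Finset.eq_univ_of_forall hall, Finset.card_univ] at hcard
    exact lt_irrefl _ hcard
  simp only [Finset.mem_union, Finset.mem_sdiff, Finset.mem_biUnion, N, Finset.mem_filter,
    Finset.mem_univ, true_and, not_or, not_exists, not_and, not_not] at hx
  exact ⟨x, fun hxU => G.loopless.irrefl x (hx.2 x (hx.1 hxU)), hx.2⟩

/-- A 2-degenerate graph on at most `2δ - n + 2` vertices is a subgraph of `G`. -/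
theorem exists_embedding_of_twoDegenerate {X V : Type*} [Fintype X] [Fintype V] [Nonempty V]
    (K : SimpleGraph X) (hK : K.TwoDegenerate) (G : SimpleGraph V)
    (δ : ℕ) (hδ : ∀ v, δ ≤ (G.neighborSet v).ncard)
    (hX : Fintype.card X + Fintype.card V ≤ 2 * δ + 2) :
    ∃ f : X → V, Function.Injective f ∧ ∀ x y, K.Adj x y → G.Adj (f x) (f y) := by
  classical
  suffices H : ∀ s : Finset X, ∃ f : X → V, Set.InjOn f s ∧
      ∀ x ∈ s, ∀ y ∈ s, K.Adj x y → G.Adj (f x) (f y) by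
    obtain ⟨f, hf, hadj⟩ := H Finset.univ
    exact ⟨f, by simpa using hf, fun x y => hadj x (by simp) y (by simp)⟩
  intro s
  induction s using Finset.strongInduction with
  | H s ih =>
    rcases s.eq_empty_or_nonempty with rfl | hs
    · exact ⟨fun _ => Classical.arbitrary V, by simp, by simp⟩
    obtain ⟨v, hv, hdeg⟩ := hK (s : Set X) hs
    have hv : v ∈ s := hv
    obtain ⟨f, hf, hadj⟩ := ih (s.erase v) (Finset.erase_ssubset hv)
    have hdeg' : ((s.erase v).filter fun u => K.Adj v u).card ≤ 2 := by
      refine le_trans ?_ hdeg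
      rw [← Set.ncard_coe_finset]
      refine Set.ncard_le_ncard ?_ (s.finite_toSet.subset fun u hu => hu.1)
      intro u hu
      simp only [Finset.coe_filter, Finset.mem_erase, Set.mem_ofPred_eq] at hu
      exact ⟨hu.1.2, hu.2⟩
    obtain ⟨x, hxU, hxS⟩ := exists_new_common_neighbor G δ hδ ((s.erase v).image f)
      (((s.erase v).filter fun u => K.Adj v u).image f)
      (Finset.image_subset_image (Finset.filter_subset _ _))
      (Finset.card_image_le.trans hdeg') (by
        have h1 : ((s.erase v).image f).card ≤ (s.erase v).card := Finset.card_image_le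
        have h2 := Finset.card_erase_lt_of_mem hv
        have h3 := s.card_le_univ
        omega)
    have hnew : ∀ u ∈ s, u ≠ v → f u ≠ x := fun u hu huv h =>
      hxU (Finset.mem_image.2 ⟨u, Finset.mem_erase.2 ⟨huv, hu⟩, h⟩)
    have hnbr : ∀ u ∈ s, K.Adj v u → G.Adj (f u) x := fun u hu huv =>
      hxS _ (Finset.mem_image.2 ⟨u, Finset.mem_filter.2
        ⟨Finset.mem_erase.2 ⟨huv.ne', hu⟩, huv⟩, rfl⟩)
    refine ⟨Function.update f v x, ?_, ?_⟩
    · intro a ha b hb hab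
      by_cases hav : a = v <;> by_cases hbv : b = v
      · rw [hav, hbv]
      · subst hav
        rw [Function.update_self, Function.update_of_ne hbv] at hab
        exact absurd hab.symm (hnew b hb hbv)
      · subst hbv
        rw [Function.update_self, Function.update_of_ne hav] at hab
        exact absurd hab (hnew a ha hav)
      · rw [Function.update_of_ne hav, Function.update_of_ne hbv] at hab
        exact hf (by simpa [hav] using ha) (by simpa [hbv] using hb) hab
    · intro a ha b hb hab
      by_cases hav : a = v <;> by_cases hbv : b = v
      · subst hav hbv
        exact absurd hab (K.loopless.irrefl _)
      · subst hav
        rw [Function.update_self, Function.update_of_ne hbv]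
        exact (hnbr b hb hab).symm
      · subst hbv
        rw [Function.update_self, Function.update_of_ne hav]
        exact hnbr a ha hab.symm
      · rw [Function.update_of_ne hav, Function.update_of_ne hbv]
        exact hadj a (Finset.mem_erase.2 ⟨hav, ha⟩) b (Finset.mem_erase.2 ⟨hbv, hb⟩) hab

/-- The graph obtained from `H'` by adding, for each unordered pair `e ∈ A`, a new vertex adjacent
to the members of `e`. For `A = E(H) \ E(H')` this is `H` with the edges in `A` subdivided. -/
def subdividedGraph {W : Type*} (H' : SimpleGraph W) (A : Set (Sym2 W)) :
    SimpleGraph (W ⊕ A) where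
  Adj
    | .inl v, .inl w => H'.Adj v w
    | .inl v, .inr e => v ∈ e.1
    | .inr e, .inl v => v ∈ e.1
    | .inr _, .inr _ => False
  symm := ⟨by
    rintro (v | e) (w | e') h
    · exact h.symm
    · exact h
    · exact h
    · exact h⟩
  loopless := ⟨by
    rintro (v | e) h
    · exact H'.loopless.irrefl v h
    · exact h⟩

theorem subdividedGraph_twoDegenerate {W : Type*} (H' : SimpleGraph W)
    (h2 : H'.TwoDegenerate) (A : Set (Sym2 W)) : (subdividedGraph H' A).TwoDegenerate := by
  intro s hs
  by_cases he : ∃ e : A, Sum.inr e ∈ s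
  · obtain ⟨⟨e, heA⟩, hes⟩ := he
    refine ⟨_, hes, ?_⟩
    induction e using Sym2.ind with
    | h a b =>
      have hsub : {u ∈ s | (subdividedGraph H' A).Adj (Sum.inr ⟨s(a, b), heA⟩) u} ⊆
          {Sum.inl a, Sum.inl b} := by
        rintro (w | e') ⟨-, hw⟩
        · rcases Sym2.mem_iff.1 hw with rfl | rfl <;> simp
        · exact hw.elim
      exact (Set.ncard_le_ncard hsub (Set.toFinite _)).trans (by
        simpa using Set.ncard_insert_le (Sum.inl a : W ⊕ A) {Sum.inl b})
  · push Not at he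
    obtain ⟨v, hv, hdeg⟩ := h2 (Sum.inl ⁻¹' s) (by
      obtain ⟨w | e, hx⟩ := hs
      · exact ⟨w, hx⟩
      · exact absurd hx (he e))
    refine ⟨Sum.inl v, hv, ?_⟩
    have himg : {u ∈ s | (subdividedGraph H' A).Adj (Sum.inl v) u} =
        Sum.inl '' {u ∈ Sum.inl ⁻¹' s | H'.Adj v u} := by
      ext (w | e)
      · simp [subdividedGraph]
      · simp [he e]
    rw [himg, Set.ncard_image_of_injective _ Sum.inl_injective]
    exact hdeg

/-- Let `H` have `t ≥ 1` vertices and `q` edges, with a 2-degenerate spanning subgraph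
`H'` with `q'` edges. If `G` has `n ≥ 1` vertices and minimum degree `δ` with
`2δ − n ≥ q − q' + t − 2`, then `G` contains a `(≤1)`-subdivision of `H` as a subgraph. -/
theorem le_one_subdivision_subgraph {W : Type} [Fintype W] [Nonempty W]
    (H H' : SimpleGraph W) (hspan : H' ≤ H) (h2 : H'.TwoDegenerate)
    {V : Type} [Fintype V] [Nonempty V] (G : SimpleGraph V) (δ : ℕ)
    (hδ : IsLeast {d : ℕ | ∃ v : V, (G.neighborSet v).ncard = d} δ)
    (h : (H.edgeSet.ncard : ℤ) - (H'.edgeSet.ncard : ℤ) + (Nat.card W : ℤ) - 2 ≤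
      2 * (δ : ℤ) - (Nat.card V : ℤ)) :
    ContainsLE1Subdivision G H := by
  classical
  have hmin : ∀ v, δ ≤ (G.neighborSet v).ncard := fun v => hδ.2 ⟨v, rfl⟩
  let A : Set (Sym2 W) := H.edgeSet \ H'.edgeSet
  have hsub : H'.edgeSet ⊆ H.edgeSet := SimpleGraph.edgeSet_mono hspan
  have hA : A.ncard + H'.edgeSet.ncard = H.edgeSet.ncard :=
    Set.ncard_sdiff_add_ncard_of_subset hsub (Set.toFinite _)
  have hcard : Fintype.card (W ⊕ A) + Fintype.card V ≤ 2 * δ + 2 := by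
    rw [Fintype.card_sum, ← Nat.card_eq_fintype_card (α := A), Nat.card_coe_set_eq]
    rw [Nat.card_eq_fintype_card, Nat.card_eq_fintype_card] at h
    omega
  obtain ⟨f, hf, hadj⟩ := exists_embedding_of_twoDegenerate (subdividedGraph H' A)
    (subdividedGraph_twoDegenerate H' h2 A) G δ hmin hcard
  refine ⟨f ∘ Sum.inl, A, f ∘ Sum.inr, Set.sdiff_subset, hf.comp Sum.inl_injective,
    hf.comp Sum.inr_injective, fun a w hw => Sum.inr_ne_inl (hf hw), ?_, ?_⟩
  · intro v w hvw hnA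
    refine hadj (Sum.inl v) (Sum.inl w) ?_
    by_contra hn
    exact hnA ⟨hvw, hn⟩
  · intro v w _ ha
    exact ⟨hadj (Sum.inl v) (Sum.inr ⟨s(v, w), ha⟩) (Sym2.mem_mk_left v w),
      hadj (Sum.inr ⟨s(v, w), ha⟩) (Sum.inl w) (Sym2.mem_mk_right v w)⟩
end

section
/- Let H be a simple graph with t ≥ 1 vertices and q edges, and suppose H contains a 2-degenerate spanning subgraph H′ with q′ edges. Then every simple graph G with average degree at least 6.929·(q − q′ + t) contains H as a minor. -/
/-!
Write `t' = t + (q - q')`, the number of vertices of the graph obtained from `H` by subdividing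
every edge outside `H'`. That graph is 2-degenerate, so it embeds greedily in any graph in which
any two vertices have enough common neighbours; a non-empty graph on `n` vertices whose minimum
degree `δ` satisfies `n + t' ≤ 2δ + 1` is of this kind (`hasModel_of_dense`).

Suppose that `G` has no `H` minor. Then no minor of `G` is that dense. So every minor on `n ≥ 1`
vertices has a vertex `v` with `2 deg v + 1 < n + t'`, and the graph induced on `N(v)`, if
non-empty, has a vertex `w` with `2 codeg(v, w) + 1 < deg v + t'`. Contracting `vw` loses only
`1 + codeg(v, w)` edges, about `n / 4 + 3t' / 4`, whence by induction a minor on `n` vertices has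
at most about `n² / 8 + 3t'n / 4` edges (`pairs_le_of_not_hasModel`).

On the other hand, let `K = 3t'` and suppose that a graph on `n` vertices has at least `Kn` edges,
with `n` minimal among the `H`-minor-free graphs. After discarding surplus edges it has a vertex `v`
of degree at most `2K`, and by minimality contracting an edge loses more than `K` edges, so `N(v)`
induces a graph of minimum degree at least `K` on at most `2K` vertices. This violates the quadratic
bound (`pairs_lt_of_not_hasModel`). Hence average degree `6t'` already forces an `H` minor.

To avoid changing vertex types, a graph is given by a `SimpleGraph V` together with the finset
`s` of vertices that are still present.
-/

open SimpleGraph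

open Classical in
/-- The degree of `x` into `s`. -/
noncomputable def degIn {V : Type*} (G : SimpleGraph V) (s : Finset V) (x : V) : ℕ :=
  (s.filter fun y => G.Adj x y).card

open Classical in
/-- The ordered adjacent pairs inside `s`; there are twice as many of them as edges. -/
noncomputable def adjPairs {V : Type*} (G : SimpleGraph V) (s : Finset V) : Finset (V × V) :=
  (s ×ˢ s).filter fun p => G.Adj p.1 p.2

/-- There is a minor model of `H` in the subgraph of `G` induced on `s`. -/
def HasModel {W V : Type*} (H : SimpleGraph W) (G : SimpleGraph V) (s : Finset V) : Prop :=
  ∃ B : W → Set V,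
    (∀ w, B w ⊆ s) ∧
    (∀ w, (G.induce (B w)).Connected) ∧
    (Pairwise fun w₁ w₂ => Disjoint (B w₁) (B w₂)) ∧
    ∀ ⦃w₁ w₂⦄, H.Adj w₁ w₂ → ∃ v₁ ∈ B w₁, ∃ v₂ ∈ B w₂, G.Adj v₁ v₂

/-- Contraction of the edge `vw` into `v`: `v` also becomes adjacent to the neighbours of `w`.
The vertex `w` is not removed here, but by passing from `s` to `s.erase w`. -/
def contractInto {V : Type*} (G : SimpleGraph V) (v w : V) : SimpleGraph V :=
  G ⊔ SimpleGraph.fromRel fun x y => x = v ∧ G.Adj w y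

/-! ### Counting adjacent pairs -/

theorem mem_adjPairs {V : Type*} {G : SimpleGraph V} {s : Finset V} {p : V × V} :
    p ∈ adjPairs G s ↔ p.1 ∈ s ∧ p.2 ∈ s ∧ G.Adj p.1 p.2 := by
  simp [adjPairs, and_assoc]

theorem card_adjPairs {V : Type*} (G : SimpleGraph V) (s : Finset V) :
    (adjPairs G s).card = ∑ x ∈ s, degIn G s x := by
  classical
  simp only [adjPairs, degIn, Finset.card_filter, Finset.sum_product]

open Classical in
theorem card_adjPairs_le_erase {V : Type*} (G : SimpleGraph V) (s : Finset V) (w : V) :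
    (adjPairs G s).card ≤ (adjPairs G (s.erase w)).card + 2 * degIn G s w := by
  set N := s.filter fun y => G.Adj w y with hN
  have hsub : adjPairs G s ⊆ adjPairs G (s.erase w) ∪ ({w} ×ˢ N ∪ N ×ˢ {w}) := by
    rintro ⟨x, y⟩ h
    simp only [mem_adjPairs] at h
    obtain ⟨hx, hy, hxy⟩ := h
    simp only [Finset.mem_union, mem_adjPairs, Finset.mem_product, Finset.mem_singleton, hN,
      Finset.mem_filter, Finset.mem_erase]
    by_cases h1 : x = w
    · subst h1; tauto
    by_cases h2 : y = w
    · subst h2; have := hxy.symm; tauto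
    tauto
  have h1 := Finset.card_le_card hsub
  have h2 := Finset.card_union_le (adjPairs G (s.erase w)) ({w} ×ˢ N ∪ N ×ˢ {w})
  have h3 := Finset.card_union_le ({w} ×ˢ N) (N ×ˢ {w})
  simp only [Finset.card_product, Finset.card_singleton] at h3
  have : degIn G s w = N.card := rfl
  omega

open Classical in
/-- Contracting `vw` loses at most the edge `vw` and one edge per common neighbour. -/
theorem card_adjPairs_le_contract {V : Type*} (G : SimpleGraph V) (s : Finset V) {v w : V}
    (hv : v ∈ s) (hvw : G.Adj v w) :
    (adjPairs G s).card ≤ (adjPairs (contractInto G v w) (s.erase w)).card + 2 +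
      2 * degIn G (s.filter fun y => G.Adj v y) w := by
  -- the vertices that become new neighbours of `v`
  set T := s.filter fun y => G.Adj w y ∧ ¬ G.Adj v y ∧ y ≠ v with hT
  have hsub : adjPairs G (s.erase w) ∪ ({v} ×ˢ T ∪ T ×ˢ {v}) ⊆
      adjPairs (contractInto G v w) (s.erase w) := by
    rintro ⟨x, y⟩ h
    simp only [Finset.mem_union, mem_adjPairs, Finset.mem_product, Finset.mem_singleton, hT,
      Finset.mem_filter, Finset.mem_erase] at h
    simp only [mem_adjPairs, contractInto, SimpleGraph.sup_adj, SimpleGraph.fromRel_adj,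
      Finset.mem_erase]
    rcases h with h | ⟨rfl, h1, h2, h3, h4⟩ | ⟨⟨h1, h2, h3, h4⟩, rfl⟩
    · tauto
    · exact ⟨⟨hvw.ne, hv⟩, ⟨h2.ne', h1⟩, Or.inr ⟨h4.symm, Or.inl ⟨rfl, h2⟩⟩⟩
    · exact ⟨⟨h2.ne', h1⟩, ⟨hvw.ne, hv⟩, Or.inr ⟨h4, Or.inr ⟨rfl, h2⟩⟩⟩
  have hd1 : Disjoint ({v} ×ˢ T) (T ×ˢ {v}) := by
    rw [Finset.disjoint_left]
    rintro ⟨x, y⟩ h h'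
    simp only [Finset.mem_product, Finset.mem_singleton, hT, Finset.mem_filter] at h h'
    exact h'.1.2.2.2 h.1
  have hd2 : Disjoint (adjPairs G (s.erase w)) ({v} ×ˢ T ∪ T ×ˢ {v}) := by
    rw [Finset.disjoint_left]
    rintro ⟨x, y⟩ h h'
    simp only [Finset.mem_union, Finset.mem_product, Finset.mem_singleton, hT, Finset.mem_filter,
      mem_adjPairs] at h h'
    have h1 := h.2.2
    have h2 := h1.symm
    rcases h' with ⟨rfl, h3⟩ | ⟨h3, rfl⟩ <;> tauto
  have hc := Finset.card_le_card hsub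
  rw [Finset.card_union_of_disjoint hd2, Finset.card_union_of_disjoint hd1] at hc
  simp only [Finset.card_product, Finset.card_singleton] at hc
  have hN : (s.filter fun y => G.Adj w y) ⊆
      T ∪ ({v} ∪ (s.filter fun y => G.Adj v y).filter fun y => G.Adj w y) := by
    intro y hy
    simp only [Finset.mem_filter, Finset.mem_union, Finset.mem_singleton, hT] at hy ⊢
    tauto
  have h1 := Finset.card_le_card hN
  have h2 := Finset.card_union_le T
    ({v} ∪ (s.filter fun y => G.Adj v y).filter fun y => G.Adj w y)
  have h3 := Finset.card_union_le {v} ((s.filter fun y => G.Adj v y).filter fun y => G.Adj w y)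
  have h4 := card_adjPairs_le_erase G s w
  simp only [Finset.card_singleton] at h3
  simp only [degIn] at h4 ⊢
  omega

/-- Edges can be discarded one at a time, so the number of adjacent pairs can be brought down to a
prescribed value, up to parity. -/
theorem exists_trim {V : Type*} (s : Finset V) (m : ℕ) (G : SimpleGraph V)
    (h : m ≤ (adjPairs G s).card) :
    ∃ G' ≤ G, m ≤ (adjPairs G' s).card ∧ (adjPairs G' s).card ≤ m + 1 := by
  classical
  induction hD : (adjPairs G s).card using Nat.strong_induction_on generalizing G with
  | _ D ih =>
  by_cases hle : D ≤ m + 1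
  · exact ⟨G, le_rfl, h, by omega⟩
  have hne : (adjPairs G s).Nonempty := by
    rw [← Finset.card_pos]; omega
  obtain ⟨⟨x, y⟩, hp⟩ := hne
  have hp' := mem_adjPairs.1 hp
  set G' := G.deleteEdges {s(x, y)} with hG'
  have h1 : adjPairs G s ⊆ adjPairs G' s ∪ {(x, y), (y, x)} := by
    rintro ⟨a, b⟩ hab
    simp only [mem_adjPairs, Finset.mem_union, Finset.mem_insert, Finset.mem_singleton, hG',
      SimpleGraph.deleteEdges_adj, Set.mem_singleton_iff, Sym2.eq_iff, Prod.mk.injEq] at hab ⊢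
    tauto
  have h2 : adjPairs G' s ⊂ adjPairs G s := by
    refine Finset.ssubset_iff_subset_ne.2 ⟨?_, ?_⟩
    · rintro ⟨a, b⟩ hab
      simp only [mem_adjPairs, hG', SimpleGraph.deleteEdges_adj] at hab ⊢
      tauto
    · intro he
      rw [← he] at hp
      simp [mem_adjPairs, hG'] at hp
  have h3 := Finset.card_lt_card h2
  have h4 := Finset.card_le_card h1
  have h5 := Finset.card_union_le (adjPairs G' s) {(x, y), (y, x)}
  have h6 : ({(x, y), (y, x)} : Finset (V × V)).card ≤ 2 := Finset.card_le_two
  obtain ⟨G'', hle'', hm⟩ := ih _ (by omega) G' (by omega) rfl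
  exact ⟨G'', hle''.trans (SimpleGraph.deleteEdges_le _), hm⟩

/-! ### Minor models under subgraphs and contractions -/

theorem HasModel.mono {W V : Type*} {H : SimpleGraph W} {G G' : SimpleGraph V} {s s' : Finset V}
    (h : HasModel H G s) (hG : G ≤ G') (hs : s ⊆ s') : HasModel H G' s' := by
  obtain ⟨B, h1, h2, h3, h4⟩ := h
  refine ⟨B, fun w => (h1 w).trans (by exact_mod_cast hs), fun w => ?_, h3, fun a b hab => ?_⟩
  · exact (h2 w).mono (fun x y hxy => hG hxy)
  · obtain ⟨x, hx, y, hy, hxy⟩ := h4 hab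
    exact ⟨x, hx, y, hy, hG hxy⟩

open Classical in
theorem HasModel.of_contract {W V : Type*} {H : SimpleGraph W} {G : SimpleGraph V} {s : Finset V}
    {v w : V} (hw : w ∈ s) (hvw : G.Adj v w)
    (h : HasModel H (contractInto G v w) (s.erase w)) : HasModel H G s := by
  obtain ⟨B, h1, h2, h3, h4⟩ := h
  have hwB : ∀ z, w ∉ B z := fun z hz => by simpa using h1 z hz
  -- `w` joins the branch set of `v`, if there is one
  set B' : W → Set V := fun z => {x | x ∈ B z ∨ (x = w ∧ v ∈ B z)} with hB'
  have hBB : ∀ z, B z ⊆ B' z := fun z x hx => Or.inl hx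
  have hadj : ∀ z (x y : V) (hx : x ∈ B z) (hy : y ∈ B z), (contractInto G v w).Adj x y →
      (G.induce (B' z)).Reachable ⟨x, hBB z hx⟩ ⟨y, hBB z hy⟩ := by
    have hstep : ∀ z (y : V) (hv : v ∈ B z) (hy : y ∈ B z), G.Adj w y →
        (G.induce (B' z)).Reachable ⟨v, hBB z hv⟩ ⟨y, hBB z hy⟩ := by
      intro z y hv hy hwy
      have a1 : (G.induce (B' z)).Adj ⟨v, hBB z hv⟩ ⟨w, Or.inr ⟨rfl, hv⟩⟩ := hvw
      have a2 : (G.induce (B' z)).Adj ⟨w, Or.inr ⟨rfl, hv⟩⟩ ⟨y, hBB z hy⟩ := hwy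
      exact a1.reachable.trans a2.reachable
    intro z x y hx hy hxy
    simp only [contractInto, SimpleGraph.sup_adj, SimpleGraph.fromRel_adj] at hxy
    rcases hxy with hxy | ⟨-, ⟨rfl, hxy⟩ | ⟨rfl, hxy⟩⟩
    · exact SimpleGraph.Adj.reachable (G := G.induce (B' z)) hxy
    · exact hstep z y hx hy hxy
    · exact (hstep z x hy hx hxy).symm
  have hreach : ∀ z (x y : B z), ((contractInto G v w).induce (B z)).Reachable x y →
      (G.induce (B' z)).Reachable ⟨x, hBB z x.2⟩ ⟨y, hBB z y.2⟩ := by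
    rintro z x y ⟨p⟩
    induction p with
    | nil => exact SimpleGraph.Reachable.refl _
    | cons hxy _ ih => exact (hadj z _ _ (Subtype.property _) (Subtype.property _) hxy).trans ih
  refine ⟨B', fun z x hx => ?_, fun z => ?_, fun a b hab => ?_, fun a b hab => ?_⟩
  · rcases hx with hx | ⟨rfl, -⟩
    · exact Finset.mem_of_mem_erase (h1 z hx)
    · exact hw
  · obtain ⟨x₀⟩ := (h2 z).nonempty
    have hto : ∀ y : B' z, (G.induce (B' z)).Reachable ⟨x₀, hBB z x₀.2⟩ y := by
      rintro ⟨y, hy | ⟨rfl, hv⟩⟩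
      · exact hreach z x₀ ⟨y, hy⟩ ((h2 z).preconnected _ _)
      · refine (hreach z x₀ ⟨v, hv⟩ ((h2 z).preconnected _ _)).trans ?_
        exact SimpleGraph.Adj.reachable (G := G.induce (B' z)) hvw
    have : Nonempty (B' z) := ⟨⟨x₀, hBB z x₀.2⟩⟩
    exact ⟨fun x y => (hto x).symm.trans (hto y)⟩
  · refine Set.disjoint_left.2 ?_
    have hd := Set.disjoint_left.1 (h3 hab)
    rintro x (hx | ⟨rfl, hx⟩) (hy | ⟨hy', hy⟩)
    · exact hd hx hy
    · exact hwB a (hy' ▸ hx)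
    · exact hwB b hy
    · exact hd hx hy
  · have key : ∀ (a b : W) (y : V), v ∈ B a → y ∈ B b → G.Adj w y →
        ∃ v₁ ∈ B' a, ∃ v₂ ∈ B' b, G.Adj v₁ v₂ :=
      fun a b y ha hb hwy => ⟨w, Or.inr ⟨rfl, ha⟩, y, hBB b hb, hwy⟩
    obtain ⟨x, hx, y, hy, hxy⟩ := h4 hab
    simp only [contractInto, SimpleGraph.sup_adj, SimpleGraph.fromRel_adj] at hxy
    rcases hxy with hxy | ⟨-, ⟨rfl, hxy⟩ | ⟨rfl, hxy⟩⟩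
    · exact ⟨x, hBB a hx, y, hBB b hy, hxy⟩
    · exact key a b y hx hy hxy
    · obtain ⟨p, hp, r, hr, hpr⟩ := key b a x hy hx hxy
      exact ⟨r, hr, p, hp, hpr.symm⟩

/-! ### Greedy embedding into a dense graph -/

open Classical in
/-- As long as fewer than `t` vertices are used, any two used vertices have an unused common
neighbour. The case `a = b` is allowed. -/
theorem exists_common_neighbor {V : Type*} {G : SimpleGraph V} {s : Finset V} {t : ℕ}
    (hd : ∀ x ∈ s, s.card + t ≤ 2 * degIn G s x + 1) {U : Finset V} (hUs : U ⊆ s)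
    (hU : U.card < t) {a b : V} (ha : a ∈ U) (hb : b ∈ U) :
    ∃ y ∈ s, y ∉ U ∧ G.Adj a y ∧ G.Adj b y := by
  by_contra! hno
  set A := s.filter fun y => G.Adj a y with hA
  set B := s.filter fun y => G.Adj b y with hB
  have hsub : A ∩ B ⊆ U.erase a := by
    intro y hy
    simp only [hA, hB, Finset.mem_inter, Finset.mem_filter] at hy
    obtain ⟨⟨hys, hay⟩, -, hby⟩ := hy
    refine Finset.mem_erase.2 ⟨hay.ne', ?_⟩
    by_contra hyU
    exact hno y hys hyU hay hby
  have h1 := Finset.card_le_card hsub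
  rw [Finset.card_erase_of_mem ha] at h1
  have h2 := Finset.card_union_add_card_inter A B
  have h3 : (A ∪ B).card ≤ s.card :=
    Finset.card_le_card (Finset.union_subset (Finset.filter_subset _ _) (Finset.filter_subset _ _))
  have h4 := hd a (hUs ha)
  have h5 := hd b (hUs hb)
  have h6 : degIn G s a = A.card := rfl
  have h7 : degIn G s b = B.card := rfl
  have h8 : 0 < U.card := Finset.card_pos.2 ⟨a, ha⟩
  omega

open Classical in
theorem exists_common_neighbor_of_card_le_two {V : Type*} {G : SimpleGraph V} {s : Finset V}
    {t : ℕ} (hs : s.Nonempty) (hd : ∀ x ∈ s, s.card + t ≤ 2 * degIn G s x + 1) {U : Finset V}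
    (hUs : U ⊆ s) (hU : U.card < t) {X : Finset V} (hXU : X ⊆ U) (hX : X.card ≤ 2) :
    ∃ y ∈ s, y ∉ U ∧ ∀ x ∈ X, G.Adj x y := by
  rcases U.eq_empty_or_nonempty with rfl | ⟨c, hc⟩
  · obtain ⟨y, hy⟩ := hs
    refine ⟨y, hy, by simp, fun x hx => ?_⟩
    simpa using hXU hx
  have hab : ∃ a ∈ U, ∃ b ∈ U, X ⊆ {a, b} := by
    have h012 : X.card = 0 ∨ X.card = 1 ∨ X.card = 2 := by omega
    rcases h012 with h | h | h
    · rw [Finset.card_eq_zero] at h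
      exact ⟨c, hc, c, hc, by simp [h]⟩
    · obtain ⟨a, rfl⟩ := Finset.card_eq_one.1 h
      exact ⟨a, hXU (by simp), a, hXU (by simp), by simp⟩
    · obtain ⟨a, b, -, rfl⟩ := Finset.card_eq_two.1 h
      exact ⟨a, hXU (by simp), b, hXU (by simp), by simp⟩
  obtain ⟨a, ha, b, hb, hXab⟩ := hab
  obtain ⟨y, hy, hyU, hay, hby⟩ := exists_common_neighbor hd hUs hU ha hb
  refine ⟨y, hy, hyU, fun x hx => ?_⟩
  have := hXab hx
  simp only [Finset.mem_insert, Finset.mem_singleton] at this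
  rcases this with rfl | rfl <;> assumption

open Classical in
/-- A 2-degenerate graph on at most `t` vertices embeds in a dense graph: the vertices are placed
in the reverse of an elimination order. -/
theorem exists_embedding {W V : Type*} [Fintype W] {H' : SimpleGraph W} (h2 : H'.TwoDegenerate)
    {G : SimpleGraph V} {s : Finset V} {t : ℕ} (hs : s.Nonempty)
    (hd : ∀ x ∈ s, s.card + t ≤ 2 * degIn G s x + 1) (A : Finset W) (hA : A.card ≤ t) :
    ∃ f : W → V, (∀ w ∈ A, f w ∈ s) ∧ Set.InjOn f A ∧
      ∀ a ∈ A, ∀ b ∈ A, H'.Adj a b → G.Adj (f a) (f b) := by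
  induction hn : A.card generalizing A with
  | zero =>
    obtain ⟨y, hy⟩ := hs
    rw [Finset.card_eq_zero] at hn
    subst hn
    exact ⟨fun _ => y, by simp, by simp, by simp⟩
  | succ n ih =>
    have hAne : (A : Set W).Nonempty := by
      rw [Finset.coe_nonempty, ← Finset.card_pos]; omega
    obtain ⟨v, hvA, hv2⟩ := h2 A hAne
    have hvA' : v ∈ A := hvA
    have hcard := Finset.card_erase_of_mem hvA'
    obtain ⟨f, hfs, hfi, hfa⟩ := ih (A.erase v) (by omega) (by omega)
    set N := A.filter fun u => H'.Adj v u with hN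
    have hNcard : N.card ≤ 2 := by
      rw [← Set.ncard_coe_finset]
      convert hv2 using 2
      ext u; simp [hN]
    have hNe : N ⊆ A.erase v := by
      intro u hu
      simp only [hN, Finset.mem_filter] at hu
      exact Finset.mem_erase.2 ⟨hu.2.ne', hu.1⟩
    have hUle : ((A.erase v).image f).card ≤ (A.erase v).card := Finset.card_image_le
    obtain ⟨y, hys, hyU, hyadj⟩ := exists_common_neighbor_of_card_le_two
      (U := (A.erase v).image f) (X := N.image f) hs hd
      (by
        intro x hx
        obtain ⟨u, hu, rfl⟩ := Finset.mem_image.1 hx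
        exact hfs u hu)
      (by omega) (Finset.image_subset_image hNe) (Finset.card_image_le.trans hNcard)
    have hyne : ∀ u ∈ A, u ≠ v → f u ≠ y := fun u hu huv h =>
      hyU (Finset.mem_image.2 ⟨u, Finset.mem_erase.2 ⟨huv, hu⟩, h⟩)
    have hyN : ∀ u ∈ A, H'.Adj v u → G.Adj (f u) y := fun u hu h =>
      hyadj _ (Finset.mem_image_of_mem _ (Finset.mem_filter.2 ⟨hu, h⟩))
    refine ⟨Function.update f v y, fun w hw => ?_, fun a ha b hb hab => ?_,
      fun a ha b hb hab => ?_⟩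
    · by_cases h : w = v
      · simpa [h] using hys
      · simpa [h] using hfs w (Finset.mem_erase.2 ⟨h, hw⟩)
    · by_cases h : a = v <;> by_cases h' : b = v
      · rw [h, h']
      · rw [h, Function.update_self, Function.update_of_ne h'] at hab
        exact absurd hab.symm (hyne b hb h')
      · rw [h', Function.update_self, Function.update_of_ne h] at hab
        exact absurd hab (hyne a ha h)
      · rw [Function.update_of_ne h, Function.update_of_ne h'] at hab
        exact hfi (Finset.mem_coe.2 (Finset.mem_erase.2 ⟨h, ha⟩))
          (Finset.mem_coe.2 (Finset.mem_erase.2 ⟨h', hb⟩)) hab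
    · by_cases h : a = v <;> by_cases h' : b = v
      · exact absurd (h.trans h'.symm) hab.ne
      · rw [h, Function.update_self, Function.update_of_ne h']
        exact (hyN b hb (h ▸ hab)).symm
      · rw [h', Function.update_self, Function.update_of_ne h]
        exact hyN a ha (h' ▸ hab.symm)
      · rw [Function.update_of_ne h, Function.update_of_ne h']
        exact hfa a (Finset.mem_erase.2 ⟨h, ha⟩) b (Finset.mem_erase.2 ⟨h', hb⟩) hab

open Classical in
/-- The edges in `A` receive distinct subdivision vertices that avoid the image of `f`. -/
theorem exists_subdivision {W V : Type*} [Fintype W] {G : SimpleGraph V} {s : Finset V} {t : ℕ}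
    (hs : s.Nonempty) (hd : ∀ x ∈ s, s.card + t ≤ 2 * degIn G s x + 1) (f : W → V)
    (hf : ∀ w, f w ∈ s) (A : Finset (Sym2 W)) (hA : Fintype.card W + A.card ≤ t) :
    ∃ g : Sym2 W → V, (∀ e ∈ A, g e ∈ s) ∧ Set.InjOn g A ∧ (∀ e ∈ A, ∀ w, g e ≠ f w) ∧
      ∀ e ∈ A, ∀ a ∈ e, G.Adj (f a) (g e) := by
  induction A using Finset.induction_on with
  | empty =>
    obtain ⟨y, hy⟩ := hs
    exact ⟨fun _ => y, by simp, by simp, by simp, by simp⟩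
  | insert e A he ih =>
    rw [Finset.card_insert_of_notMem he] at hA
    obtain ⟨g, hgs, hgi, hgf, hga⟩ := ih (by omega)
    induction e using Sym2.ind with
    | _ a b =>
    set U := Finset.univ.image f ∪ A.image g with hU
    have hUcard : U.card < t := by
      have h1 : U.card ≤ _ := Finset.card_union_le (Finset.univ.image f) (A.image g)
      have h2 : (Finset.univ.image f).card ≤ Fintype.card W := Finset.card_image_le
      have h3 : (A.image g).card ≤ A.card := Finset.card_image_le
      omega
    have hUs : U ⊆ s := by
      intro x hx
      simp only [hU, Finset.mem_union, Finset.mem_image, Finset.mem_univ, true_and] at hx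
      rcases hx with ⟨w, rfl⟩ | ⟨e, he, rfl⟩
      · exact hf w
      · exact hgs e he
    obtain ⟨y, hys, hyU, hay, hby⟩ := exists_common_neighbor hd hUs hUcard
      (a := f a) (b := f b) (by simp [hU]) (by simp [hU])
    have hyf : ∀ w, y ≠ f w := fun w h => hyU (by simp [hU, h])
    have hyg : ∀ e' ∈ A, g e' ≠ y := fun e' he' h =>
      hyU (Finset.mem_union_right _ (Finset.mem_image.2 ⟨e', he', h⟩))
    have hne : ∀ e' ∈ A, e' ≠ s(a, b) := fun e' he' h => he (h ▸ he')
    have hold : ∀ e' ∈ A, Function.update g s(a, b) y e' = g e' := fun e' he' =>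
      Function.update_of_ne (hne e' he') _ _
    refine ⟨Function.update g s(a, b) y, ?_, ?_, ?_, ?_⟩
    · intro e' he'
      rcases Finset.mem_insert.1 he' with rfl | h
      · simpa using hys
      · rw [hold e' h]; exact hgs e' h
    · intro e₁ h₁ e₂ h₂ h
      rcases Finset.mem_insert.1 (Finset.mem_coe.1 h₁) with rfl | h₁ <;>
        rcases Finset.mem_insert.1 (Finset.mem_coe.1 h₂) with rfl | h₂
      · rfl
      · rw [hold e₂ h₂, Function.update_self] at h
        exact absurd h.symm (hyg e₂ h₂)
      · rw [hold e₁ h₁, Function.update_self] at h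
        exact absurd h (hyg e₁ h₁)
      · rw [hold e₁ h₁, hold e₂ h₂] at h
        exact hgi h₁ h₂ h
    · intro e' he' w
      rcases Finset.mem_insert.1 he' with rfl | h
      · simpa using hyf w
      · rw [hold e' h]; exact hgf e' h w
    · intro e' he' c hc
      rcases Finset.mem_insert.1 he' with rfl | h
      · rw [Function.update_self]
        rcases Sym2.mem_iff.1 hc with rfl | rfl <;> assumption
      · rw [hold e' h]; exact hga e' h c hc

open Classical in
/-- A sufficiently dense graph contains the subdivision of `H` at the edges outside `H'`, hence an
`H` minor. -/
theorem hasModel_of_dense {W V : Type*} [Fintype W] {H H' : SimpleGraph W} (hspan : H' ≤ H)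
    (h2 : H'.TwoDegenerate) {t : ℕ}
    (ht : Fintype.card W + (H.edgeSet.ncard - H'.edgeSet.ncard) = t)
    {G : SimpleGraph V} {s : Finset V} (hs : s.Nonempty)
    (hd : ∀ x ∈ s, s.card + t ≤ 2 * degIn G s x + 1) : HasModel H G s := by
  obtain ⟨f, hfs, hfi, hfa⟩ := exists_embedding h2 hs hd Finset.univ
    (by rw [Finset.card_univ]; omega)
  set X : Finset (Sym2 W) := H.edgeFinset \ H'.edgeFinset with hX
  have hXcard : X.card = H.edgeSet.ncard - H'.edgeSet.ncard := by
    rw [hX, Finset.card_sdiff_of_subset (SimpleGraph.edgeFinset_mono hspan),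
      ← SimpleGraph.coe_edgeFinset, ← SimpleGraph.coe_edgeFinset, Set.ncard_coe_finset,
      Set.ncard_coe_finset]
  obtain ⟨g, hgs, hgi, hgf, hga⟩ := exists_subdivision hs hd f (fun w => hfs w (by simp)) X
    (by omega)
  have hout : ∀ e : Sym2 W, (Quot.out e).1 ∈ e := fun e => Sym2.out_fst_mem e
  -- a subdivision vertex is assigned to an arbitrary end of its edge
  refine ⟨fun w => {x | x = f w ∨ ∃ e ∈ X, (Quot.out e).1 = w ∧ x = g e}, ?_, ?_, ?_, ?_⟩
  · rintro w x (rfl | ⟨e, he, -, rfl⟩)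
    · exact hfs w (by simp)
    · exact hgs e he
  · intro w
    set S : Set V := {x | x = f w ∨ ∃ e ∈ X, (Quot.out e).1 = w ∧ x = g e} with hS
    have hto : ∀ y : S, (G.induce S).Reachable ⟨f w, Or.inl rfl⟩ y := by
      rintro ⟨y, rfl | ⟨e, he, rfl, rfl⟩⟩
      · exact SimpleGraph.Reachable.refl _
      · exact SimpleGraph.Adj.reachable (G := G.induce S) (hga e he _ (hout e))
    have : Nonempty S := ⟨⟨f w, Or.inl rfl⟩⟩
    exact ⟨fun x y => (hto x).symm.trans (hto y)⟩
  · intro a b hab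
    refine Set.disjoint_left.2 ?_
    rintro x (rfl | ⟨e, he, rfl, rfl⟩) (h | ⟨e', he', rfl, h⟩)
    · exact hab (hfi (by simp) (by simp) h)
    · exact hgf e' he' a h.symm
    · exact hgf e he b h
    · exact hab (by rw [hgi he he' h])
  · intro a b hab
    by_cases h' : H'.Adj a b
    · exact ⟨f a, Or.inl rfl, f b, Or.inl rfl, hfa a (by simp) b (by simp) h'⟩
    have he : s(a, b) ∈ X := by simp [hX, hab, h']
    rcases Sym2.mem_iff.1 (hout s(a, b)) with h | h
    · exact ⟨g s(a, b), Or.inr ⟨_, he, h, rfl⟩, f b, Or.inl rfl, (hga _ he b (by simp)).symm⟩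
    · exact ⟨f a, Or.inl rfl, g s(a, b), Or.inr ⟨_, he, h, rfl⟩, hga _ he a (by simp)⟩

/-! ### Edge bounds for graphs without the minor -/

open Classical in
/-- A quadratic bound on twice the number of edges of an `H`-minor-free graph. -/
theorem pairs_le_of_not_hasModel {W V : Type*} {H : SimpleGraph W} {t : ℕ}
    (hdense : ∀ (G : SimpleGraph V) (s : Finset V), s.Nonempty →
      (∀ x ∈ s, s.card + t ≤ 2 * degIn G s x + 1) → HasModel H G s)
    (G : SimpleGraph V) (s : Finset V) (hno : ¬ HasModel H G s) :
    4 * (adjPairs G s).card + s.card ≤ s.card ^ 2 + 6 * t * s.card := by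
  induction hn : s.card generalizing G s with
  | zero =>
    rw [Finset.card_eq_zero] at hn
    subst hn
    simp [adjPairs]
  | succ n ih =>
    have hs : s.Nonempty := by rw [← Finset.card_pos]; omega
    obtain ⟨v, hv, hvd⟩ : ∃ v ∈ s, 2 * degIn G s v + 1 < s.card + t := by
      by_contra! h
      exact hno (hdense G s hs h)
    set J := s.filter fun y => G.Adj v y with hJ
    have hJs : J ⊆ s := Finset.filter_subset _ _
    have hJcard : degIn G s v = J.card := rfl
    rcases J.eq_empty_or_nonempty with hJe | hJne
    · have h1 := ih G (s.erase v) (fun h => hno (h.mono le_rfl (Finset.erase_subset _ _)))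
        (by rw [Finset.card_erase_of_mem hv]; omega)
      have h2 := card_adjPairs_le_erase G s v
      rw [hJcard, hJe, Finset.card_empty] at h2
      nlinarith
    · obtain ⟨w, hw, hwd⟩ : ∃ w ∈ J, 2 * degIn G J w + 1 < J.card + t := by
        by_contra! h
        exact hno ((hdense G J hJne h).mono le_rfl hJs)
      have hvw : G.Adj v w := (Finset.mem_filter.1 hw).2
      have hws : w ∈ s := hJs hw
      have h1 := ih (contractInto G v w) (s.erase w) (fun h => hno (h.of_contract hws hvw))
        (by rw [Finset.card_erase_of_mem hws]; omega)
      have h2 := card_adjPairs_le_contract G s hv hvw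
      rw [← hJ] at h2
      have h3 : 8 * degIn G J w + 12 ≤ 2 * (n + 1) + 6 * t := by omega
      nlinarith

open Classical in
/-- A linear bound on twice the number of edges of an `H`-minor-free graph. -/
theorem pairs_lt_of_not_hasModel {W V : Type*} {H : SimpleGraph W} {t : ℕ} (ht : 1 ≤ t)
    (hdense : ∀ (G : SimpleGraph V) (s : Finset V), s.Nonempty →
      (∀ x ∈ s, s.card + t ≤ 2 * degIn G s x + 1) → HasModel H G s)
    (G : SimpleGraph V) (s : Finset V) (hs : s.Nonempty) (hno : ¬ HasModel H G s) :
    (adjPairs G s).card < 6 * t * s.card := by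
  induction hn : s.card generalizing G s with
  | zero => rw [← Finset.card_pos] at hs; omega
  | succ n ih =>
    by_contra! hge
    obtain ⟨G', hG', hlo, hhi⟩ := exists_trim s _ G hge
    have hno' : ¬ HasModel H G' s := fun h => hno (h.mono hG' subset_rfl)
    have hn1 : 1 ≤ n := by
      rcases Nat.eq_zero_or_pos n with rfl | h
      · obtain ⟨a, rfl⟩ := Finset.card_eq_one.1 hn
        have h0 : adjPairs G' {a} = ∅ := by
          ext ⟨x, y⟩
          simp only [mem_adjPairs, Finset.mem_singleton, Finset.notMem_empty, iff_false]
          rintro ⟨rfl, rfl, h⟩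
          exact h.ne rfl
        rw [h0, Finset.card_empty] at hlo
        omega
      · exact h
    obtain ⟨v, hv, hvmin⟩ : ∃ v ∈ s, degIn G' s v ≤ 6 * t := by
      by_contra! h
      have h1 := Finset.card_nsmul_le_sum s (degIn G' s) (6 * t + 1) (fun x hx => h x hx)
      rw [← card_adjPairs, hn, smul_eq_mul] at h1
      nlinarith
    set J := s.filter fun y => G'.Adj v y with hJ
    have hJs : J ⊆ s := Finset.filter_subset _ _
    have hJcard : degIn G' s v = J.card := rfl
    have hJne : J.Nonempty := by
      by_contra hJe
      rw [Finset.not_nonempty_iff_eq_empty] at hJe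
      have hc := Finset.card_erase_of_mem hv
      have h1 := ih G' (s.erase v) (by rw [← Finset.card_pos]; omega)
        (fun h => hno' (h.mono le_rfl (Finset.erase_subset _ _))) (by omega)
      have h2 := card_adjPairs_le_erase G' s v
      rw [hJcard, hJe, Finset.card_empty] at h2
      nlinarith
    -- by minimality of `n`, every edge at `v` lies in at least `3t` triangles
    have hdeg : ∀ w ∈ J, 3 * t ≤ degIn G' J w := by
      intro w hw
      have hvw : G'.Adj v w := (Finset.mem_filter.1 hw).2
      have hws : w ∈ s := hJs hw
      have hc := Finset.card_erase_of_mem hws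
      have h1 := ih (contractInto G' v w) (s.erase w) (by rw [← Finset.card_pos]; omega)
        (fun h => hno' (h.of_contract hws hvw)) (by omega)
      have h2 := card_adjPairs_le_contract G' s hv hvw
      rw [← hJ] at h2
      have h3 : 6 * t * (n + 1) = 6 * t * n + 6 * t := by ring
      omega
    have h1 := Finset.card_nsmul_le_sum J (degIn G' J) (3 * t) hdeg
    rw [← card_adjPairs, smul_eq_mul] at h1
    have h2 := pairs_le_of_not_hasModel hdense G' J (fun h => hno' (h.mono le_rfl hJs))
    have h3 : 0 < J.card := Finset.card_pos.2 hJne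
    rw [hJcard] at hvmin
    nlinarith

theorem card_adjPairs_univ {V : Type*} [Fintype V] (G : SimpleGraph V) :
    (adjPairs G Finset.univ).card = 2 * G.edgeSet.ncard := by
  classical
  rw [card_adjPairs, ← SimpleGraph.coe_edgeFinset, Set.ncard_coe_finset,
    ← SimpleGraph.sum_degrees_eq_twice_card_edges]
  refine Finset.sum_congr rfl fun x _ => ?_
  rw [degIn, ← SimpleGraph.card_neighborFinset_eq_degree]
  congr 1
  ext y
  simp

/-- Let `H` have `t ≥ 1` vertices and `q` edges, with a 2-degenerate spanning subgraph
`H'` with `q'` edges. Then every graph `G` with average degree at least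
`6.929(q − q' + t)` contains `H` as a minor. -/
theorem linear_minor_with_spanning_subgraph {W : Type} [Fintype W] [Nonempty W]
    (H H' : SimpleGraph W) (hspan : H' ≤ H) (h2 : H'.TwoDegenerate)
    {V : Type} [Fintype V] [Nonempty V] (G : SimpleGraph V)
    (havg : 6.929 * ((H.edgeSet.ncard : ℝ) - (H'.edgeSet.ncard : ℝ) + (Nat.card W : ℝ)) ≤
      G.averageDegree) :
    H.IsMinorOf G := by
  classical
  set t := Fintype.card W + (H.edgeSet.ncard - H'.edgeSet.ncard) with ht
  have ht1 : 1 ≤ t := by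
    have : 0 < Fintype.card W := Fintype.card_pos
    omega
  have hqle : H'.edgeSet.ncard ≤ H.edgeSet.ncard :=
    Set.ncard_le_ncard (SimpleGraph.edgeSet_mono hspan) (Set.toFinite _)
  have htR : (t : ℝ) = (H.edgeSet.ncard : ℝ) - (H'.edgeSet.ncard : ℝ) + (Nat.card W : ℝ) := by
    rw [ht, Nat.card_eq_fintype_card]
    push_cast [Nat.cast_sub hqle]
    ring
  by_contra hno
  have hlt := pairs_lt_of_not_hasModel (H := H) ht1
    (fun G' s hs hd => hasModel_of_dense hspan h2 ht.symm hs hd) G Finset.univ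
    Finset.univ_nonempty (fun ⟨B, _, h⟩ => hno ⟨B, h⟩)
  rw [card_adjPairs_univ, Finset.card_univ] at hlt
  have hltR : (2 * G.edgeSet.ncard : ℝ) < 6 * t * Fintype.card V := by exact_mod_cast hlt
  have hV : (0 : ℝ) < Fintype.card V := by exact_mod_cast Fintype.card_pos
  rw [← htR, SimpleGraph.averageDegree, Nat.card_eq_fintype_card, le_div_iff₀ hV] at havg
  have : (0 : ℝ) < t * Fintype.card V := mul_pos (by exact_mod_cast ht1) hV
  nlinarith
end
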